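/- arXiv:0806.3915 — 2 statements merged into one kernel-verified Lean document; each statement's English description precedes it below -/
import Mathlib

section
/- (Ancona) Let Γ be a non-elementary hyperbolic group and μ a finitely supported symmetric probability measure whose support generates Γ. Then the Martin boundary of the random walk is homeomorphic to the hyperbolic (Gromov) boundary of Γ. -/
open Filter MeasureTheory Topology Metric Set
open scoped ENNReal

noncomputable section

namespace GHM

/-! ### Coarse geometry of distance functions -/

/-- The Gromov product `(x|y)_w` of `x` and `y` seen from `w`, for a distance function `d`. -/
def gromov {X : Type*} (d : X → X → ℝ) (w x y : X) : ℝ :=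
  (d x w + d y w - d x y) / 2

/-- `d` is `δ`-hyperbolic (four point condition on Gromov products). -/
def IsHyperbolicWith {X : Type*} (d : X → X → ℝ) (δ : ℝ) : Prop :=
  ∀ w x y z : X, min (gromov d w x y) (gromov d w x z) - δ ≤ gromov d w y z

/-- `d` is Gromov hyperbolic. -/
def IsHyperbolic {X : Type*} (d : X → X → ℝ) : Prop :=
  ∃ δ : ℝ, 0 ≤ δ ∧ IsHyperbolicWith d δ

/-- `d` is a genuine metric. -/
structure IsMetricFun {X : Type*} (d : X → X → ℝ) : Prop where
  refl : ∀ x, d x x = 0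
  pos : ∀ x y, x ≠ y → 0 < d x y
  symm : ∀ x y, d x y = d y x
  triangle : ∀ x y z, d x z ≤ d x y + d y z

/-- `f` is a `(Λ,c)`-quasi-isometric embedding from `(X,dX)` to `(Y,dY)`. -/
def QIEmbed {X Y : Type*} (dX : X → X → ℝ) (dY : Y → Y → ℝ)
    (f : X → Y) (Λ c : ℝ) : Prop :=
  ∀ x x' : X, dX x x' / Λ - c ≤ dY (f x) (f x') ∧ dY (f x) (f x') ≤ Λ * dX x x' + c

/-- `(X,dX)` and `(Y,dY)` are quasi-isometric. -/
def QuasiIsometric {X Y : Type*} (dX : X → X → ℝ) (dY : Y → Y → ℝ) : Prop :=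
  ∃ (f : X → Y) (Λ c C : ℝ), 1 ≤ Λ ∧ 0 ≤ c ∧ 0 ≤ C ∧
    QIEmbed dX dY f Λ c ∧ ∀ y : Y, ∃ x : X, dY (f x) y ≤ C

variable {G : Type*} [Group G]

/-- Word length of `g` with respect to the (symmetrized) finite set `S`. -/
def wordLength (S : Finset G) (g : G) : ℕ :=
  sInf {n : ℕ | ∃ l : List G, l.length = n ∧ (∀ a ∈ l, a ∈ S ∨ a⁻¹ ∈ S) ∧ l.prod = g}

/-- The word metric associated with a finite generating set `S`. -/
def wordDist (S : Finset G) (x y : G) : ℝ := wordLength S (x⁻¹ * y)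

/-- `S` generates the group. -/
def Generates (S : Finset G) : Prop := Subgroup.closure (S : Set G) = ⊤

/-- The standard metric on `ℤ`. -/
def intDist (m n : ℤ) : ℝ := |(m : ℝ) - (n : ℝ)|

/-- `G` is a non-elementary hyperbolic group: finitely generated, its word metrics are
Gromov hyperbolic, it is infinite, and it is not quasi-isometric to `ℤ`. -/
def NonElemHyperbolic (G : Type*) [Group G] : Prop :=
  Infinite G ∧ (∃ S : Finset G, Generates S) ∧
    ∀ S : Finset G, Generates S →
      IsHyperbolic (wordDist S) ∧ ¬ QuasiIsometric (wordDist S) intDist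

/-- `d` is invariant under left translations. -/
def LeftInvariant (d : G → G → ℝ) : Prop := ∀ g x y : G, d (g * x) (g * y) = d x y

/-- `d` belongs to the class `𝒟(Γ)`: it is a left-invariant Gromov hyperbolic metric on the
group, quasi-isometric to a word metric of a finite generating set. -/
def MemD (d : G → G → ℝ) : Prop :=
  IsMetricFun d ∧ LeftInvariant d ∧ IsHyperbolic d ∧
    ∃ S : Finset G, Generates S ∧ QuasiIsometric d (wordDist S)

/-! ### Random walks -/

/-- `μ` is (the density of) a probability measure on the (countable) group. -/
def IsProbDensity (μ : G → ℝ) : Prop := (∀ g, 0 ≤ μ g) ∧ HasSum μ 1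

/-- `μ` is symmetric. -/
def IsSymmetric (μ : G → ℝ) : Prop := ∀ g : G, μ g⁻¹ = μ g

/-- The support of `μ` generates `G`. -/
def GeneratesSupp (μ : G → ℝ) : Prop := Subgroup.closure {g : G | μ g ≠ 0} = ⊤

open scoped Classical in
/-- Convolution powers `μ^n` of `μ`. -/
def convPow (μ : G → ℝ) : ℕ → G → ℝ
  | 0 => fun g => if g = 1 then 1 else 0
  | n + 1 => fun g => ∑' y : G, convPow μ n y * μ (y⁻¹ * g)

/-- The Green function `G(x,y) = ∑_n μ^n(x⁻¹y)`. -/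
def greenFn (μ : G → ℝ) (x y : G) : ℝ := ∑' n : ℕ, convPow μ n (x⁻¹ * y)

/-- The random walk is transient, i.e. `G(e,e) = ∑_n μ^n(e) < ∞`. -/
def Transient (μ : G → ℝ) : Prop := Summable fun n : ℕ => convPow μ n (1 : G)

/-- Successive positions of a walk started at `x` with increments `l`. -/
def walkPositions (x : G) (l : List G) : List G := l.scanl (fun p a => p * a) x

/-- The increments `l` describe a trajectory from `x` which hits `y` for the first time at
its final position. -/
def IsFirstHitPath (x y : G) (l : List G) : Prop :=
  (walkPositions x l).getLast? = some y ∧ y ∉ (walkPositions x l).dropLast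

/-- `F(x,y)`: the probability that the `μ`-random walk started at `x` ever hits `y`. -/
def hitProb (μ : G → ℝ) (x y : G) : ℝ :=
  ∑' l : {l : List G // IsFirstHitPath x y l}, ((l : List G).map μ).prod

/-- The Green metric `d_G(x,y) = - log F(x,y)`. -/
def greenDist (μ : G → ℝ) (x y : G) : ℝ := - Real.log (hitProb μ x y)

/-- `μ` has a finite first moment with respect to `d`. -/
def FiniteFirstMoment (d : G → G → ℝ) (μ : G → ℝ) : Prop :=
  Summable fun g : G => d 1 g * μ g

/-- `μ` has an exponential moment with respect to `d`. -/
def HasExpMoment (d : G → G → ℝ) (μ : G → ℝ) : Prop :=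
  ∃ lam : ℝ, 0 < lam ∧ Summable fun g : G => Real.exp (lam * d 1 g) * μ g

/-- The entropy `H(μ^n) = -∑_γ μ^n(γ) log μ^n(γ)` of the `n`-th convolution power. -/
def entropyAt (μ : G → ℝ) (n : ℕ) : ℝ :=
  - ∑' g : G, convPow μ n g * Real.log (convPow μ n g)

/-- `h` is the asymptotic entropy of the walk. -/
def HasEntropy (μ : G → ℝ) (h : ℝ) : Prop :=
  Tendsto (fun n : ℕ => entropyAt μ n / n) atTop (𝓝 h)

/-- `v` is the logarithmic volume growth of `(G,d)` (seen from the identity). -/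
def HasGrowth (d : G → G → ℝ) (v : ℝ) : Prop :=
  Filter.limsup (fun R : ℝ => Real.log (Nat.card {g : G // d 1 g ≤ R}) / R) atTop = v

/-- The position `Z_n = ω_0 ω_1 ⋯ ω_{n-1}` of the random walk at time `n`, given the
sequence of increments `ω`. -/
def walkPos (n : ℕ) (ω : ℕ → G) : G := ((List.range n).map ω).prod

/-- `P` is the law on the space of increment sequences of an i.i.d. sequence of law `μ`:
cylinders have product measure.  (This characterizes the path measure of the random walk.) -/
def IsWalkMeasure [MeasurableSpace G] (μ : G → ℝ) (P : Measure (ℕ → G)) : Prop :=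
  IsProbabilityMeasure P ∧
    ∀ (n : ℕ) (g : Fin n → G),
      P {ω : ℕ → G | ∀ i : Fin n, ω (i : ℕ) = g i} = ∏ i : Fin n, ENNReal.ofReal (μ (g i))

/-! ### The Gromov boundary, visual metrics, harmonic and quasiconformal measures -/

/-- A sequence tends to infinity if Gromov products (at the base point `1`) go to `∞`. -/
def TendstoInfinity (d : G → G → ℝ) (u : ℕ → G) : Prop :=
  Tendsto (fun p : ℕ × ℕ => gromov d 1 (u p.1) (u p.2)) atTop atTop

/-- A realization of the Gromov boundary of `(G,d)` as an abstract type `B`: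
`conv u b` means that the sequence `u` converges at infinity to the boundary point `b`.
The group acts on its boundary by `smul`. -/
structure BoundaryData (G : Type*) [Group G] (d : G → G → ℝ) (B : Type*) where
  conv : (ℕ → G) → B → Prop
  smul : G → B → B
  conv_unique : ∀ u b b', conv u b → conv u b' → b = b'
  exists_conv : ∀ u, TendstoInfinity d u → ∃ b, conv u b
  conv_tendstoInfinity : ∀ u b, conv u b → TendstoInfinity d u
  conv_iff : ∀ u v b, conv u b →
    (conv v b ↔ Tendsto (fun n => gromov d 1 (u n) (v n)) atTop atTop)
  conv_surj : ∀ b, ∃ u, conv u b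
  smul_conv : ∀ (γ : G) (u) (b), conv u b → conv (fun n => γ * u n) (smul γ b)

/-- Asymptotic Gromov product of two sequences. -/
def seqGromov (d : G → G → ℝ) (u v : ℕ → G) : ℝ :=
  Filter.liminf (fun n => gromov d 1 (u n) (v n)) atTop

/-- The metric of `B` is a visual metric of parameter `ε` (with comparison constant `C`)
for the hyperbolic distance `d` on the group:  `dist(a,b) ≍ exp(-ε (a|b))`. -/
def IsVisualMetric {B : Type*} [MetricSpace B] (d : G → G → ℝ)
    (bd : BoundaryData G d B) (ε C : ℝ) : Prop :=
  0 < ε ∧ 0 < C ∧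
    ∀ u v b b', bd.conv u b → bd.conv v b' → b ≠ b' →
      dist b b' ≤ C * Real.exp (-ε * seqGromov d u v) ∧
      Real.exp (-ε * seqGromov d u v) ≤ C * dist b b'

/-- `ν` is the harmonic measure of the random walk of law `μ` on the boundary `B`:
it is the law of the almost sure limit `Z_∞` of the walk on the boundary. -/
def IsHarmonicMeasure {B : Type*} [MeasurableSpace G] [MeasurableSpace B]
    (d : G → G → ℝ) (bd : BoundaryData G d B) (μ : G → ℝ)
    (P : Measure (ℕ → G)) (ν : Measure B) : Prop :=
  IsWalkMeasure μ P ∧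
    ∃ Zinf : (ℕ → G) → B, Measurable Zinf ∧
      (∀ᵐ ω ∂P, bd.conv (fun n => walkPos n ω) (Zinf ω)) ∧ ν = P.map Zinf

/-- Busemann function `β_b(x,y)` of the boundary point `b`. -/
def busemann {B : Type*} (d : G → G → ℝ) (bd : BoundaryData G d B)
    (x y : G) (b : B) : ℝ :=
  sSup {t : ℝ | ∃ u, bd.conv u b ∧
    t = Filter.limsup (fun n => d x (u n) - d y (u n)) atTop}

/-- The image measure `γ^*ρ`, `γ^*ρ(A) = ρ(γA)`. -/
def actPush {B : Type*} [MeasurableSpace B] {d : G → G → ℝ}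
    (bd : BoundaryData G d B) (γ : G) (ρ : Measure B) : Measure B :=
  ρ.map (bd.smul γ⁻¹)

/-- `ρ` is a quasiconformal measure on the boundary for `(G,d)` of logarithmic growth
parameter `v`: `γ^*ρ` and `ρ` are mutually absolutely continuous, with density
`dγ^*ρ/dρ ≍ exp (v β_b(1,γ⁻¹))` (uniformly in `γ`). -/
def IsQuasiconformalMeasure {B : Type*} [MeasurableSpace B] {d : G → G → ℝ}
    (bd : BoundaryData G d B) (ρ : Measure B) (v : ℝ) : Prop :=
  ∃ C : ℝ, 0 < C ∧ ∀ γ : G,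
    actPush bd γ ρ ≪ ρ ∧ ρ ≪ actPush bd γ ρ ∧
      ∀ᵐ b ∂ρ,
        (actPush bd γ ρ).rnDeriv ρ b
            ≤ ENNReal.ofReal (C * Real.exp (v * busemann d bd 1 γ⁻¹ b)) ∧
        ENNReal.ofReal (C⁻¹ * Real.exp (v * busemann d bd 1 γ⁻¹ b))
            ≤ (actPush bd γ ρ).rnDeriv ρ b

/-- `ν` is Ahlfors regular of dimension `α`: `ν(B(b,r)) ≍ r^α`. -/
def AhlforsRegularOfDim {B : Type*} [MetricSpace B] [MeasurableSpace B]
    (ν : Measure B) (α : ℝ) : Prop :=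
  ∃ C : ℝ, 0 < C ∧ ∀ (b : B) (r : ℝ), 0 < r → r ≤ Metric.diam (Set.univ : Set B) →
    ENNReal.ofReal (C⁻¹ * r ^ α) ≤ ν (Metric.ball b r) ∧
      ν (Metric.ball b r) ≤ ENNReal.ofReal (C * r ^ α)

/-- The Hausdorff dimension of a measure: the infimum of the Hausdorff dimensions of sets of
full measure. -/
def measureDim {B : Type*} [EMetricSpace B] [MeasurableSpace B] (ν : Measure B) : ℝ≥0∞ :=
  ⨅ (A : Set B) (_ : ν Aᶜ = 0), dimH A

/-! ### Word geodesics -/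

/-- `p 0, …, p n` is a geodesic segment for the word metric of `S`. -/
def IsWordGeodesic (S : Finset G) (n : ℕ) (p : ℕ → G) : Prop :=
  ∀ i j : ℕ, i ≤ n → j ≤ n → wordDist S (p i) (p j) = |(i : ℝ) - (j : ℝ)|

/-- `v` lies within distance `r` of some word geodesic segment from `x` to `y`. -/
def NearWordGeodesic (S : Finset G) (x y v : G) (r : ℝ) : Prop :=
  ∃ (n : ℕ) (p : ℕ → G), IsWordGeodesic S n p ∧ p 0 = x ∧ p n = y ∧
    ∃ i ≤ n, wordDist S v (p i) ≤ r

/-! ### Martin boundary -/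

/-- The Martin kernel `K(x,y) = G(x,y)/G(e,y)`. -/
def martinKernel (μ : G → ℝ) (x y : G) : ℝ := greenFn μ x y / greenFn μ 1 y

/-- The embedding `y ↦ K(·,y)` of the group in `C(G)` (pointwise topology). -/
def martinMap (μ : G → ℝ) (y : G) : G → ℝ := fun x => martinKernel μ x y

/-- The Martin boundary: the boundary of the image of the group under the Martin embedding
in the space of functions with the topology of pointwise convergence. -/
def martinBoundary (μ : G → ℝ) : Set (G → ℝ) :=
  closure (Set.range (martinMap μ)) \ Set.range (martinMap μ)

/-- `h` is a `μ`-harmonic function. -/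
def IsHarmonicFn (μ : G → ℝ) (h : G → ℝ) : Prop :=
  ∀ x : G, h x = ∑' y : G, h y * μ (x⁻¹ * y)

/-- `h` is a minimal positive harmonic function. -/
def IsMinimalHarmonic (μ : G → ℝ) (h : G → ℝ) : Prop :=
  IsHarmonicFn μ h ∧ (∀ x, 0 < h x) ∧
    ∀ u : G → ℝ, IsHarmonicFn μ u → (∀ x, 0 ≤ u x) → (∀ x, u x ≤ h x) →
      ∃ c : ℝ, u = fun x => c * h x

/-! ### Metric space versions (geodesic and quasiruled spaces) -/

/-- A geodesic metric space. -/
def IsGeodesicSpace (X : Type*) [MetricSpace X] : Prop :=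
  ∀ x y : X, ∃ f : ℝ → X, f 0 = x ∧ f (dist x y) = y ∧
    ∀ s ∈ Set.Icc (0:ℝ) (dist x y), ∀ t ∈ Set.Icc (0:ℝ) (dist x y),
      dist (f s) (f t) = |s - t|

/-- `f : [a,b] → Y` is a `(Λ,c)`-quasigeodesic segment. -/
def IsQuasigeodesicOn {Y : Type*} [MetricSpace Y] (f : ℝ → Y) (a b Λ c : ℝ) : Prop :=
  ∀ s ∈ Set.Icc a b, ∀ t ∈ Set.Icc a b,
    |s - t| / Λ - c ≤ dist (f s) (f t) ∧ dist (f s) (f t) ≤ Λ * |s - t| + c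

/-- `f : [a,b] → Y` is a `τ`-quasiruler: Gromov products of triples along it are `≤ τ`. -/
def IsQuasirulerOn {Y : Type*} [MetricSpace Y] (f : ℝ → Y) (a b τ : ℝ) : Prop :=
  ∀ s t u : ℝ, s ∈ Set.Icc a b → t ∈ Set.Icc a b → u ∈ Set.Icc a b → s ≤ t → t ≤ u →
    dist (f s) (f t) + dist (f t) (f u) ≤ dist (f s) (f u) + 2 * τ

/-- A quasiruled metric space: for some constants `(Λ,c,τ)` every pair of points is joined
by a `(Λ,c)`-quasigeodesic, and every `(Λ,c)`-quasigeodesic is a `τ`-quasiruler. -/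
def Quasiruled (Y : Type*) [MetricSpace Y] : Prop :=
  ∃ Λ c τ : ℝ, 1 ≤ Λ ∧ 0 ≤ c ∧ 0 ≤ τ ∧
    (∀ x y : Y, ∃ (a b : ℝ) (f : ℝ → Y), a ≤ b ∧ f a = x ∧ f b = y ∧
      IsQuasigeodesicOn f a b Λ c) ∧
    ∀ (f : ℝ → Y) (a b : ℝ), IsQuasigeodesicOn f a b Λ c → IsQuasirulerOn f a b τ

/-- A metric space is hyperbolic. -/
def HypSpace (Y : Type*) [MetricSpace Y] : Prop :=
  IsHyperbolic (fun x y : Y => dist x y)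

/-- `f` is a quasi-isometry between metric spaces. -/
def MetricQI {X Y : Type*} [MetricSpace X] [MetricSpace Y] (f : X → Y) : Prop :=
  ∃ Λ c C : ℝ, 1 ≤ Λ ∧ 0 ≤ c ∧ 0 ≤ C ∧
    QIEmbed (fun a b : X => dist a b) (fun a b : Y => dist a b) f Λ c ∧
    ∀ y : Y, ∃ x : X, dist (f x) y ≤ C



/-! ### Word metric -/

theorem wl_le (S : Finset G) (l : List G) (hl : ∀ a ∈ l, a ∈ S ∨ a⁻¹ ∈ S) :
    wordLength S l.prod ≤ l.length :=
  Nat.sInf_le ⟨l, rfl, hl, rfl⟩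

theorem wl_spec {S : Finset G} (hS : Generates S) (g : G) :
    ∃ l : List G, l.length = wordLength S g ∧ (∀ a ∈ l, a ∈ S ∨ a⁻¹ ∈ S) ∧ l.prod = g := by
  have hne : {n : ℕ | ∃ l : List G, l.length = n ∧ (∀ a ∈ l, a ∈ S ∨ a⁻¹ ∈ S) ∧
      l.prod = g}.Nonempty := by
    have hg : g ∈ Subgroup.closure (S : Set G) := by rw [hS]; trivial
    rw [← Subgroup.mem_toSubmonoid, Subgroup.closure_toSubmonoid] at hg
    obtain ⟨l, hl, hp⟩ := Submonoid.exists_list_of_mem_closure hg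
    exact ⟨l.length, l, rfl, by simpa using hl, hp⟩
  exact Nat.sInf_mem hne

theorem wl_one (S : Finset G) : wordLength S (1 : G) = 0 := by
  have := wl_le S [] (by simp)
  simpa using this

theorem wl_mul {S : Finset G} (hS : Generates S) (g h : G) :
    wordLength S (g * h) ≤ wordLength S g + wordLength S h := by
  obtain ⟨l, h1, h2, h3⟩ := wl_spec hS g
  obtain ⟨m, k1, k2, k3⟩ := wl_spec hS h
  have := wl_le S (l ++ m) (by
    intro a ha
    rcases List.mem_append.1 ha with ha | ha
    · exact h2 a ha
    · exact k2 a ha)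
  rw [List.prod_append, h3, k3, List.length_append, h1, k1] at this
  exact this

theorem wl_inv_le {S : Finset G} (hS : Generates S) (g : G) :
    wordLength S g⁻¹ ≤ wordLength S g := by
  obtain ⟨l, h1, h2, h3⟩ := wl_spec hS g
  have := wl_le S ((l.map (fun x => x⁻¹)).reverse) (by
    intro a ha
    simp only [List.mem_reverse, List.mem_map] at ha
    obtain ⟨b, hb, rfl⟩ := ha
    rcases h2 b hb with h | h
    · right; simpa using h
    · left; exact h)
  rw [← List.prod_inv_reverse, h3] at this
  simpa [h1] using this

theorem wl_inv {S : Finset G} (hS : Generates S) (g : G) :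
    wordLength S g⁻¹ = wordLength S g := by
  apply le_antisymm (wl_inv_le hS g)
  simpa using wl_inv_le hS g⁻¹

theorem wl_eq_zero {S : Finset G} (hS : Generates S) {g : G} (h : wordLength S g = 0) : g = 1 := by
  obtain ⟨l, h1, _, h3⟩ := wl_spec hS g
  rw [h, List.length_eq_zero_iff] at h1
  subst h1
  simpa using h3.symm

theorem wl_geod {S : Finset G} (hS : Generates S) (g : G) :
    ∃ p : ℕ → G, p 0 = 1 ∧ p (wordLength S g) = g ∧
      ∀ i j, i ≤ j → j ≤ wordLength S g → wordLength S ((p i)⁻¹ * p j) = j - i := by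
  obtain ⟨l, h1, h2, h3⟩ := wl_spec hS g
  refine ⟨fun i => (l.take i).prod, by simp, by simp [← h1, h3], ?_⟩
  have key : ∀ i j, i ≤ j → j ≤ wordLength S g →
      wordLength S ((l.take i).prod⁻¹ * (l.take j).prod) ≤ j - i := by
    intro i j hij hj
    have e : (l.take i).prod⁻¹ * (l.take j).prod = ((l.take j).drop i).prod := by
      have := List.prod_take_mul_prod_drop (l.take j) i
      rw [List.take_take, min_eq_left hij] at this
      rw [← this]; group
    rw [e]
    refine (wl_le S _ (fun a ha => h2 a ?_)).trans ?_
    · exact List.mem_of_mem_take (List.mem_of_mem_drop ha)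
    · simp; omega
  intro i j hij hj
  apply le_antisymm (key i j hij hj)
  have a1 := key 0 i (Nat.zero_le _) (hij.trans hj)
  have a2 := key j (wordLength S g) hj le_rfl
  have e : l.take (wordLength S g) = l := by rw [← h1]; simp
  rw [e, h3] at a2
  simp only [List.take_zero, List.prod_nil, inv_one, one_mul] at a1
  have a3 := wl_mul hS ((l.take i).prod * ((l.take i).prod⁻¹ * (l.take j).prod))
    ((l.take j).prod⁻¹ * g)
  have a4 := wl_mul hS (l.take i).prod ((l.take i).prod⁻¹ * (l.take j).prod)
  have e2 : (l.take i).prod * ((l.take i).prod⁻¹ * (l.take j).prod) * ((l.take j).prod⁻¹ * g) = g := by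
    group
  rw [e2] at a3
  omega

/-- balls -/
theorem ball_exists {S : Finset G} (hS : Generates S) :
    ∃ β : ℕ, 1 ≤ β ∧ ∀ m : ℕ, ∃ F : Finset G, (∀ g, g ∈ F ↔ wordLength S g ≤ m) ∧ F.card ≤ β ^ m := by
  classical
  open scoped Pointwise in
  let T : Finset G := insert 1 (S ∪ S⁻¹)
  refine ⟨T.card, Finset.card_pos.2 ⟨1, by simp [T]⟩, fun m => ?_⟩
  have hsub : ∀ g, wordLength S g ≤ m → g ∈ T ^ m := by
    intro g hg
    obtain ⟨l, h1, h2, h3⟩ := wl_spec hS g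
    have h4 : ∀ l : List G, (∀ a ∈ l, a ∈ S ∨ a⁻¹ ∈ S) → l.prod ∈ T ^ l.length := by
      intro l
      induction l with
      | nil => intro _; simp
      | cons a l ih =>
        intro h
        rw [List.prod_cons, List.length_cons, pow_succ']
        apply Finset.mul_mem_mul
        · have := h a (by simp)
          simp only [T, Finset.mem_insert, Finset.mem_union, Finset.mem_inv']
          tauto
        · exact ih (fun b hb => h b (by simp [hb]))
    have h5 := h4 l h2
    rw [h3, h1] at h5
    exact Finset.pow_subset_pow_right (by simp [T]) hg h5
  refine ⟨(T ^ m).filter (fun g => wordLength S g ≤ m), fun g => ?_, ?_⟩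
  · simp only [Finset.mem_filter]
    exact ⟨fun h => h.2, fun h => ⟨hsub g h, h⟩⟩
  · exact (Finset.card_filter_le _ _).trans Finset.card_pow_le

theorem wd_symm {S : Finset G} (hS : Generates S) (x y : G) : wordDist S x y = wordDist S y x := by
  unfold wordDist
  rw [← wl_inv hS]; simp

theorem wd_tri {S : Finset G} (hS : Generates S) (x y z : G) :
    wordDist S x z ≤ wordDist S x y + wordDist S y z := by
  unfold wordDist
  have := wl_mul hS (x⁻¹ * y) (y⁻¹ * z)
  rw [show x⁻¹ * y * (y⁻¹ * z) = x⁻¹ * z by group] at this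
  exact_mod_cast this

theorem wd_left (S : Finset G) (g x y : G) : wordDist S (g * x) (g * y) = wordDist S x y := by
  unfold wordDist
  congr 2; group

theorem wd_self (S : Finset G) (x : G) : wordDist S x x = 0 := by
  simp [wordDist, wl_one]

theorem wd_nonneg (S : Finset G) (x y : G) : 0 ≤ wordDist S x y := by
  unfold wordDist; positivity

theorem wd_one (S : Finset G) (y : G) : wordDist S 1 y = wordLength S y := by
  simp [wordDist]

theorem wd_one' {S : Finset G} (hS : Generates S) (y : G) : wordDist S y 1 = wordLength S y := by
  rw [wd_symm hS, wd_one]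

theorem gr_left (S : Finset G) (g w x y : G) :
    gromov (wordDist S) (g * w) (g * x) (g * y) = gromov (wordDist S) w x y := by
  simp [gromov, wd_left]

theorem gr_symm {S : Finset G} (hS : Generates S) (w x y : G) :
    gromov (wordDist S) w x y = gromov (wordDist S) w y x := by
  simp only [gromov, wd_symm hS x y]; ring

theorem gr_nonneg {S : Finset G} (hS : Generates S) (w x y : G) :
    0 ≤ gromov (wordDist S) w x y := by
  have := wd_tri hS x w y
  rw [wd_symm hS w y] at this
  simp only [gromov]; linarith

theorem gr_le {S : Finset G} (hS : Generates S) (w x y : G) :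
    gromov (wordDist S) w x y ≤ wordDist S x w := by
  have := wd_tri hS y x w
  rw [wd_symm hS y x] at this
  simp only [gromov]; linarith

/-- `(x|y)_w + (w|y)_x = d(x,w)` -/
theorem gr_add {S : Finset G} (hS : Generates S) (w x y : G) :
    gromov (wordDist S) w x y + gromov (wordDist S) x w y = wordDist S x w := by
  simp only [gromov]
  rw [wd_symm hS w x, wd_symm hS w y, wd_symm hS x y]; ring

/-- `y'` on a geodesic from `w` to `y` decreases Gromov product -/
theorem gr_mono {S : Finset G} (hS : Generates S) {w y y' : G} (o : G)
    (h : wordDist S y' w + wordDist S y y' = wordDist S y w) :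
    gromov (wordDist S) w o y' ≤ gromov (wordDist S) w o y := by
  have := wd_tri hS o y' y
  simp only [gromov]
  rw [wd_symm hS y' y] at this
  linarith

theorem prefix_exists {S : Finset G} (hS : Generates S) (g : G) (k : ℕ) (hk : k ≤ wordLength S g) :
    ∃ h : G, wordLength S h = k ∧ wordDist S h 1 + wordDist S g h = wordDist S g 1 := by
  obtain ⟨p, h0, h1, h2⟩ := wl_geod hS g
  have e1 := h2 0 k (Nat.zero_le _) hk
  have e2 := h2 k _ hk le_rfl
  rw [h0] at e1
  rw [h1] at e2
  simp only [inv_one, one_mul, Nat.sub_zero] at e1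
  refine ⟨p k, e1, ?_⟩
  rw [wd_one' hS, wd_one' hS, wd_symm hS g, wordDist, e1, e2, Nat.cast_sub hk]
  ring

/-- the prefix of length `k` has Gromov product `k` with the point. -/
theorem prefix_gr {S : Finset G} (hS : Generates S) {g h : G} 
    (hh : wordDist S h 1 + wordDist S g h = wordDist S g 1) :
    gromov (wordDist S) 1 h g = wordLength S h := by
  rw [← wd_one' hS]
  simp only [gromov]
  rw [wd_symm hS h g]; linarith


/-! ### Bi-infinite geodesics and three points -/

theorem ultra_const {α β : Type*} (U : Ultrafilter α) (f : α → β) (F : Finset β)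
    (h : ∀ᶠ a in (U : Filter α), f a ∈ F) : ∃ b ∈ F, ∀ᶠ a in (U : Filter α), f a = b := by
  by_contra hcon
  push Not at hcon
  have h2 : ∀ b ∈ F, ∀ᶠ a in (U : Filter α), f a ≠ b := by
    intro b hb
    exact hcon b hb
  have h3 : ∀ᶠ a in (U : Filter α), ∀ b ∈ F, f a ≠ b := (Finset.eventually_all F).2 h2
  obtain ⟨a, ha, hb⟩ := (h.and h3).exists
  exact hb _ ha rfl

theorem biinf_geod [Infinite G] {S : Finset G} (hS : Generates S) :
    ∃ γ : ℤ → G, ∀ i j : ℤ, wordDist S (γ i) (γ j) = |(i : ℝ) - (j : ℝ)| := by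
  obtain ⟨β, -, hβ⟩ := ball_exists hS
  have hbig : ∀ L : ℕ, ∃ g : G, 2 * L ≤ wordLength S g := by
    intro L
    by_contra hcon
    push Not at hcon
    obtain ⟨F, hF, -⟩ := hβ (2 * L)
    have : (Set.univ : Set G).Finite := (F.finite_toSet).subset (fun g _ => by
      simpa [hF] using (hcon g).le)
    exact Set.infinite_univ this
  choose gg hgg using hbig
  choose p hp0 hp1 hp2 using fun L => wl_geod hS (gg L)
  let q : ℕ → ℤ → G := fun L n => (p L L)⁻¹ * p L (L + n).toNat
  have hq : ∀ (L : ℕ) (m n : ℤ), -L ≤ m → m ≤ n → n ≤ L →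
      wordLength S ((q L m)⁻¹ * q L n) = (n - m).toNat := by
    intro L m n h1 h2 h3
    have e : (q L m)⁻¹ * q L n = (p L (L + m).toNat)⁻¹ * p L (L + n).toNat := by
      simp only [q]; group
    have := hgg L
    rw [e, hp2 L _ _ (by omega) (by omega)]
    omega
  have hq0 : ∀ L, q L 0 = 1 := by
    intro L; simp [q]
  have hex : ∀ n : ℤ, ∃ g : G, ∀ᶠ L in (hyperfilter ℕ : Filter ℕ), q L n = g := by
    intro n
    obtain ⟨F, hF, -⟩ := hβ n.natAbs
    have : ∀ᶠ L in (hyperfilter ℕ : Filter ℕ), q L n ∈ F := by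
      have h1 : ∀ᶠ L : ℕ in atTop, q L n ∈ F := by
        filter_upwards [eventually_ge_atTop n.natAbs] with L hL
        rw [hF]
        rcases le_total 0 n with h | h
        · have := hq L 0 n (by omega) h (by omega)
          rw [hq0] at this
          simp only [inv_one, one_mul] at this
          omega
        · have := hq L n 0 (by omega) h (by omega)
          rw [hq0, mul_one, wl_inv hS] at this
          omega
      exact (Nat.hyperfilter_le_atTop) h1
    obtain ⟨b, -, hb⟩ := ultra_const _ _ F this
    exact ⟨b, hb⟩
  choose γ hγ using hex
  have main : ∀ i j : ℤ, i ≤ j → wordDist S (γ i) (γ j) = (j : ℝ) - i := by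
    intro i j hij
    have hL : ∀ᶠ L : ℕ in (hyperfilter ℕ : Filter ℕ), max i.natAbs j.natAbs ≤ L :=
      (Nat.hyperfilter_le_atTop) (eventually_ge_atTop _)
    obtain ⟨L, ⟨h1, h2⟩, h3⟩ := (((hγ i).and (hγ j)).and hL).exists
    have := hq L i j (by omega) hij (by omega)
    rw [h1, h2] at this
    rw [wordDist, this]
    have h4 : (((j - i).toNat : ℤ) : ℝ) = ((j - i : ℤ) : ℝ) := by
      rw [Int.toNat_of_nonneg (by omega)]
    push_cast at h4
    exact h4
  refine ⟨γ, fun i j => ?_⟩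
  rcases le_total i j with h | h
  · rw [main i j h, abs_sub_comm, abs_of_nonneg]
    have : (i : ℝ) ≤ j := by exact_mod_cast h
    linarith
  · rw [wd_symm hS, main j i h, abs_of_nonneg]
    have : (j : ℝ) ≤ i := by exact_mod_cast h
    linarith

/-- a point far away from a bi-infinite geodesic -/
theorem far_point {S : Finset G} (hS : Generates S)
    (hZ : ¬ QuasiIsometric (wordDist S) intDist) (γ : ℤ → G)
    (hγ : ∀ i j : ℤ, wordDist S (γ i) (γ j) = |(i : ℝ) - (j : ℝ)|) (r : ℕ) :
    ∃ z, ∀ n, (r : ℝ) < wordDist S z (γ n) := by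
  by_contra hcon
  push Not at hcon
  choose f hf using hcon
  apply hZ
  have key : ∀ x y, |wordDist S x y - intDist (f x) (f y)| ≤ 2 * r := by
    intro x y
    have h1 := wd_tri hS x (γ (f x)) y
    have h2 := wd_tri hS (γ (f x)) (γ (f y)) y
    have h3 := wd_tri hS (γ (f x)) x (γ (f y))
    have h4 := wd_tri hS x y (γ (f y))
    have h5 := hf x
    have h6 := hf y
    have h7 := wd_symm hS y (γ (f y))
    have h8 := wd_symm hS x (γ (f x))
    have h9 := hγ (f x) (f y)
    unfold intDist
    rw [abs_le]
    constructor <;> linarith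
  refine ⟨f, 1, 2 * r, r, le_rfl, by positivity, by positivity, ?_, ?_⟩
  · intro x y
    have := abs_le.1 (key x y)
    constructor <;> linarith [this.1, this.2]
  · intro n
    refine ⟨γ n, ?_⟩
    have := hf (γ n)
    rw [hγ] at this
    unfold intDist
    rwa [abs_sub_comm]

theorem three_points [Infinite G] {S : Finset G} (hS : Generates S)
    (hZ : ¬ QuasiIsometric (wordDist S) intDist) {δ : ℝ}
    (hδ : IsHyperbolicWith (wordDist S) δ) (c r : ℕ) (hc : 2 * δ < c) (hr : c ≤ r) :
    ∃ a₁ a₂ a₃ : G, wordLength S a₁ = r ∧ wordLength S a₂ = r ∧ wordLength S a₃ = r ∧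
      gromov (wordDist S) 1 a₁ a₂ ≤ c ∧ gromov (wordDist S) 1 a₁ a₃ ≤ c ∧
      gromov (wordDist S) 1 a₂ a₃ ≤ c := by
  obtain ⟨γ, hγ⟩ := biinf_geod hS
  obtain ⟨z, hz⟩ := far_point hS hZ γ hγ r
  -- nearest point
  obtain ⟨k, hk⟩ : ∃ k : ℤ, ∀ n, wordDist S z (γ k) ≤ wordDist S z (γ n) := by
    obtain ⟨k, hk⟩ := exists_minimal_of_wellFoundedLT
      (P := fun m : ℕ => ∃ n : ℤ, wordLength S (z⁻¹ * γ n) = m) ⟨_, 0, rfl⟩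
    obtain ⟨⟨k', hk'⟩, hmin⟩ := hk
    refine ⟨k', fun n => ?_⟩
    unfold wordDist
    rw [hk']
    rcases le_total k (wordLength S (z⁻¹ * γ n)) with h | h
    · exact_mod_cast h
    · exact_mod_cast hmin ⟨n, rfl⟩ h
  set p := γ k with hp
  have hdir : ∀ s : ℤ, |(s:ℝ)| = 1 →
      gromov (wordDist S) p z (γ (k + s * r)) ≤ c := by
    intro s hs
    by_contra hcon
    push Not at hcon
    have h1 := hδ p (γ (k + s * r)) z (γ (k + s * c))
    have hrc : (c : ℝ) ≤ r := by exact_mod_cast hr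
    have h2 : gromov (wordDist S) p (γ (k + s * r)) (γ (k + s * c)) = c := by
      simp only [gromov, hp, hγ]
      push_cast
      have e1 : |(k:ℝ) + s * r - k| = r := by
        rw [add_sub_cancel_left, abs_mul, hs, one_mul]; exact abs_of_nonneg (by positivity)
      have e2 : |(k:ℝ) + s * c - k| = c := by
        rw [add_sub_cancel_left, abs_mul, hs, one_mul]; exact abs_of_nonneg (by positivity)
      have e3 : |(k:ℝ) + s * r - (k + s * c)| = r - c := by
        rw [show (k:ℝ) + s * r - (k + s * c) = s * (r - c) by ring, abs_mul, hs, one_mul]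
        exact abs_of_nonneg (by linarith)
      rw [e1, e2, e3]; ring
    rw [h2, gr_symm hS p _ z, min_eq_right hcon.le] at h1
    have h3 := hk (k + s * c)
    have h4 : wordDist S (γ (k + s * c)) p = c := by
      simp only [hp, hγ]
      push_cast
      rw [add_sub_cancel_left, abs_mul, hs, one_mul]; exact abs_of_nonneg (by positivity)
    simp only [gromov] at h1
    linarith
  have hlen : (r : ℝ) < wordDist S z p := hz k
  obtain ⟨a, ha1, ha2⟩ := prefix_exists hS (p⁻¹ * z) r (by
    rw [wd_symm hS, wordDist] at hlen
    exact_mod_cast hlen.le)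
  have htr : ∀ x y, gromov (wordDist S) 1 (p⁻¹ * x) (p⁻¹ * y) = gromov (wordDist S) p x y := by
    intro x y
    rw [← gr_left S p⁻¹ p x y]; simp
  have hl : ∀ s : ℤ, |(s:ℝ)| = 1 → wordLength S (p⁻¹ * γ (k + s * r)) = r := by
    intro s hs
    have := hγ k (k + s * r)
    push_cast at this
    rw [sub_add_cancel_left, abs_neg, abs_mul, hs, one_mul, wordDist, Nat.abs_cast] at this
    exact_mod_cast this
  have hs1 : |((1:ℤ):ℝ)| = 1 := by simp
  have hs2 : |((-1:ℤ):ℝ)| = 1 := by simp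
  refine ⟨p⁻¹ * γ (k + 1 * r), p⁻¹ * γ (k + (-1) * r), a, hl 1 hs1, hl (-1) hs2, ha1, ?_, ?_, ?_⟩
  · rw [htr]
    simp only [gromov, hp, hγ]
    push_cast
    have hr0 : (0:ℝ) ≤ r := by positivity
    rw [show (k:ℝ) + 1 * r - k = r by ring, show (k:ℝ) + -1 * r - k = - r by ring,
      show (k:ℝ) + 1 * r - (k + -1 * r) = 2 * r by ring, abs_neg, abs_of_nonneg hr0,
      abs_of_nonneg (by linarith)]
    have : (0:ℝ) ≤ c := by positivity
    linarith
  · refine (gr_mono hS _ ha2).trans ?_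
    rw [htr, gr_symm hS]
    exact hdir 1 hs1
  · refine (gr_mono hS _ ha2).trans ?_
    rw [htr, gr_symm hS]
    exact hdir (-1) hs2


/-! ### Branching -/

theorem two_dirs {S : Finset G} (hS : Generates S) {δ : ℝ} (hδ : IsHyperbolicWith (wordDist S) δ)
    {c r : ℕ} (h3 : ∃ a₁ a₂ a₃ : G, wordLength S a₁ = r ∧ wordLength S a₂ = r ∧ wordLength S a₃ = r ∧
      gromov (wordDist S) 1 a₁ a₂ ≤ c ∧ gromov (wordDist S) 1 a₁ a₃ ≤ c ∧
      gromov (wordDist S) 1 a₂ a₃ ≤ c) (o : G) :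
    ∃ a b : G, wordLength S a = r ∧ wordLength S b = r ∧ gromov (wordDist S) 1 a b ≤ c ∧
      gromov (wordDist S) 1 o a ≤ c + δ ∧ gromov (wordDist S) 1 o b ≤ c + δ := by
  obtain ⟨a₁, a₂, a₃, l1, l2, l3, g12, g13, g23⟩ := h3
  have key : ∀ a b, gromov (wordDist S) 1 a b ≤ c →
      gromov (wordDist S) 1 o a ≤ c + δ ∨ gromov (wordDist S) 1 o b ≤ c + δ := by
    intro a b hab
    by_contra hcon
    push Not at hcon
    have := hδ 1 o a b
    have h := lt_min hcon.1 hcon.2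
    linarith
  by_cases h1 : gromov (wordDist S) 1 o a₁ ≤ c + δ
  · by_cases h2 : gromov (wordDist S) 1 o a₂ ≤ c + δ
    · exact ⟨a₁, a₂, l1, l2, g12, h1, h2⟩
    · exact ⟨a₁, a₃, l1, l3, g13, h1, (key _ _ g23).resolve_left h2⟩
  · exact ⟨a₂, a₃, l2, l3, g23, (key _ _ g12).resolve_left h1, (key _ _ g13).resolve_left h1⟩

theorem branch {S : Finset G} (hS : Generates S) {δ : ℝ} (hδ0 : 0 ≤ δ)
    (hδ : IsHyperbolicWith (wordDist S) δ) {c : ℕ}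
    (h3 : ∀ r : ℕ, c ≤ r → ∀ o, ∃ a b : G, wordLength S a = r ∧ wordLength S b = r ∧
      gromov (wordDist S) 1 a b ≤ c ∧
      gromov (wordDist S) 1 o a ≤ c + δ ∧ gromov (wordDist S) 1 o b ≤ c + δ) (k : ℕ) :
    ∃ K : ℝ, ∀ (R : ℕ) (o : G), ∃ l : List G, l.length = 2 ^ k ∧
      (∀ y ∈ l, R ≤ wordLength S y ∧ gromov (wordDist S) 1 o y ≤ c + 2 * δ) ∧
      l.Pairwise (fun y y' => gromov (wordDist S) 1 y y' ≤ K) := by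
  induction k with
  | zero =>
    refine ⟨0, fun R o => ?_⟩
    obtain ⟨a, -, h1, -, -, h2, -⟩ := h3 (max R c) (le_max_right _ _) o
    refine ⟨[a], by simp, ?_, by simp⟩
    intro y hy
    simp only [List.mem_singleton] at hy
    subst hy
    exact ⟨h1 ▸ le_max_left _ _, by linarith⟩
  | succ k ih =>
    obtain ⟨K, hK⟩ := ih
    obtain ⟨r, hr⟩ := exists_nat_gt (2 * c + 4 * δ)
    have hcr : c ≤ r := by
      have : (c:ℝ) ≤ r := by
        have : (0:ℝ) ≤ c := by positivity
        linarith
      exact_mod_cast this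
    refine ⟨max (K + r) (c + 2 * δ), fun R o => ?_⟩
    obtain ⟨a, b, la, lb, gab, oa, ob⟩ := h3 r hcr o
    obtain ⟨l₁, n1, p1, q1⟩ := hK R a⁻¹
    obtain ⟨l₂, n2, p2, q2⟩ := hK R b⁻¹
    -- facts for a child
    have child : ∀ a z, wordLength S a = r → gromov (wordDist S) 1 o a ≤ c + δ → 
        R ≤ wordLength S z → gromov (wordDist S) 1 a⁻¹ z ≤ c + 2 * δ →
        (R ≤ wordLength S (a * z) ∧ gromov (wordDist S) 1 o (a * z) ≤ c + 2 * δ) ∧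
        c + 2 * δ < gromov (wordDist S) 1 a (a * z) := by
      intro a z la oa hz haz
      have e1 : gromov (wordDist S) a 1 (a * z) ≤ c + 2 * δ := by
        rw [← gr_left S a⁻¹]
        simpa using haz
      have e2 := gr_add hS 1 a (a * z)
      rw [wd_one' hS, la] at e2
      have e3 : c + 2 * δ < gromov (wordDist S) 1 a (a * z) := by linarith
      refine ⟨⟨?_, ?_⟩, e3⟩
      · have e4 : wordDist S a (a * z) = wordLength S z := by simp [wordDist]
        have : (R:ℝ) ≤ wordLength S (a * z) := by
          rw [← wd_one' hS]
          simp only [gromov] at e1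
          rw [wd_one, la, wd_symm hS _ a, e4, wd_symm hS 1] at e1
          have : (R:ℝ) ≤ wordLength S z := by exact_mod_cast hz
          linarith
        exact_mod_cast this
      · have h := hδ 1 (a * z) o a
        rw [gr_symm hS 1 _ o, gr_symm hS 1 (a * z) a] at h
        by_contra hcon
        push Not at hcon
        have := lt_min hcon e3
        linarith
    refine ⟨l₁.map (a * ·) ++ l₂.map (b * ·), by simp [n1, n2, pow_succ]; ring, ?_, ?_⟩
    · intro y hy
      simp only [List.mem_append, List.mem_map] at hy
      rcases hy with ⟨z, hz, rfl⟩ | ⟨z, hz, rfl⟩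
      · exact (child a z la oa (p1 z hz).1 (p1 z hz).2).1
      · exact (child b z lb ob (p2 z hz).1 (p2 z hz).2).1
    · have same : ∀ a z z', wordLength S a = r → gromov (wordDist S) 1 z z' ≤ K →
          gromov (wordDist S) 1 (a * z) (a * z') ≤ max (K + r) (c + 2 * δ) := by
        intro a z z' la h
        refine le_trans ?_ (le_max_left _ _)
        simp only [gromov] at h ⊢
        rw [wd_left]
        have t1 := wd_tri hS (a * z) a 1
        have t2 := wd_tri hS (a * z') a 1
        have e : ∀ z, wordDist S (a * z) a = wordDist S z 1 := by
          intro z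
          simpa using wd_left S a z 1
        rw [e, wd_one' hS a, la] at t1 t2
        linarith
      rw [List.pairwise_append]
      refine ⟨?_, ?_, ?_⟩
      · rw [List.pairwise_map]
        exact q1.imp (fun h => same _ _ _ la h)
      · rw [List.pairwise_map]
        exact q2.imp (fun h => same _ _ _ lb h)
      · intro y hy y' hy'
        simp only [List.mem_map] at hy hy'
        obtain ⟨z, hz, rfl⟩ := hy
        obtain ⟨z', hz', rfl⟩ := hy'
        refine le_trans ?_ (le_max_right _ _)
        have c1 := (child a z la oa (p1 z hz).1 (p1 z hz).2).2
        have c2 := (child b z' lb ob (p2 z' hz').1 (p2 z' hz').2).2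
        by_contra hcon
        push Not at hcon
        have h1 := hδ 1 (a * z) a (b * z')
        have h2 := hδ 1 (b * z') a b
        rw [gr_symm hS 1 (a * z) a] at h1
        have h4 := lt_min c1 hcon
        rw [gr_symm hS 1 (b * z') a, gr_symm hS 1 (b * z') b] at h2
        have h5 : c + δ < gromov (wordDist S) 1 a (b * z') := by linarith
        have h6 : c + δ < gromov (wordDist S) 1 b (b * z') := by linarith
        have h7 := lt_min h5 h6
        linarith

theorem many {S : Finset G} (hS : Generates S) {c1 : ℝ} 
    (hb : ∀ k : ℕ, ∃ K : ℝ, ∀ (R : ℕ) (o : G), ∃ l : List G, l.length = 2 ^ k ∧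
      (∀ y ∈ l, R ≤ wordLength S y ∧ gromov (wordDist S) 1 o y ≤ c1) ∧
      l.Pairwise (fun y y' => gromov (wordDist S) 1 y y' ≤ K)) (N : ℕ) :
    ∃ R : ℕ, ∀ o : G, ∃ F : Finset G, N ≤ F.card ∧
      ∀ y ∈ F, wordLength S y = R ∧ gromov (wordDist S) 1 o y ≤ c1 := by
  classical
  obtain ⟨K, hK⟩ := hb N
  obtain ⟨R, hR⟩ := exists_nat_gt K
  refine ⟨R, fun o => ?_⟩
  obtain ⟨l, hl, hp, hq⟩ := hK R o
  have ht : ∀ y, ∃ t, R ≤ wordLength S y → wordLength S t = R ∧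
      wordDist S t 1 + wordDist S y t = wordDist S y 1 := by
    intro y
    by_cases h : R ≤ wordLength S y
    · obtain ⟨t, h1, h2⟩ := prefix_exists hS y R h
      exact ⟨t, fun _ => ⟨h1, h2⟩⟩
    · exact ⟨1, fun h' => absurd h' h⟩
  choose t ht using ht
  have hnd : (l.map t).Nodup := by
    unfold List.Nodup
    rw [List.pairwise_map]
    refine List.Pairwise.imp_of_mem (fun {y y'} hy hy' h heq => ?_) hq
    obtain ⟨a1, a2⟩ := ht y (hp y hy).1
    obtain ⟨b1, b2⟩ := ht y' (hp y' hy').1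
    have tri := wd_tri hS y (t y) y'
    rw [← heq] at b2
    rw [wd_one' hS, a1] at a2 b2
    rw [wd_symm hS y' (t y)] at b2
    simp only [gromov] at h
    linarith
  refine ⟨(l.map t).toFinset, ?_, ?_⟩
  · rw [List.toFinset_card_of_nodup hnd, List.length_map, hl]
    exact Nat.lt_two_pow_self.le
  · intro y hy
    simp only [List.mem_toFinset, List.mem_map] at hy
    obtain ⟨z, hz, rfl⟩ := hy
    obtain ⟨a1, a2⟩ := ht z (hp z hz).1
    exact ⟨a1, (gr_mono hS o a2).trans (hp z hz).2⟩

theorem doubling [Infinite G] {S : Finset G} (hS : Generates S)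
    (hZ : ¬ QuasiIsometric (wordDist S) intDist) {δ : ℝ} (hδ0 : 0 ≤ δ)
    (hδ : IsHyperbolicWith (wordDist S) δ) :
    ∃ (c1 : ℝ) (M : ℕ),
      (∀ N : ℕ, ∃ R : ℕ, ∀ x : G, ∃ F : Finset G, N ≤ F.card ∧
        ∀ g ∈ F, wordLength S g = R ∧ gromov (wordDist S) x 1 (x * g) ≤ c1) ∧
      ∀ (R : ℕ) (y : G) (F : Finset G), 
        (∀ g ∈ F, wordLength S g = R ∧ gromov (wordDist S) (y * g⁻¹) 1 y ≤ c1) → F.card ≤ M := by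
  obtain ⟨c, hc⟩ := exists_nat_gt (2 * δ)
  have hb := branch hS hδ0 hδ (c := c) (fun r hr o => two_dirs hS hδ
    (three_points hS hZ hδ c r hc hr) o)
  obtain ⟨β, -, hβ⟩ := ball_exists hS
  obtain ⟨m, hm⟩ := exists_nat_gt (2 * (c + 2 * δ) + 2 * δ)
  obtain ⟨B, hB, -⟩ := hβ m
  refine ⟨c + 2 * δ, B.card, fun N => ?_, fun R y F hF => ?_⟩
  · obtain ⟨R, hR⟩ := many hS hb N
    refine ⟨R, fun x => ?_⟩
    obtain ⟨F, h1, h2⟩ := hR x⁻¹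
    refine ⟨F, h1, fun g hg => ⟨(h2 g hg).1, ?_⟩⟩
    rw [← gr_left S x⁻¹]
    simpa using (h2 g hg).2
  · rcases F.eq_empty_or_nonempty with rfl | ⟨g0, hg0⟩
    · simp
    · apply Finset.card_le_card_of_injOn (fun g => g0 * g⁻¹)
      · intro g hg
        rw [Finset.mem_coe, hB]
        have k : ∀ g ∈ F, (R:ℝ) - (c + 2 * δ) ≤ gromov (wordDist S) y 1 (y * g⁻¹) := by
          intro g hg
          have h1 := gr_add hS y (y * g⁻¹) 1
          have h2 : wordDist S (y * g⁻¹) y = R := by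
            rw [wd_symm hS, wordDist]; simp [wl_inv hS, (hF g hg).1]
          have h3 := (hF g hg).2
          rw [gr_symm hS] at h3 
          rw [gr_symm hS y] at h1
          linarith
        have h1 := hδ y 1 (y * g0⁻¹) (y * g⁻¹)
        have h2 := le_min (k g0 hg0) (k g hg)
        have h3 : ∀ g ∈ F, wordDist S (y * g⁻¹) y = R := by
          intro g hg
          rw [wd_symm hS, wordDist]; simp [wl_inv hS, (hF g hg).1]
        have h4 : wordDist S (y * g0⁻¹) (y * g⁻¹) = wordLength S (g0 * g⁻¹) := by
          rw [wd_left]; simp [wordDist]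
        have h5 : gromov (wordDist S) y (y * g0⁻¹) (y * g⁻¹) =
            (R + R - wordLength S (g0 * g⁻¹)) / 2 := by
          simp only [gromov]
          rw [h3 g0 hg0, h3 g hg, h4]
        rw [h5] at h1
        have : (wordLength S (g0 * g⁻¹) : ℝ) ≤ m := by linarith
        exact_mod_cast this
      · intro g _ g' _ h
        simpa using h


structure Walk (μ : G → ℝ) (T : Finset G) : Prop where
  nonneg : ∀ g, 0 ≤ μ g
  sum : ∑ s ∈ T, μ s = 1
  symm : ∀ g, μ g⁻¹ = μ g
  mem : ∀ g, g ∈ T ↔ μ g ≠ 0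

def Pop (T : Finset G) (μ : G → ℝ) (f : G → ℝ) (x : G) : ℝ := ∑ s ∈ T, μ s * f (x * s)

theorem Walk.pos {μ : G → ℝ} {T : Finset G} (W : Walk μ T) {s : G} (hs : s ∈ T) : 0 < μ s :=
  lt_of_le_of_ne (W.nonneg s) (Ne.symm ((W.mem s).1 hs))

theorem Walk.inv_mem {μ : G → ℝ} {T : Finset G} (W : Walk μ T) {s : G} (hs : s ∈ T) :
    s⁻¹ ∈ T := by
  rw [W.mem] at hs ⊢; rwa [W.symm]

theorem Walk.sum_inv {μ : G → ℝ} {T : Finset G} (W : Walk μ T) (φ : G → ℝ) :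
    ∑ s ∈ T, μ s * φ s⁻¹ = ∑ s ∈ T, μ s * φ s := by
  refine Finset.sum_bij (fun s _ => s⁻¹) (fun s hs => W.inv_mem hs) (fun a _ b _ h => by simpa using h)
    (fun b hb => ⟨b⁻¹, W.inv_mem hb, by simp⟩) (fun a _ => by rw [W.symm])

theorem Walk.nonempty {μ : G → ℝ} {T : Finset G} (W : Walk μ T) : T.Nonempty := by
  rcases T.eq_empty_or_nonempty with h | h
  · have := W.sum; rw [h] at this; simp at this
  · exact h

def Fs (f : G → ℝ) : Prop := (Function.support f).Finite

theorem Fs.sm {f : G → ℝ} (h : Fs f) : Summable f := summable_of_hasFiniteSupport h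

theorem Fs.mono {f g : G → ℝ} (h : Fs f) (hg : ∀ x, f x = 0 → g x = 0) : Fs g :=
  h.subset (fun x hx hf => hx (hg x hf))

theorem Fs.add {f g : G → ℝ} (h : Fs f) (hg : Fs g) : Fs (fun x => f x + g x) :=
  (Set.Finite.union h hg).subset (fun x hx => by
    by_contra hc
    simp only [Set.mem_union, Function.mem_support, not_or, not_not] at hc
    apply hx; show f x + g x = 0
    rw [hc.1, hc.2, add_zero])

theorem Fs.smul {f : G → ℝ} (h : Fs f) (c : ℝ) : Fs (fun x => c * f x) :=
  h.mono (fun x hx => by rw [hx, mul_zero])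

theorem Fs.sub {f g : G → ℝ} (h : Fs f) (hg : Fs g) : Fs (fun x => f x - g x) := by
  have := h.add (hg.smul (-1))
  refine this.mono (fun x hx => by linarith)

theorem Fs.trans {f : G → ℝ} (h : Fs f) (g : G) : Fs (fun x => f (x * g)) := by
  refine Set.Finite.subset (h.image (fun y => y * g⁻¹)) (fun x hx => ⟨x * g, hx, by simp⟩)

theorem Fs.mul_left {f : G → ℝ} (h : Fs f) (g : G → ℝ) : Fs (fun x => f x * g x) :=
  h.mono (fun x hx => by rw [hx, zero_mul])

theorem Fs.sq {f : G → ℝ} (h : Fs f) : Fs (fun x => f x ^ 2) :=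
  h.mono (fun x hx => by rw [hx]; norm_num)

theorem Fs.sum {ι : Type*} (T : Finset ι) {f : ι → G → ℝ} (h : ∀ i ∈ T, Fs (f i)) :
    Fs (fun x => ∑ i ∈ T, f i x) := by
  refine Set.Finite.subset (Set.Finite.biUnion T.finite_toSet (fun i hi => h i hi)) ?_
  intro x hx
  obtain ⟨i, hi, hne⟩ := Finset.exists_ne_zero_of_sum_ne_zero hx
  exact Set.mem_biUnion hi hne

theorem Fs.pop {f : G → ℝ} (h : Fs f) (T : Finset G) (μ : G → ℝ) : Fs (Pop T μ f) :=
  Fs.sum T (fun s _ => (h.trans s).smul (μ s))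

theorem tsum_trans (f : G → ℝ) (g : G) : ∑' x, f (x * g) = ∑' x, f x :=
  (Equiv.mulRight g).tsum_eq f

def ip (f g : G → ℝ) : ℝ := ∑' x, f x * g x

theorem tsum_finset {ι : Type*} (T : Finset ι) {f : ι → G → ℝ} (h : ∀ i ∈ T, Fs (f i)) :
    ∑' x, ∑ i ∈ T, f i x = ∑ i ∈ T, ∑' x, f i x :=
  Summable.tsum_finsetSum (fun i hi => (h i hi).sm)

/-- gap for the doubling estimate -/
theorem gap_ball [Infinite G] {S : Finset G} (hS : Generates S)
    (hZ : ¬ QuasiIsometric (wordDist S) intDist) {δ : ℝ} (hδ0 : 0 ≤ δ)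
    (hδ : IsHyperbolicWith (wordDist S) δ) :
    ∃ Bf : Finset G, ∀ f : G → ℝ, Fs f →
      ∑' x, f x ^ 2 ≤ 2 * ∑ g ∈ Bf, ∑' x, (f x - f (x * g)) ^ 2 := by
  classical
  obtain ⟨c1, M, h1, h2⟩ := doubling hS hZ hδ0 hδ
  obtain ⟨R, hR⟩ := h1 (2 * M + 1)
  obtain ⟨β, _, hβ⟩ := ball_exists hS
  obtain ⟨Bf, hB, -⟩ := hβ R
  refine ⟨Bf, fun f hf => ?_⟩
  let E : G → G → Prop := fun x g => wordLength S g = R ∧ gromov (wordDist S) x 1 (x * g) ≤ c1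
  have hd : ∀ g, Fs (fun x => (f x - f (x * g)) ^ 2) := fun g => (hf.sub (hf.trans g)).sq
  have hE : ∀ g, Fs (fun x => if E x g then f (x * g) ^ 2 else 0) := fun g =>
    (hf.trans g).mono (fun x hx => by simp only [hx]; simp)
  have hE' : ∀ g, Fs (fun x => if E (x * g⁻¹) g then f x ^ 2 else 0) := fun g =>
    hf.mono (fun x hx => by simp only [hx]; simp)
  have key : ∀ x, (2 * M + 1 : ℝ) * f x ^ 2 ≤
      2 * (∑ g ∈ Bf, if E x g then f (x * g) ^ 2 else 0) + 2 * ∑ g ∈ Bf, (f x - f (x * g)) ^ 2 := by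
    intro x
    obtain ⟨F, hF, hF'⟩ := hR x
    have hsub : F ⊆ Bf := fun g hg => (hB g).2 (hF' g hg).1.le
    calc (2 * M + 1 : ℝ) * f x ^ 2 ≤ F.card * f x ^ 2 := by
          gcongr; exact_mod_cast hF
      _ = ∑ g ∈ F, f x ^ 2 := by simp
      _ ≤ ∑ g ∈ F, (2 * (if E x g then f (x * g) ^ 2 else 0) + 2 * (f x - f (x * g)) ^ 2) := by
          refine Finset.sum_le_sum (fun g hg => ?_)
          have hEg : E x g := hF' g hg
          rw [if_pos hEg]
          nlinarith [sq_nonneg (2 * f (x * g) - f x)]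
      _ ≤ ∑ g ∈ Bf, (2 * (if E x g then f (x * g) ^ 2 else 0) + 2 * (f x - f (x * g)) ^ 2) := by
          refine Finset.sum_le_sum_of_subset_of_nonneg hsub (fun g _ _ => ?_)
          split_ifs <;> positivity
      _ = _ := by rw [Finset.sum_add_distrib, Finset.mul_sum, Finset.mul_sum]
  have s1 : Fs (fun x => ∑ g ∈ Bf, if E x g then f (x * g) ^ 2 else 0) :=
    Fs.sum Bf (fun g _ => hE g)
  have s2 : Fs (fun x => ∑ g ∈ Bf, (f x - f (x * g)) ^ 2) := Fs.sum Bf (fun g _ => hd g)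
  have sumkey := Summable.tsum_le_tsum key (hf.sq.smul _).sm ((s1.smul 2).add (s2.smul 2)).sm
  rw [tsum_mul_left, Summable.tsum_add (s1.smul 2).sm (s2.smul 2).sm, tsum_mul_left,
    tsum_mul_left, tsum_finset Bf (fun g _ => hE g), tsum_finset Bf (fun g _ => hd g)] at sumkey
  have e1 : ∑ g ∈ Bf, ∑' x, (if E x g then f (x * g) ^ 2 else 0) ≤ M * ∑' x, f x ^ 2 := by
    have : ∀ g, ∑' x, (if E x g then f (x * g) ^ 2 else 0)
        = ∑' x, (if E (x * g⁻¹) g then f x ^ 2 else 0) := by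
      intro g
      rw [← tsum_trans (fun x => if E (x * g⁻¹) g then f x ^ 2 else 0) g]
      simp
    simp only [this]
    rw [← tsum_finset Bf (fun g _ => hE' g), ← tsum_mul_left]
    refine Summable.tsum_le_tsum (fun y => ?_) (Fs.sum Bf (fun g _ => hE' g)).sm (hf.sq.smul _).sm
    rw [← Finset.sum_filter, Finset.sum_const, nsmul_eq_mul]
    gcongr
    refine h2 R y _ (fun g hg => ?_)
    have := (Finset.mem_filter.1 hg).2
    refine ⟨this.1, ?_⟩
    have h3 := this.2
    simpa using h3
  nlinarith

theorem diff_list {T : Finset G} {f : G → ℝ} (hf : Fs f) (l : List G) (hl : ∀ a ∈ l, a ∈ T) :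
    ∑' x, (f x - f (x * l.prod)) ^ 2 ≤
      (2 * 2 ^ l.length - 2) * ∑ s ∈ T, ∑' x, (f x - f (x * s)) ^ 2 := by
  have hd : ∀ g, Fs (fun x => (f x - f (x * g)) ^ 2) := fun g => (hf.sub (hf.trans g)).sq
  induction l with
  | nil => simp
  | cons a l ih =>
    have ih := ih (fun b hb => hl b (List.mem_cons_of_mem _ hb))
    have ha : ∑' x, (f x - f (x * a)) ^ 2 ≤ ∑ s ∈ T, ∑' x, (f x - f (x * s)) ^ 2 :=
      Finset.single_le_sum (f := fun s => ∑' x, (f x - f (x * s)) ^ 2)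
        (fun s _ => tsum_nonneg (fun x => sq_nonneg _)) (hl a (by simp))
    have h2 : ∑' x, (f (x * a) - f (x * a * l.prod)) ^ 2 = ∑' x, (f x - f (x * l.prod)) ^ 2 :=
      tsum_trans (fun x => (f x - f (x * l.prod)) ^ 2) a
    have hd2 : Fs (fun x => (f (x * a) - f (x * a * l.prod)) ^ 2) := (hd l.prod).trans a
    have h3 : ∑' x, (f x - f (x * (a :: l).prod)) ^ 2 ≤
        ∑' x, (2 * (f x - f (x * a)) ^ 2 + 2 * (f (x * a) - f (x * a * l.prod)) ^ 2) := by
      refine Summable.tsum_le_tsum (fun x => ?_) (hd _).sm (((hd a).smul 2).add (hd2.smul 2)).sm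
      rw [List.prod_cons, ← mul_assoc]
      nlinarith [sq_nonneg ((f x - f (x * a)) - (f (x * a) - f (x * a * l.prod)))]
    rw [Summable.tsum_add ((hd a).smul 2).sm (hd2.smul 2).sm, tsum_mul_left, tsum_mul_left, h2] at h3
    rw [List.length_cons, pow_succ]
    nlinarith

theorem wl_list {S : Finset G} (hS : Generates S) (g : G) :
    ∃ l : List G, (∀ a ∈ l, a ∈ S ∨ a⁻¹ ∈ S) ∧ l.prod = g := by
  obtain ⟨l, -, h, h'⟩ := wl_spec hS g
  exact ⟨l, h, h'⟩

theorem ip_pop {T : Finset G} {μ : G → ℝ} {f : G → ℝ} (hf : Fs f) (g : G → ℝ) :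
    ip f (Pop T μ g) = ∑ s ∈ T, μ s * ∑' x, f x * g (x * s) := by
  unfold ip Pop
  simp_rw [Finset.mul_sum]
  rw [tsum_finset T (fun s _ => hf.mul_left _)]
  refine Finset.sum_congr rfl (fun s _ => ?_)
  rw [← tsum_mul_left]
  congr 1; ext x; ring

theorem ip_symm {T : Finset G} {μ : G → ℝ} (W : Walk μ T) {f g : G → ℝ} (hf : Fs f) (hg : Fs g) :
    ip f (Pop T μ g) = ip g (Pop T μ f) := by
  rw [ip_pop hf, ip_pop hg, ← W.sum_inv]
  refine Finset.sum_congr rfl (fun s _ => ?_)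
  congr 1
  rw [← tsum_trans (fun x => f x * g (x * s⁻¹)) s]
  congr 1; ext x; simp [mul_comm]

theorem gap_form [Infinite G] {μ : G → ℝ} {T : Finset G} (W : Walk μ T) (hT : Generates T)
    (hZ : ¬ QuasiIsometric (wordDist T) intDist) {δ : ℝ} (hδ0 : 0 ≤ δ)
    (hδ : IsHyperbolicWith (wordDist T) δ) :
    ∃ lam : ℝ, 0 < lam ∧ lam < 1 ∧ ∀ f : G → ℝ, Fs f →
      ip f (Pop T μ f) ≤ lam * ∑' x, f x ^ 2 := by
  obtain ⟨Bf, hB⟩ := gap_ball hT hZ hδ0 hδ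
  choose L hL hLp using wl_list hT
  obtain ⟨s0, hs0, hmin⟩ := T.exists_min_image μ W.nonempty
  have hm0 : 0 < μ s0 := W.pos hs0
  set K : ℝ := 2 * ∑ g ∈ Bf, (2 * 2 ^ (L g).length - 2) with hK
  have hK0 : 0 ≤ K := by
    refine mul_nonneg (by norm_num) (Finset.sum_nonneg (fun g _ => ?_))
    have : (1:ℝ) ≤ 2 ^ (L g).length := one_le_pow₀ (by norm_num)
    linarith
  set κ : ℝ := μ s0 / (2 * (K + 1)) with hκ
  have hκ0 : 0 < κ := by positivity
  refine ⟨max (1 / 2) (1 - κ), by positivity, max_lt (by norm_num) (by linarith), fun f hf => ?_⟩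
  have hn0 : 0 ≤ ∑' x, f x ^ 2 := tsum_nonneg (fun x => sq_nonneg _)
  have hd : ∀ g, Fs (fun x => (f x - f (x * g)) ^ 2) := fun g => (hf.sub (hf.trans g)).sq
  set D := ∑ s ∈ T, ∑' x, (f x - f (x * s)) ^ 2 with hD
  have hD0 : 0 ≤ D := Finset.sum_nonneg (fun s _ => tsum_nonneg (fun x => sq_nonneg _))
  have h1 : ∑' x, f x ^ 2 ≤ K * D := by
    refine (hB f hf).trans ?_
    rw [hK, mul_assoc, Finset.sum_mul]
    gcongr with g hg
    have := diff_list (T := T) hf (L g) (fun a ha => by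
      rcases hL g a ha with h | h
      · exact h
      · simpa using W.inv_mem h)
    rwa [hLp] at this
  have h2 : μ s0 * D ≤ ∑ s ∈ T, μ s * ∑' x, (f x - f (x * s)) ^ 2 := by
    rw [hD, Finset.mul_sum]
    refine Finset.sum_le_sum (fun s hs => ?_)
    exact mul_le_mul_of_nonneg_right (hmin s hs) (tsum_nonneg (fun x => sq_nonneg _))
  have h3 : ∑ s ∈ T, μ s * ∑' x, (f x - f (x * s)) ^ 2 =
      2 * ∑' x, f x ^ 2 - 2 * ip f (Pop T μ f) := by
    have : ∀ s, ∑' x, (f x - f (x * s)) ^ 2 = 2 * ∑' x, f x ^ 2 - 2 * ∑' x, f x * f (x * s) := by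
      intro s
      have e : ∀ x, (f x - f (x * s)) ^ 2 = (f x ^ 2 + f (x * s) ^ 2) - 2 * (f x * f (x * s)) :=
        fun x => by ring
      have q2 : Fs (fun x => f (x * s) ^ 2) := (hf.trans s).sq
      simp_rw [e]
      rw [Summable.tsum_sub (hf.sq.add q2).sm ((hf.mul_left _).smul 2).sm,
        Summable.tsum_add hf.sq.sm q2.sm, tsum_mul_left, tsum_trans (fun x => f x ^ 2) s]
      ring
    simp_rw [this, ip_pop hf, mul_sub, Finset.sum_sub_distrib, ← Finset.sum_mul, W.sum]
    rw [one_mul, Finset.mul_sum]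
    congr 1
    refine Finset.sum_congr rfl (fun s _ => by ring)
  have h4 : κ * ∑' x, f x ^ 2 ≤ ∑' x, f x ^ 2 - ip f (Pop T μ f) := by
    have : κ * ∑' x, f x ^ 2 ≤ μ s0 / 2 * D := by
      rw [hκ, div_mul_eq_mul_div, div_le_iff₀ (by positivity)]
      have : ∑' x, f x ^ 2 ≤ (K + 1) * D := by nlinarith
      calc _ ≤ μ s0 * ((K + 1) * D) := by gcongr
        _ = _ := by ring
    linarith
  calc _ ≤ (1 - κ) * ∑' x, f x ^ 2 := by linarith
    _ ≤ _ := by gcongr; exact le_max_right _ _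

theorem gap_norm {μ : G → ℝ} {T : Finset G} (W : Walk μ T) {lam : ℝ} (hl : 0 < lam)
    (h : ∀ f : G → ℝ, Fs f → ip f (Pop T μ f) ≤ lam * ∑' x, f x ^ 2)
    {g : G → ℝ} (hg : Fs g) : ∑' x, (Pop T μ g x) ^ 2 ≤ lam ^ 2 * ∑' x, g x ^ 2 := by
  have habs : ∀ f : G → ℝ, Fs f → -(lam * ∑' x, f x ^ 2) ≤ ip f (Pop T μ f) := by
    intro f hf
    have hfa : Fs (fun x => |f x|) := hf.mono (fun x hx => by rw [hx, abs_zero])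
    have h1 := h _ hfa
    simp only [sq_abs] at h1
    have h2 : ∑' x, -(|f x| * Pop T μ (fun x => |f x|) x) ≤ ip f (Pop T μ f) := by
      refine Summable.tsum_le_tsum (fun x => ?_) ?_ (hf.mul_left _).sm
      · have e : |Pop T μ f x| ≤ Pop T μ (fun x => |f x|) x := by
          refine (Finset.abs_sum_le_sum_abs _ _).trans (Finset.sum_le_sum (fun s _ => ?_))
          rw [abs_mul, abs_of_nonneg (W.nonneg s)]
        have e2 : |f x * Pop T μ f x| ≤ |f x| * Pop T μ (fun x => |f x|) x := by
          rw [abs_mul]; gcongr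
        linarith [neg_abs_le (f x * Pop T μ f x)]
      · exact (hfa.mul_left _).sm.neg
    rw [tsum_neg] at h2
    unfold ip at h1 h2 ⊢
    linarith
  have hpol : ∀ f : G → ℝ, Fs f → 2 * ip f (Pop T μ g) ≤
      lam * (∑' x, f x ^ 2 + ∑' x, g x ^ 2) := by
    intro f hf
    have a1 := h _ (hf.add hg)
    have a2 := habs _ (hf.sub hg)
    have p1 : Pop T μ (fun x => f x + g x) = fun x => Pop T μ f x + Pop T μ g x := by
      ext x; simp only [Pop, mul_add, Finset.sum_add_distrib]
    have p2 : Pop T μ (fun x => f x - g x) = fun x => Pop T μ f x - Pop T μ g x := by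
      ext x; simp only [Pop, mul_sub, Finset.sum_sub_distrib]
    have sy := ip_symm W hf hg
    have i1 : ip (fun x => f x + g x) (Pop T μ (fun x => f x + g x)) =
        ip f (Pop T μ f) + ip f (Pop T μ g) + (ip g (Pop T μ f) + ip g (Pop T μ g)) := by
      rw [p1]; unfold ip
      rw [← Summable.tsum_add (hf.mul_left _).sm (hf.mul_left _).sm,
        ← Summable.tsum_add (hg.mul_left _).sm (hg.mul_left _).sm,
        ← Summable.tsum_add ((hf.mul_left _).add (hf.mul_left _)).sm
          ((hg.mul_left _).add (hg.mul_left _)).sm]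
      congr 1; ext x; ring
    have i2 : ip (fun x => f x - g x) (Pop T μ (fun x => f x - g x)) =
        (ip f (Pop T μ f) - ip f (Pop T μ g)) - (ip g (Pop T μ f) - ip g (Pop T μ g)) := by
      rw [p2]; unfold ip
      rw [← Summable.tsum_sub (hf.mul_left _).sm (hf.mul_left _).sm,
        ← Summable.tsum_sub (hg.mul_left _).sm (hg.mul_left _).sm,
        ← Summable.tsum_sub ((hf.mul_left _).sub (hf.mul_left _)).sm
          ((hg.mul_left _).sub (hg.mul_left _)).sm]
      congr 1; ext x; ring
    have i3 : ∑' x, (f x + g x) ^ 2 + ∑' x, (f x - g x) ^ 2 =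
        2 * (∑' x, f x ^ 2 + ∑' x, g x ^ 2) := by
      rw [← Summable.tsum_add (hf.add hg).sq.sm (hf.sub hg).sq.sm,
        ← Summable.tsum_add hf.sq.sm hg.sq.sm, ← tsum_mul_left]
      congr 1; ext x; ring
    rw [i1] at a1; rw [i2] at a2
    nlinarith
  have hp := hg.pop T μ
  have hfin := hpol _ (hp.smul lam⁻¹)
  have j1 : ip (fun x => lam⁻¹ * Pop T μ g x) (Pop T μ g) = lam⁻¹ * ∑' x, (Pop T μ g x) ^ 2 := by
    unfold ip; rw [← tsum_mul_left]; congr 1; ext x; ring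
  have j2 : ∑' x, (lam⁻¹ * Pop T μ g x) ^ 2 = lam⁻¹ ^ 2 * ∑' x, (Pop T μ g x) ^ 2 := by
    rw [← tsum_mul_left]; congr 1; ext x; ring
  rw [j1, j2] at hfin
  set A := ∑' x, (Pop T μ g x) ^ 2
  set N := ∑' x, g x ^ 2
  have : lam * (2 * (lam⁻¹ * A)) ≤ lam * (lam * (lam⁻¹ ^ 2 * A + N)) := by gcongr
  have e1 : lam * (2 * (lam⁻¹ * A)) = 2 * A := by field_simp
  have e2 : lam * (lam * (lam⁻¹ ^ 2 * A + N)) = A + lam ^ 2 * N := by field_simp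
  linarith

theorem conv_succ {μ : G → ℝ} {T : Finset G} (W : Walk μ T) (n : ℕ) (g : G) :
    convPow μ (n + 1) g = ∑ s ∈ T, μ s * convPow μ n (g * s) := by
  show ∑' y : G, convPow μ n y * μ (y⁻¹ * g) = _
  rw [← (Equiv.mulLeft g).tsum_eq]
  rw [tsum_eq_sum (s := T)]
  · refine Finset.sum_congr rfl (fun s _ => ?_)
    simp [W.symm, mul_comm]
  · intro s hs
    have : μ s = 0 := by
      by_contra h; exact hs ((W.mem s).2 h)
    simp [W.symm, this]

theorem conv_pop {μ : G → ℝ} {T : Finset G} (W : Walk μ T) (n : ℕ) :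
    convPow μ (n + 1) = Pop T μ (convPow μ n) := funext (conv_succ W n)

theorem conv_nonneg {μ : G → ℝ} {T : Finset G} (W : Walk μ T) (n : ℕ) (g : G) :
    0 ≤ convPow μ n g := by
  induction n generalizing g with
  | zero => simp only [convPow]; split_ifs <;> norm_num
  | succ n ih =>
    rw [conv_succ W]
    exact Finset.sum_nonneg (fun s _ => mul_nonneg (W.nonneg s) (ih _))

theorem conv_left {μ : G → ℝ} {T : Finset G} (W : Walk μ T) (n : ℕ) (g : G) :
    convPow μ (n + 1) g = ∑ s ∈ T, μ s * convPow μ n (s * g) := by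
  induction n generalizing g with
  | zero =>
    rw [conv_succ W]
    refine Finset.sum_congr rfl (fun s _ => ?_)
    simp only [convPow]
    congr 2
    simp only [mul_eq_one_iff_eq_inv, eq_iff_iff]
    exact ⟨fun h => by simp [h], fun h => by simp [h]⟩
  | succ n ih =>
    have e1 : ∀ s, μ s * convPow μ (n + 1) (s * g) =
        ∑ t ∈ T, μ s * (μ t * convPow μ n (s * g * t)) := fun s => by
      rw [conv_succ W, Finset.mul_sum]
    rw [conv_succ W]
    simp_rw [e1, ih, Finset.mul_sum]
    rw [Finset.sum_comm]
    refine Finset.sum_congr rfl (fun s _ => ?_)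
    refine Finset.sum_congr rfl (fun t _ => ?_)
    rw [mul_assoc]; ring

theorem conv_inv {μ : G → ℝ} {T : Finset G} (W : Walk μ T) (n : ℕ) (g : G) :
    convPow μ n g⁻¹ = convPow μ n g := by
  induction n generalizing g with
  | zero => by_cases h : g = 1 <;> simp [convPow, h]
  | succ n ih =>
    rw [conv_left W, conv_succ W, ← W.sum_inv]
    refine Finset.sum_congr rfl (fun s _ => ?_)
    rw [← ih (g * s), mul_inv_rev]

theorem conv_fs {μ : G → ℝ} {T : Finset G} (W : Walk μ T) (n : ℕ) : Fs (convPow μ n) := by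
  induction n with
  | zero =>
    refine (Set.finite_singleton (1 : G)).subset (fun x hx => ?_)
    by_contra h
    exact hx (by simp only [convPow]; exact if_neg h)
  | succ n ih => rw [conv_pop W]; exact ih.pop T μ

theorem conv_le {μ : G → ℝ} {T : Finset G} (W : Walk μ T) {lam : ℝ} (hl : 0 < lam)
    (h : ∀ f : G → ℝ, Fs f → ip f (Pop T μ f) ≤ lam * ∑' x, f x ^ 2) (n : ℕ) (g : G) :
    convPow μ n g ≤ lam ^ n := by
  have h2 : ∑' x, (convPow μ n x) ^ 2 ≤ (lam ^ n) ^ 2 := by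
    induction n with
    | zero =>
      rw [tsum_eq_single (1 : G)]
      · simp [convPow]
      · intro b hb; simp [convPow, hb]
    | succ n ih =>
      rw [conv_pop W]
      refine (gap_norm W hl h (conv_fs W n)).trans ?_
      rw [pow_succ lam n, mul_pow, mul_comm]
      gcongr
  have h3 : (convPow μ n g) ^ 2 ≤ ∑' x, (convPow μ n x) ^ 2 :=
    (conv_fs W n).sq.sm.le_tsum g (fun _ _ => sq_nonneg _)
  exact abs_le_of_sq_le_sq' (h3.trans h2) (by positivity) |>.2


structure Sys (μ : G → ℝ) (T : Finset G) (lam : ℝ) : Prop where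
  W : Walk μ T
  l0 : 0 < lam
  l1 : lam < 1
  le : ∀ n g, convPow μ n g ≤ lam ^ n
  gen : Generates T

def gG (μ : G → ℝ) (h : G) : ℝ := ∑' n : ℕ, convPow μ n h

theorem greenFn_eq (μ : G → ℝ) (x y : G) : greenFn μ x y = gG μ (x⁻¹ * y) := rfl

section
variable {μ : G → ℝ} {T : Finset G} {lam : ℝ}

theorem Sys.sm (Y : Sys μ T lam) (h : G) : Summable (fun n => convPow μ n h) :=
  Summable.of_nonneg_of_le (fun n => conv_nonneg Y.W n h) (fun n => Y.le n h)
    (summable_geometric_of_lt_one Y.l0.le Y.l1)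

theorem Sys.inv (Y : Sys μ T lam) (h : G) : gG μ h⁻¹ = gG μ h := by
  unfold gG; simp_rw [conv_inv Y.W]

theorem Sys.comm (Y : Sys μ T lam) (x y : G) : gG μ (x⁻¹ * y) = gG μ (y⁻¹ * x) := by
  rw [← Y.inv]; simp

theorem Sys.conv_list (Y : Sys μ T lam) (l : List G) (hl : ∀ a ∈ l, a ∈ T) :
    0 < convPow μ l.length l.prod := by
  induction l with
  | nil => simp [convPow]
  | cons a l ih =>
    rw [List.length_cons, List.prod_cons, conv_left Y.W]
    have ha : a ∈ T := hl a (by simp)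
    refine lt_of_lt_of_le ?_ (Finset.single_le_sum (f := fun s => μ s * convPow μ l.length (s * (a * l.prod)))
      (fun s _ => mul_nonneg (Y.W.nonneg s) (conv_nonneg Y.W _ _)) (Y.W.inv_mem ha))
    simp only [inv_mul_cancel_left]
    exact mul_pos (Y.W.pos (Y.W.inv_mem ha)) (ih (fun b hb => hl b (List.mem_cons_of_mem _ hb)))

theorem Sys.pos (Y : Sys μ T lam) (h : G) : 0 < gG μ h := by
  obtain ⟨l, hl, rfl⟩ := wl_list Y.gen h
  have := Y.conv_list l (fun a ha => by
      rcases hl a ha with h | h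
      · exact h
      · simpa using Y.W.inv_mem h)
  exact lt_of_lt_of_le this ((Y.sm _).le_tsum _ (fun n _ => conv_nonneg Y.W n _))

def tl (μ : G → ℝ) (n : ℕ) (h : G) : ℝ := ∑' k : ℕ, convPow μ (k + n) h

theorem Sys.tl_sm (Y : Sys μ T lam) (n : ℕ) (h : G) : Summable (fun k => convPow μ (k + n) h) :=
  (summable_nat_add_iff n).2 (Y.sm h)

theorem Sys.tl_succ (Y : Sys μ T lam) (n : ℕ) (h : G) :
    ∑ s ∈ T, μ s * tl μ n (h * s) = tl μ (n + 1) h := by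
  unfold tl
  simp_rw [← tsum_mul_left]
  rw [← Summable.tsum_finsetSum (fun s _ => (Y.tl_sm n (h * s)).mul_left _)]
  congr 1; ext k
  rw [← conv_succ Y.W]; rfl

theorem Sys.tl_le (Y : Sys μ T lam) (n : ℕ) (h : G) : tl μ n h ≤ lam ^ n * (1 - lam)⁻¹ := by
  rw [← tsum_geometric_of_lt_one Y.l0.le Y.l1, ← tsum_mul_left]
  refine Summable.tsum_le_tsum (fun k => ?_) (Y.tl_sm n h)
    ((summable_geometric_of_lt_one Y.l0.le Y.l1).mul_left _)
  rw [← pow_add, add_comm n k]; exact Y.le _ _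

theorem tl_zero (μ : G → ℝ) (h : G) : tl μ 0 h = gG μ h := rfl

theorem Sys.g_eq (Y : Sys μ T lam) (h : G) :
    gG μ h = convPow μ 0 h + ∑ s ∈ T, μ s * gG μ (h * s) := by
  have := Y.tl_succ 0 h
  simp only [tl_zero] at this
  rw [this]
  exact (Y.sm h).tsum_eq_zero_add

theorem Sys.g_ne (Y : Sys μ T lam) {h : G} (hh : h ≠ 1) :
    gG μ h = ∑ s ∈ T, μ s * gG μ (h * s) := by
  rw [Y.g_eq h]; simp [convPow, hh]

theorem Sys.g_super (Y : Sys μ T lam) (w x : G) :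
    Pop T μ (fun x => gG μ (w⁻¹ * x)) x ≤ gG μ (w⁻¹ * x) := by
  rw [Y.g_eq (w⁻¹ * x)]
  unfold Pop
  simp_rw [mul_assoc]
  linarith [conv_nonneg Y.W 0 (w⁻¹ * x)]

theorem Sys.dom (Y : Sys μ T lam) {u : G → ℝ} (hu0 : ∀ x, 0 ≤ u x)
    (hu : ∀ x, Pop T μ u x ≤ u x) (x w : G) : gG μ (w⁻¹ * x) * u w ≤ gG μ 1 * u x := by
  have g1 := Y.pos 1
  set a := u w / gG μ 1 with ha
  have ha0 : 0 ≤ a := div_nonneg (hu0 w) g1.le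
  let φ : G → ℝ := fun x => max (a * gG μ (w⁻¹ * x) - u x) 0
  have hφ0 : ∀ x, 0 ≤ φ x := fun x => le_max_right _ _
  have hφ : ∀ x, φ x ≤ Pop T μ φ x := by
    intro x
    have hp : 0 ≤ Pop T μ φ x := Finset.sum_nonneg (fun s _ => mul_nonneg (Y.W.nonneg s) (hφ0 _))
    refine max_le ?_ hp
    by_cases hx : w⁻¹ * x = 1
    · have : x = w := by rw [inv_mul_eq_one] at hx; exact hx.symm
      subst this
      rw [hx, ha, div_mul_cancel₀ _ g1.ne', sub_self]; exact hp
    · rw [Y.g_ne hx]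
      calc _ ≤ a * ∑ s ∈ T, μ s * gG μ (w⁻¹ * x * s) - Pop T μ u x := by linarith [hu x]
        _ = ∑ s ∈ T, μ s * (a * gG μ (w⁻¹ * (x * s)) - u (x * s)) := by
          unfold Pop
          rw [Finset.mul_sum, ← Finset.sum_sub_distrib]
          refine Finset.sum_congr rfl (fun s _ => ?_)
          rw [mul_assoc]; ring
        _ ≤ _ := by
          refine Finset.sum_le_sum (fun s _ => mul_le_mul_of_nonneg_left (le_max_left _ _) (Y.W.nonneg s))
  have hn : ∀ n x, φ x ≤ a * tl μ n (w⁻¹ * x) := by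
    intro n
    induction n with
    | zero =>
      intro x
      rw [tl_zero]
      refine max_le (by linarith [hu0 x]) (mul_nonneg ha0 (Y.pos _).le)
    | succ n ih =>
      intro x
      refine (hφ x).trans ?_
      rw [← Y.tl_succ, Finset.mul_sum]
      refine Finset.sum_le_sum (fun s _ => ?_)
      calc μ s * φ (x * s) ≤ μ s * (a * tl μ n (w⁻¹ * (x * s))) :=
            mul_le_mul_of_nonneg_left (ih _) (Y.W.nonneg s)
        _ = _ := by rw [mul_assoc]; ring
  have hlim : Tendsto (fun n : ℕ => a * (lam ^ n * (1 - lam)⁻¹)) atTop (𝓝 (a * (0 * (1 - lam)⁻¹))) :=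
    ((tendsto_pow_atTop_nhds_zero_of_lt_one Y.l0.le Y.l1).mul_const _).const_mul _
  have h0 : φ x ≤ a * (0 * (1 - lam)⁻¹) := ge_of_tendsto' hlim (fun n =>
    (hn n x).trans (mul_le_mul_of_nonneg_left (Y.tl_le _ _) ha0))
  have h1 : a * gG μ (w⁻¹ * x) - u x ≤ 0 := (le_max_left _ _).trans (h0.trans (by simp))
  have h2 : u w / gG μ 1 * gG μ (w⁻¹ * x) ≤ u x := by linarith
  rw [div_mul_eq_mul_div, div_le_iff₀ g1] at h2
  linarith

theorem Sys.g3 (Y : Sys μ T lam) (x w z : G) :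
    gG μ (w⁻¹ * x) * gG μ (z⁻¹ * w) ≤ gG μ 1 * gG μ (z⁻¹ * x) :=
  Y.dom (u := fun x => gG μ (z⁻¹ * x)) (fun x => (Y.pos _).le) (Y.g_super z) x w

theorem Sys.harnack (Y : Sys μ T lam) {S : Finset G} (hS : Generates S) :
    ∃ Λ : ℝ, 1 ≤ Λ ∧ (∀ u h, gG μ (u * h) ≤ Λ ^ (wordLength S u) * gG μ h) ∧
      ∀ u h, gG μ (h * u) ≤ Λ ^ (wordLength S u) * gG μ h := by
  set Λ : ℝ := 1 + ∑ s ∈ S, gG μ 1 / gG μ s with hΛ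
  have hterm : ∀ s, 0 ≤ gG μ 1 / gG μ s := fun s => (div_pos (Y.pos _) (Y.pos _)).le
  have hΛ1 : 1 ≤ Λ := by
    have := Finset.sum_nonneg (s := S) (fun s _ => hterm s); linarith
  have hs1 : ∀ s, s ∈ S ∨ s⁻¹ ∈ S → gG μ 1 / gG μ s ≤ Λ := by
    intro s hs
    have : ∀ t ∈ S, gG μ 1 / gG μ t ≤ Λ := fun t ht => by
      have := Finset.single_le_sum (f := fun s => gG μ 1 / gG μ s) (fun s _ => hterm s) ht
      linarith
    rcases hs with h | h
    · exact this s h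
    · rw [← Y.inv s]; exact this _ h
  have hl : ∀ l : List G, (∀ a ∈ l, a ∈ S ∨ a⁻¹ ∈ S) → ∀ h, gG μ (l.prod * h) ≤ Λ ^ l.length * gG μ h := by
    intro l
    induction l with
    | nil => simp
    | cons a l ih =>
      intro hl h
      have h1 := ih (fun b hb => hl b (List.mem_cons_of_mem _ hb)) h
      have h2 := Y.g3 (l.prod * h) a⁻¹ 1
      simp only [inv_inv, inv_one, one_mul] at h2
      rw [Y.inv] at h2
      have h3 : gG μ (a * (l.prod * h)) ≤ gG μ 1 / gG μ a * gG μ (l.prod * h) := by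
        rw [div_mul_eq_mul_div, le_div_iff₀ (Y.pos a)]; linarith
      rw [List.prod_cons, List.length_cons, pow_succ, mul_assoc]
      calc _ ≤ Λ * gG μ (l.prod * h) := h3.trans (mul_le_mul_of_nonneg_right (hs1 a (hl a (by simp))) (Y.pos _).le)
        _ ≤ Λ * (Λ ^ l.length * gG μ h) := by gcongr
        _ = _ := by ring
  have hleft : ∀ u h, gG μ (u * h) ≤ Λ ^ (wordLength S u) * gG μ h := by
    intro u h
    obtain ⟨l, hlen, hmem, hp⟩ := wl_spec hS u
    have := hl l hmem h
    rwa [hp, hlen] at this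
  refine ⟨Λ, hΛ1, hleft, fun u h => ?_⟩
  have := hleft u⁻¹ h⁻¹
  rwa [← mul_inv_rev, Y.inv, Y.inv, wl_inv hS] at this

theorem conv_zero (W : Walk μ T) {S : Finset G} (hS : Generates S) {R0 : ℕ}
    (hR : ∀ s ∈ T, wordLength S s ≤ R0) (n : ℕ) (h : G) (hh : n * R0 < wordLength S h) :
    convPow μ n h = 0 := by
  induction n generalizing h with
  | zero =>
    have : h ≠ 1 := by rintro rfl; rw [wl_one] at hh; simp at hh
    simp [convPow, this]
  | succ n ih =>
    rw [conv_succ W]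
    refine Finset.sum_eq_zero (fun s hs => ?_)
    rw [ih, mul_zero]
    have h1 := wl_mul hS (h * s) s⁻¹
    rw [mul_inv_cancel_right, wl_inv hS] at h1
    have := hR s hs
    nlinarith

theorem exists_R0 (T S : Finset G) : ∃ R0 : ℕ, ∀ s ∈ T, wordLength S s ≤ R0 :=
  ⟨T.sup (wordLength S), fun _ hs => Finset.le_sup hs⟩

theorem Sys.decay (Y : Sys μ T lam) {S : Finset G} (hS : Generates S) {η : ℝ} (hη : 0 < η) :
    ∃ N : ℕ, ∀ h, N ≤ wordLength S h → gG μ h ≤ η := by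
  obtain ⟨R0, hR⟩ := exists_R0 T S
  have hlim : Tendsto (fun n : ℕ => (lam ^ n * (1 - lam)⁻¹)) atTop (𝓝 (0 * (1 - lam)⁻¹)) :=
    ((tendsto_pow_atTop_nhds_zero_of_lt_one Y.l0.le Y.l1).mul_const _)
  rw [zero_mul] at hlim
  obtain ⟨n, hn⟩ := (hlim.eventually (gt_mem_nhds hη)).exists
  refine ⟨n * R0 + 1, fun h hh => ?_⟩
  have : gG μ h = tl μ n h := by
    unfold gG tl
    rw [← (Y.sm h).sum_add_tsum_nat_add n, Finset.sum_eq_zero, zero_add]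
    intro i hi
    refine conv_zero Y.W hS hR i h ?_
    have : i ≤ n := (Finset.mem_range.1 hi).le
    nlinarith
  rw [this]
  exact (Y.tl_le n h).trans hn.le
end


open scoped Classical in
def rho (S : Finset G) (ε : ℝ) (x y : G) : ℝ :=
  if x = y then 0 else Real.exp (-ε * gromov (wordDist S) 1 x y)

theorem rho_nonneg (S : Finset G) (ε : ℝ) (x y : G) : 0 ≤ rho S ε x y := by
  unfold rho; split_ifs
  · exact le_rfl
  · exact (Real.exp_pos _).le

theorem rho_three {S : Finset G} (hS : Generates S) {δ ε : ℝ} (hε : 0 < ε) (hδ0 : 0 ≤ δ)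
    (hδ : IsHyperbolicWith (wordDist S) δ) (x y z : G) :
    rho S ε x z ≤ Real.exp (ε * δ) * max (rho S ε x y) (rho S ε y z) := by
  have hK : 1 ≤ Real.exp (ε * δ) := Real.one_le_exp (by positivity)
  have hm : 0 ≤ max (rho S ε x y) (rho S ε y z) := le_max_of_le_left (rho_nonneg S ε x y)
  by_cases hxy : x = y
  · subst hxy
    exact (le_max_right (rho S ε x x) _).trans (le_mul_of_one_le_left hm hK)
  by_cases hyz : y = z
  · subst hyz
    exact (le_max_left _ (rho S ε y y)).trans (le_mul_of_one_le_left hm hK)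
  by_cases hxz : x = z
  · have : rho S ε x z = 0 := by simp [rho, hxz]
    rw [this]; positivity
  simp only [rho, if_neg hxy, if_neg hyz, if_neg hxz]
  have h := hδ 1 y x z
  rw [gr_symm hS 1 y x] at h
  rcases le_total (gromov (wordDist S) 1 x y) (gromov (wordDist S) 1 y z) with h1 | h1
  · rw [min_eq_left h1] at h
    calc _ ≤ Real.exp (ε * δ) * Real.exp (-ε * gromov (wordDist S) 1 x y) := by
          rw [← Real.exp_add]; apply Real.exp_le_exp.2; nlinarith
      _ ≤ _ := by gcongr; exact le_max_left _ _
  · rw [min_eq_right h1] at h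
    calc _ ≤ Real.exp (ε * δ) * Real.exp (-ε * gromov (wordDist S) 1 y z) := by
          rw [← Real.exp_add]; apply Real.exp_le_exp.2; nlinarith
      _ ≤ _ := by gcongr; exact le_max_right _ _

theorem rho_chain {S : Finset G} (hS : Generates S) {δ ε : ℝ} (hε : 0 < ε) (hδ0 : 0 ≤ δ)
    (hεδ : Real.exp (ε * δ) ^ 2 ≤ 2)
    (hδ : IsHyperbolicWith (wordDist S) δ) (p : ℕ → G) (N : ℕ) :
    rho S ε (p 0) (p N) ≤ 2 * ∑ i ∈ Finset.range N, rho S ε (p i) (p (i + 1)) := by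
  let d : G → G → NNReal := fun x y => ⟨rho S ε x y, rho_nonneg S ε x y⟩
  have ds : ∀ x, d x x = 0 := fun x => by
    apply NNReal.coe_injective; show rho S ε x x = 0; simp [rho]
  have dc : ∀ x y, d x y = d y x := fun x y => by
    apply NNReal.coe_injective; show rho S ε x y = rho S ε y x
    unfold rho; rw [gr_symm hS]
    by_cases h : x = y
    · simp [h]
    · rw [if_neg h, if_neg (Ne.symm h)]
  have hK : 1 ≤ Real.exp (ε * δ) := Real.one_le_exp (by positivity)
  have h4 : ∀ x₁ x₂ x₃ x₄, d x₁ x₄ ≤ 2 * max (d x₁ x₂) (max (d x₂ x₃) (d x₃ x₄)) := by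
    intro x₁ x₂ x₃ x₄
    rw [← NNReal.coe_le_coe]
    push_cast
    show rho S ε x₁ x₄ ≤ 2 * max (rho S ε x₁ x₂) (max (rho S ε x₂ x₃) (rho S ε x₃ x₄))
    have h1 := rho_three hS hε hδ0 hδ x₁ x₂ x₄
    have h2 := rho_three hS hε hδ0 hδ x₂ x₃ x₄
    set K := Real.exp (ε * δ)
    set m1 := max (rho S ε x₂ x₃) (rho S ε x₃ x₄)
    have hm1 : 0 ≤ m1 := le_max_of_le_left (rho_nonneg S ε _ _)
    have hr := rho_nonneg S ε x₁ x₂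
    have hM := le_max_of_le_left (b := rho S ε x₁ x₂) (c := m1) hr
    refine h1.trans ?_
    calc _ ≤ K * (K * max (rho S ε x₁ x₂) m1) := by
          gcongr
          refine max_le ?_ ?_
          · exact (le_max_left _ m1).trans (le_mul_of_one_le_left hM hK)
          · refine h2.trans ?_
            gcongr; exact le_max_right _ _
      _ = K ^ 2 * max (rho S ε x₁ x₂) m1 := by ring
      _ ≤ _ := by gcongr
  let I := PseudoMetricSpace.ofPreNNDist d ds dc
  have A1 : rho S ε (p 0) (p N) ≤ 2 * dist (p 0) (p N) :=
    PseudoMetricSpace.le_two_mul_dist_ofPreNNDist d ds dc h4 _ _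
  have A2 : ∀ x y : G, dist x y ≤ rho S ε x y := PseudoMetricSpace.dist_ofPreNNDist_le d ds dc
  refine A1.trans ?_
  gcongr
  exact (dist_le_range_sum_dist p N).trans (Finset.sum_le_sum (fun i _ => A2 _ _))

theorem chain {S : Finset G} (hS : Generates S) {δ ε : ℝ} (hε : 0 < ε) (hδ0 : 0 ≤ δ)
    (hεδ : Real.exp (ε * δ) ^ 2 ≤ 2)
    (hδ : IsHyperbolicWith (wordDist S) δ) (p : ℕ → G) (N R0 : ℕ) (c : ℝ)
    (hp : ∀ i, i < N → wordDist S (p i) (p (i + 1)) ≤ R0)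
    (hc : gromov (wordDist S) 1 (p 0) (p N) ≤ c) :
    Real.exp (-ε * c) ≤ 2 * Real.exp (ε * R0) *
      ∑ i ∈ Finset.range (N + 1), Real.exp (-ε * wordLength S (p i)) := by
  have hR1 : 1 ≤ Real.exp (ε * R0) := Real.one_le_exp (by positivity)
  by_cases h : p 0 = p N
  · have h1 : Real.exp (-ε * wordLength S (p 0)) ≤
        ∑ i ∈ Finset.range (N + 1), Real.exp (-ε * wordLength S (p i)) :=
      Finset.single_le_sum (f := fun i => Real.exp (-ε * wordLength S (p i)))
        (fun i _ => (Real.exp_pos _).le) (by simp)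
    have h2 : gromov (wordDist S) 1 (p 0) (p N) = wordLength S (p 0) := by
      rw [← h]; simp [gromov, wd_self, wd_one' hS]
    have h3 : Real.exp (-ε * c) ≤ Real.exp (-ε * wordLength S (p 0)) := by
      apply Real.exp_le_exp.2; nlinarith
    have h4 : 0 < Real.exp (-ε * wordLength S (p 0)) := Real.exp_pos _
    nlinarith
  · have h1 := rho_chain hS hε hδ0 hεδ hδ p N
    have h2 : Real.exp (-ε * c) ≤ rho S ε (p 0) (p N) := by
      simp only [rho, if_neg h]; apply Real.exp_le_exp.2; nlinarith
    refine h2.trans (h1.trans ?_)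
    rw [mul_assoc]
    gcongr
    rw [Finset.mul_sum]
    refine (Finset.sum_le_sum (g := fun i => Real.exp (ε * R0) * Real.exp (-ε * wordLength S (p i)))
      (fun i hi => ?_)).trans (Finset.sum_le_sum_of_subset_of_nonneg
        (Finset.range_mono (Nat.le_succ N)) (fun i _ _ => by positivity))
    have hd := hp i (Finset.mem_range.1 hi)
    have : rho S ε (p i) (p (i + 1)) ≤ Real.exp (-ε * gromov (wordDist S) 1 (p i) (p (i + 1))) := by
      unfold rho; split_ifs
      · exact (Real.exp_pos _).le
      · exact le_rfl
    refine this.trans ?_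
    rw [← Real.exp_add]
    apply Real.exp_le_exp.2
    have ht := wd_tri hS (p i) (p (i + 1)) 1
    have e : (wordLength S (p i) : ℝ) - R0 ≤ gromov (wordDist S) 1 (p i) (p (i + 1)) := by
      rw [← wd_one' hS]; unfold gromov; linarith
    nlinarith

theorem count {ε : ℝ} (hε : 0 < ε) (K : ℝ) (hK : 0 < K) (A : ℕ) :
    ∃ n : ℕ, ∀ (I : Finset ℕ) (D : ℕ → ℕ), K ≤ ∑ i ∈ I, Real.exp (-ε * D i) →
      ∃ m, A * (m - n) < (I.filter (fun i => D i ≤ m)).card := by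
  set q := Real.exp (-ε) with hq
  have q0 : 0 < q := Real.exp_pos _
  have q1 : q < 1 := by rw [hq, ← Real.exp_zero]; exact Real.exp_lt_exp.2 (by linarith)
  have hsm : Summable (fun k : ℕ => (k : ℝ) * q ^ k) := by
    have := summable_pow_mul_geometric_of_norm_lt_one 1 (r := q) (by rwa [Real.norm_of_nonneg q0.le])
    simpa using this
  set Z := ∑' k : ℕ, (k : ℝ) * q ^ k
  have hlim : Tendsto (fun n : ℕ => A * (q ^ n * Z)) atTop (𝓝 (A * (0 * Z))) :=
    ((tendsto_pow_atTop_nhds_zero_of_lt_one q0.le q1).mul_const _).const_mul _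
  rw [zero_mul, mul_zero] at hlim
  obtain ⟨n, hn⟩ := (hlim.eventually (gt_mem_nhds hK)).exists
  refine ⟨n, fun I D hI => ?_⟩
  by_contra! hcon
  have hs1 : ∀ i, Summable (fun m : ℕ => if D i ≤ m then q ^ m else 0) := fun i =>
    Summable.of_nonneg_of_le (fun m => by split_ifs <;> positivity)
      (fun m => by split_ifs; exacts [le_rfl, by positivity]) (summable_geometric_of_lt_one q0.le q1)
  have h1 : ∀ i, Real.exp (-ε * D i) ≤ ∑' m : ℕ, if D i ≤ m then q ^ m else 0 := by
    intro i
    have := (hs1 i).le_tsum (D i) (fun m _ => by split_ifs <;> positivity)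
    rw [if_pos le_rfl] at this
    refine le_trans (le_of_eq ?_) this
    rw [hq, ← Real.exp_nat_mul]; congr 1; ring
  have hs2 : Summable (fun m : ℕ => (A : ℝ) * (((m - n : ℕ) : ℝ) * q ^ m)) := by
    refine Summable.mul_left _ (Summable.of_nonneg_of_le (fun m => by positivity) (fun m => ?_) hsm)
    gcongr; omega
  have h2 : ∑ i ∈ I, ∑' m : ℕ, (if D i ≤ m then q ^ m else 0) ≤
      ∑' m : ℕ, (A : ℝ) * (((m - n : ℕ) : ℝ) * q ^ m) := by
    rw [← Summable.tsum_finsetSum (fun i _ => hs1 i)]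
    refine Summable.tsum_le_tsum (fun m => ?_) (summable_sum (fun i _ => hs1 i)) hs2
    rw [← Finset.sum_filter, Finset.sum_const, nsmul_eq_mul, ← mul_assoc]
    gcongr
    exact_mod_cast hcon m
  have h3 : ∑' m : ℕ, (A : ℝ) * (((m - n : ℕ) : ℝ) * q ^ m) = A * (q ^ n * Z) := by
    rw [← hs2.sum_add_tsum_nat_add n, Finset.sum_eq_zero, zero_add, tsum_mul_left]
    · congr 1
      show _ = q ^ n * ∑' k : ℕ, (k : ℝ) * q ^ k
      rw [← tsum_mul_left]
      refine tsum_congr (fun k => ?_)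
      rw [Nat.add_sub_cancel, pow_add]; ring
    · intro i hi
      have : i - n = 0 := by have := Finset.mem_range.1 hi; omega
      simp [this]
  have := Finset.sum_le_sum (s := I) (fun i _ => h1 i)
  linarith

theorem exists_eps {δ : ℝ} (hδ0 : 0 ≤ δ) : ∃ ε : ℝ, 0 < ε ∧ Real.exp (ε * δ) ^ 2 ≤ 2 := by
  refine ⟨Real.log 2 / (2 * (δ + 1)), by positivity, ?_⟩
  rw [← Real.exp_nat_mul]
  calc _ ≤ Real.exp (Real.log 2) := by
        apply Real.exp_le_exp.2
        have : (0:ℝ) < Real.log 2 := Real.log_pos (by norm_num)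
        rw [div_mul_eq_mul_div, ← mul_div_assoc, div_le_iff₀ (by positivity)]
        push_cast; nlinarith
    _ = 2 := Real.exp_log (by norm_num)

theorem path_split {S : Finset G} (hS : Generates S) {δ : ℝ} (hδ0 : 0 ≤ δ)
    (hδ : IsHyperbolicWith (wordDist S) δ) (c : ℝ) (A R0 : ℕ) :
    ∃ n : ℕ, ∀ (a : G) (l : List G), (∀ s ∈ l, wordLength S s ≤ R0) →
      gromov (wordDist S) 1 a (a * l.prod) ≤ c →
      ∃ (m : ℕ) (l1 l2 l3 : List G), l1 ++ l2 ++ l3 = l ∧ wordLength S (a * l1.prod) ≤ m ∧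
        wordLength S (a * l1.prod * l2.prod) ≤ m ∧ A * (m - n) ≤ l2.length := by
  obtain ⟨ε, hε, hεδ⟩ := exists_eps hδ0
  obtain ⟨n, hn⟩ := count hε (Real.exp (-ε * c) / (2 * Real.exp (ε * R0))) (by positivity) A
  refine ⟨n, fun a l hl hc => ?_⟩
  have hch := chain hS hε hδ0 hεδ hδ (fun i => a * (l.take i).prod) l.length R0 c (by
    intro i hi
    have : l.take (i + 1) = l.take i ++ [l[i]] := by simp
    simp only [this, wd_left, List.prod_append, List.prod_singleton]
    have e := wd_left S (l.take i).prod 1 l[i]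
    rw [mul_one] at e
    rw [e, wd_one]
    exact_mod_cast hl _ (List.getElem_mem hi)) (by simpa using hc)
  obtain ⟨m, hm⟩ := hn (Finset.range (l.length + 1)) (fun i => wordLength S (a * (l.take i).prod)) (by
    rw [div_le_iff₀ (by positivity)]; linarith)
  set J := (Finset.range (l.length + 1)).filter (fun i => wordLength S (a * (l.take i).prod) ≤ m) with hJ
  have hne : J.Nonempty := Finset.card_pos.1 (by omega)
  have hi := J.min'_mem hne
  have hj := J.max'_mem hne
  have hcard : J.card ≤ J.max' hne + 1 - J.min' hne := by
    rw [← Nat.card_Icc]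
    exact Finset.card_le_card (fun k hk => Finset.mem_Icc.2 ⟨J.min'_le k hk, J.le_max' k hk⟩)
  have hij := J.min'_le _ hj
  set i := J.min' hne
  set j := J.max' hne
  rw [hJ, Finset.mem_filter, Finset.mem_range] at hi hj
  have e1 : l.take i ++ (l.take j).drop i = l.take j := by
    conv_rhs => rw [← List.take_append_drop i (l.take j)]
    rw [List.take_take, min_eq_left hij]
  refine ⟨m, l.take i, (l.take j).drop i, l.drop j, ?_, hi.2, ?_, ?_⟩
  · rw [e1, List.take_append_drop]
  · rw [mul_assoc, ← List.prod_append, e1]; exact hj.2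
  · rw [List.length_drop, List.length_take]; omega


def wt (μ : G → ℝ) (l : List G) : ℝ≥0∞ := (l.map (fun s => ENNReal.ofReal (μ s))).prod

theorem wt_cons (μ : G → ℝ) (s : G) (l : List G) : wt μ (s :: l) = ENNReal.ofReal (μ s) * wt μ l := by
  simp [wt]

theorem wt_append (μ : G → ℝ) (l m : List G) : wt μ (l ++ m) = wt μ l * wt μ m := by
  simp [wt]

theorem wt_mem {μ : G → ℝ} {T : Finset G} (W : Walk μ T) {l : List G} (h : wt μ l ≠ 0) :
    ∀ s ∈ l, s ∈ T := by
  intro s hs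
  rw [W.mem]
  intro h0
  apply h
  unfold wt
  apply List.prod_eq_zero
  rw [List.mem_map]
  exact ⟨s, hs, by simp [h0]⟩

open scoped Classical in
def fib (μ : G → ℝ) (L : ℕ) (h : G) (l : List G) : ℝ≥0∞ :=
  if L ≤ l.length ∧ l.prod = h then wt μ l else 0

open scoped Classical in
def fibn (μ : G → ℝ) (n : ℕ) (h : G) (l : List G) : ℝ≥0∞ :=
  if l.length = n ∧ l.prod = h then wt μ l else 0

theorem fibn_sum {μ : G → ℝ} {T : Finset G} (W : Walk μ T) (n : ℕ) (h : G) :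
    ∑' l, fibn μ n h l = ENNReal.ofReal (convPow μ n h) := by
  induction n generalizing h with
  | zero =>
    rw [tsum_eq_single ([] : List G)]
    · by_cases h1 : h = 1
      · subst h1; simp [fibn, wt, convPow]
      · have : ¬ (1 = h) := fun e => h1 e.symm
        simp [fibn, convPow, h1, this]
    · intro l hl
      have : l.length ≠ 0 := fun e => hl (List.length_eq_zero_iff.1 e)
      simp [fibn, this]
  | succ n ih =>
    have hinj : Function.Injective (fun p : G × List G => p.1 :: p.2) := by
      rintro ⟨a, l⟩ ⟨b, m⟩ e; simpa using e
    rw [← hinj.tsum_eq]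
    · rw [ENNReal.tsum_prod (f := fun s l => fibn μ (n + 1) h (s :: l))]
      have e1 : ∀ s (l : List G), fibn μ (n + 1) h (s :: l) =
          ENNReal.ofReal (μ s) * fibn μ n (s⁻¹ * h) l := by
        intro s l
        unfold fibn
        rw [wt_cons, List.length_cons, List.prod_cons]
        by_cases hc : l.length = n ∧ l.prod = s⁻¹ * h
        · rw [if_pos hc, if_pos ⟨by rw [hc.1], by rw [hc.2]; group⟩]
        · rw [if_neg hc, if_neg, mul_zero]
          rintro ⟨a1, a2⟩
          exact hc ⟨by omega, by rw [← a2]; group⟩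
      simp only [e1]
      simp_rw [ENNReal.tsum_mul_left, ih]
      rw [tsum_eq_sum (s := T)]
      · rw [conv_left W, ← W.sum_inv, ENNReal.ofReal_sum_of_nonneg]
        · refine Finset.sum_congr rfl (fun s _ => ?_)
          rw [ENNReal.ofReal_mul (W.nonneg s)]
        · intro s _; exact mul_nonneg (W.nonneg s) (conv_nonneg W _ _)
      · intro s hs
        have : μ s = 0 := by
          by_contra h; exact hs ((W.mem s).2 h)
        simp [this]
    · intro l hl
      cases l with
      | nil => exact absurd (by simp [fibn]) hl
      | cons a l => exact ⟨(a, l), rfl⟩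

theorem fib_sum {μ : G → ℝ} {T : Finset G} {lam : ℝ} (Y : Sys μ T lam) (L : ℕ) (h : G) :
    ∑' l, fib μ L h l = ENNReal.ofReal (tl μ L h) := by
  have e : ∀ l, fib μ L h l = ∑' k : ℕ, fibn μ (k + L) h l := by
    intro l
    by_cases hc : L ≤ l.length
    · rw [tsum_eq_single (l.length - L)]
      · unfold fib fibn
        have : l.length = l.length - L + L := by omega
        by_cases hp : l.prod = h
        · rw [if_pos ⟨hc, hp⟩, if_pos ⟨this, hp⟩]
        · rw [if_neg (fun e => hp e.2), if_neg (fun e => hp e.2)]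
      · intro k hk
        unfold fibn
        rw [if_neg]
        rintro ⟨h1, -⟩; omega
    · have : ∀ k, fibn μ (k + L) h l = 0 := by
        intro k; unfold fibn; rw [if_neg]; rintro ⟨h1, -⟩; omega
      simp [this, fib, hc]
  simp_rw [e]
  rw [ENNReal.tsum_comm]
  simp_rw [fibn_sum Y.W]
  unfold tl
  rw [ENNReal.ofReal_tsum_of_nonneg (fun k => conv_nonneg Y.W _ _) (Y.tl_sm L h)]

theorem fib_zero_sum {μ : G → ℝ} {T : Finset G} {lam : ℝ} (Y : Sys μ T lam) (h : G) :
    ∑' l, fib μ 0 h l = ENNReal.ofReal (gG μ h) := fib_sum Y 0 h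

theorem path_bound {μ : G → ℝ} {T : Finset G} {lam : ℝ} (Y : Sys μ T lam) {S : Finset G}
    (Bf : ℕ → Finset G) (hB : ∀ m g, g ∈ Bf m ↔ wordLength S g ≤ m) (A n : ℕ) (a b : G)
    (hsp : ∀ l : List G, wt μ l ≠ 0 → a * l.prod = b →
      ∃ (m : ℕ) (l1 l2 l3 : List G), l1 ++ l2 ++ l3 = l ∧ wordLength S (a * l1.prod) ≤ m ∧
        wordLength S (a * l1.prod * l2.prod) ≤ m ∧ A * (m - n) ≤ l2.length) :
    ENNReal.ofReal (gG μ (a⁻¹ * b)) ≤ ∑' m : ℕ, ∑ u ∈ Bf m, ∑ v ∈ Bf m,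
      ENNReal.ofReal (gG μ (a⁻¹ * u)) * ENNReal.ofReal (tl μ (A * (m - n)) (u⁻¹ * v)) *
        ENNReal.ofReal (gG μ (v⁻¹ * b)) := by
  classical
  let F : ℕ → G → G → List G → List G → List G → ℝ≥0∞ := fun m u v l1 l2 l3 =>
    fib μ 0 (a⁻¹ * u) l1 * fib μ (A * (m - n)) (u⁻¹ * v) l2 * fib μ 0 (v⁻¹ * b) l3
  let H : ℕ → List G → List G → List G → ℝ≥0∞ := fun m l1 l2 l3 =>
    ∑ u ∈ Bf m, ∑ v ∈ Bf m, F m u v l1 l2 l3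
  have hpt : ∀ l, fib μ 0 (a⁻¹ * b) l ≤ ∑' m, ∑' l1, ∑' l2, ∑' l3,
      if l = l1 ++ l2 ++ l3 then H m l1 l2 l3 else 0 := by
    intro l
    by_cases h0 : fib μ 0 (a⁻¹ * b) l = 0
    · rw [h0]; exact zero_le
    have hp : l.prod = a⁻¹ * b := by
      by_contra hc; exact h0 (by simp [fib, hc])
    have hw : fib μ 0 (a⁻¹ * b) l = wt μ l := by simp [fib, hp]
    obtain ⟨m, l1, l2, l3, hl, h1, h2, h3⟩ := hsp l (by rwa [hw] at h0) (by rw [hp]; group)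
    have e : wt μ l ≤ if l = l1 ++ l2 ++ l3 then H m l1 l2 l3 else 0 := by
      rw [if_pos hl.symm]
      set u := a * l1.prod with hu
      set v := u * l2.prod with hv
      have hp3 : l3.prod = v⁻¹ * b := by
        have : l1.prod * l2.prod * l3.prod = a⁻¹ * b := by
          rw [← hp, ← hl]; simp [mul_assoc]
        rw [hv, hu]
        have h5 : l3.prod = (l1.prod * l2.prod)⁻¹ * (a⁻¹ * b) := by rw [← this]; group
        rw [h5]; group
      calc wt μ l = F m u v l1 l2 l3 := by
            show _ = fib μ 0 (a⁻¹ * u) l1 * fib μ (A * (m - n)) (u⁻¹ * v) l2 * fib μ 0 (v⁻¹ * b) l3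
            have f1 : fib μ 0 (a⁻¹ * u) l1 = wt μ l1 := by
              unfold fib; rw [if_pos ⟨Nat.zero_le _, by rw [hu]; group⟩]
            have f2 : fib μ (A * (m - n)) (u⁻¹ * v) l2 = wt μ l2 := by
              unfold fib; rw [if_pos ⟨h3, by rw [hv]; group⟩]
            have f3 : fib μ 0 (v⁻¹ * b) l3 = wt μ l3 := by
              unfold fib; rw [if_pos ⟨Nat.zero_le _, hp3⟩]
            rw [f1, f2, f3, ← hl, wt_append, wt_append]
        _ ≤ ∑ v ∈ Bf m, F m u v l1 l2 l3 :=
            Finset.single_le_sum (f := fun v => F m u v l1 l2 l3) (fun _ _ => zero_le) ((hB m v).2 h2)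
        _ ≤ _ := Finset.single_le_sum (f := fun u => ∑ v ∈ Bf m, F m u v l1 l2 l3)
            (fun _ _ => zero_le) ((hB m u).2 h1)
    rw [hw]
    refine e.trans ?_
    refine le_trans ?_ (ENNReal.le_tsum m)
    refine le_trans ?_ (ENNReal.le_tsum l1)
    refine le_trans ?_ (ENNReal.le_tsum l2)
    exact ENNReal.le_tsum (f := fun l3 => if l = l1 ++ l2 ++ l3 then H m l1 l2 l3 else 0) l3
  rw [← fib_zero_sum Y]
  refine (ENNReal.tsum_le_tsum hpt).trans (le_of_eq ?_)
  rw [ENNReal.tsum_comm]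
  refine tsum_congr (fun m => ?_)
  have : ∀ l1, ∑' l, ∑' l2, ∑' l3, (if l = l1 ++ l2 ++ l3 then H m l1 l2 l3 else 0) =
      ∑' l2, ∑' l3, H m l1 l2 l3 := by
    intro l1
    rw [ENNReal.tsum_comm]
    refine tsum_congr (fun l2 => ?_)
    rw [ENNReal.tsum_comm]
    refine tsum_congr (fun l3 => ?_)
    rw [tsum_ite_eq]
  rw [ENNReal.tsum_comm]
  simp_rw [this]
  simp only [H]
  simp_rw [Summable.tsum_finsetSum (fun _ _ => ENNReal.summable)]
  refine Finset.sum_congr rfl (fun u _ => Finset.sum_congr rfl (fun v _ => ?_))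
  simp only [F]
  simp_rw [ENNReal.tsum_mul_left, ENNReal.tsum_mul_right, ENNReal.tsum_mul_left,
    ENNReal.tsum_mul_right]
  rw [fib_zero_sum Y, fib_zero_sum Y, fib_sum Y]

theorem ancona {μ : G → ℝ} {T : Finset G} {lam : ℝ} (Y : Sys μ T lam) {S : Finset G}
    (hS : Generates S) {δ : ℝ} (hδ0 : 0 ≤ δ) (hδ : IsHyperbolicWith (wordDist S) δ) (c : ℝ) :
    ∃ C : ℝ, 0 < C ∧ ∀ a b, gromov (wordDist S) 1 a b ≤ c →
      gG μ (a⁻¹ * b) ≤ C * (gG μ a * gG μ b) := by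
  obtain ⟨R0, hR0⟩ := exists_R0 T S
  obtain ⟨β, hβ1, hβ⟩ := ball_exists hS
  choose Bf hB hBc using hβ
  obtain ⟨Λ, hΛ1, hΛl, hΛr⟩ := Y.harnack hS
  have hβ1' : (1 : ℝ) ≤ β := by exact_mod_cast hβ1
  set Q : ℝ := (β * Λ) ^ 2 with hQ
  have hβΛ : (1 : ℝ) ≤ β * Λ := one_le_mul_of_one_le_of_one_le hβ1' hΛ1
  have hQ1 : 1 ≤ Q := one_le_pow₀ hβΛ
  have hQ0 : 0 < Q := by linarith
  obtain ⟨A, hA⟩ : ∃ A : ℕ, Q * lam ^ A ≤ 1 / 2 := by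
    have hlim : Tendsto (fun n : ℕ => Q * lam ^ n) atTop (𝓝 (Q * 0)) :=
      (tendsto_pow_atTop_nhds_zero_of_lt_one Y.l0.le Y.l1).const_mul _
    rw [mul_zero] at hlim
    obtain ⟨A, hA⟩ := (hlim.eventually (gt_mem_nhds (by norm_num : (0:ℝ) < 1 / 2))).exists
    exact ⟨A, hA.le⟩
  obtain ⟨n, hn⟩ := path_split hS hδ0 hδ c A R0
  have hl1 : 0 < 1 - lam := by linarith [Y.l1]
  set κ := (1 - lam)⁻¹ with hκ
  have hκ0 : 0 < κ := inv_pos.2 hl1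
  refine ⟨κ * (2 * Q) ^ n * 2, by positivity, fun a b hab => ?_⟩
  have hb := path_bound Y (S := S) Bf hB A n a b (fun l hw hl =>
    hn a l (fun s hs => hR0 s (wt_mem Y.W hw s hs)) (by rw [hl]; exact hab))
  have ga := Y.pos a
  have gb := Y.pos b
  have hterm : ∀ m : ℕ, ∑ u ∈ Bf m, ∑ v ∈ Bf m,
      ENNReal.ofReal (gG μ (a⁻¹ * u)) * ENNReal.ofReal (tl μ (A * (m - n)) (u⁻¹ * v)) *
        ENNReal.ofReal (gG μ (v⁻¹ * b)) ≤
      ENNReal.ofReal (κ * (2 * Q) ^ n * (gG μ a * gG μ b) * (1 / 2) ^ m) := by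
    intro m
    set t := lam ^ (A * (m - n)) * κ with ht
    have ht0 : 0 ≤ t := mul_nonneg (pow_nonneg Y.l0.le _) hκ0.le
    have h1 : ∀ u ∈ Bf m, ∀ v ∈ Bf m,
        ENNReal.ofReal (gG μ (a⁻¹ * u)) * ENNReal.ofReal (tl μ (A * (m - n)) (u⁻¹ * v)) *
        ENNReal.ofReal (gG μ (v⁻¹ * b)) ≤
        ENNReal.ofReal ((Λ ^ m * gG μ a) * t * (Λ ^ m * gG μ b)) := by
      intro u hu v hv
      rw [ENNReal.ofReal_mul (by positivity), ENNReal.ofReal_mul (by positivity)]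
      have hu' := (hB m u).1 hu
      have hv' := (hB m v).1 hv
      refine mul_le_mul' (mul_le_mul' ?_ ?_) ?_
      · apply ENNReal.ofReal_le_ofReal
        have := hΛr u a⁻¹
        rw [Y.inv] at this
        exact this.trans (by gcongr)
      · exact ENNReal.ofReal_le_ofReal (Y.tl_le _ _)
      · apply ENNReal.ofReal_le_ofReal
        have := hΛl v⁻¹ b
        rw [wl_inv hS] at this
        exact this.trans (by gcongr)
    refine (Finset.sum_le_sum (fun u hu => Finset.sum_le_sum (fun v hv => h1 u hu v hv))).trans ?_
    rw [Finset.sum_const, Finset.sum_const, ← mul_smul, nsmul_eq_mul, ← ENNReal.ofReal_natCast,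
      ← ENNReal.ofReal_mul (by positivity)]
    apply ENNReal.ofReal_le_ofReal
    have hc : ((Bf m).card : ℝ) ≤ (β : ℝ) ^ m := by exact_mod_cast hBc m
    have hQm : Q ^ m * lam ^ (A * (m - n)) ≤ (2 * Q) ^ n * (1 / 2) ^ m := by
      rcases le_total n m with h | h
      · obtain ⟨k, rfl⟩ := Nat.exists_eq_add_of_le h
        rw [Nat.add_sub_cancel_left, pow_mul, pow_add, mul_assoc, ← mul_pow, mul_pow 2 Q, pow_add]
        have : (Q * lam ^ A) ^ k ≤ (1 / 2) ^ k :=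
          pow_le_pow_left₀ (mul_nonneg hQ0.le (pow_nonneg Y.l0.le _)) hA _
        calc _ ≤ Q ^ n * (1 / 2) ^ k := by gcongr
          _ = _ := by
            have : (2:ℝ) ^ n * (1 / 2) ^ n = 1 := by rw [← mul_pow]; norm_num
            calc _ = ((2:ℝ) ^ n * (1 / 2) ^ n) * (Q ^ n * (1 / 2) ^ k) := by rw [this, one_mul]
              _ = _ := by ring
      · rw [Nat.sub_eq_zero_of_le h, mul_zero, pow_zero, mul_one]
        obtain ⟨k, rfl⟩ := Nat.exists_eq_add_of_le h
        have : (2:ℝ) ^ m * (1 / 2) ^ m = 1 := by rw [← mul_pow]; norm_num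
        have h2 : (1:ℝ) ≤ (2 * Q) ^ k := one_le_pow₀ (by linarith)
        calc Q ^ m ≤ Q ^ m * (2 * Q) ^ k := le_mul_of_one_le_right (by positivity) h2
          _ = ((2:ℝ) ^ m * (1 / 2) ^ m) * (Q ^ m * (2 * Q) ^ k) := by rw [this, one_mul]
          _ = _ := by rw [pow_add, mul_pow 2 Q m]; ring
    push_cast
    calc _ ≤ ((β : ℝ) ^ m * β ^ m) * ((Λ ^ m * gG μ a) * t * (Λ ^ m * gG μ b)) := by gcongr
      _ = κ * (Q ^ m * lam ^ (A * (m - n))) * (gG μ a * gG μ b) := by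
          rw [hQ, ht, ← pow_mul, mul_comm 2 m, pow_mul, mul_pow]; ring
      _ ≤ κ * ((2 * Q) ^ n * (1 / 2) ^ m) * (gG μ a * gG μ b) := by gcongr
      _ = _ := by ring
  have h2 := hb.trans (ENNReal.tsum_le_tsum hterm)
  have hgs : Summable (fun m : ℕ => (1 / 2 : ℝ) ^ m) := summable_geometric_two
  rw [← ENNReal.ofReal_tsum_of_nonneg (fun m => by positivity) (hgs.mul_left _), tsum_mul_left,
    tsum_geometric_two, ENNReal.ofReal_le_ofReal_iff (by positivity)] at h2
  linarith


def US (S : Finset G) (u : ℕ → G) (R : ℕ) : Set G :=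
  {y | ∀ᶠ n in atTop, (R : ℝ) ≤ gromov (wordDist S) 1 (u n) y}

def FF (S : Finset G) (u : ℕ → G) : Filter G := ⨅ R : ℕ, 𝓟 (US S u R)

theorem US_anti (S : Finset G) (u : ℕ → G) {R R' : ℕ} (h : R ≤ R') : US S u R' ⊆ US S u R := by
  intro y hy
  have hy' : ∀ᶠ n in atTop, (R' : ℝ) ≤ gromov (wordDist S) 1 (u n) y := hy
  show ∀ᶠ n in atTop, (R : ℝ) ≤ gromov (wordDist S) 1 (u n) y
  filter_upwards [hy'] with n hn
  exact le_trans (by exact_mod_cast h) hn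

theorem FF_mem (S : Finset G) (u : ℕ → G) (s : Set G) : s ∈ FF S u ↔ ∃ R, US S u R ⊆ s := by
  unfold FF
  rw [mem_iInf_of_directed]
  · simp
  · intro a b
    refine ⟨max a b, ?_, ?_⟩
    · exact principal_mono.2 (US_anti S u (le_max_left _ _))
    · exact principal_mono.2 (US_anti S u (le_max_right _ _))

theorem US_mem (S : Finset G) (u : ℕ → G) (R : ℕ) : US S u R ∈ FF S u :=
  (FF_mem S u _).2 ⟨R, subset_rfl⟩

theorem tinf_iff {S : Finset G} {u : ℕ → G} (hu : TendstoInfinity (wordDist S) u) (R : ℝ) :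
    ∃ N, ∀ n m, N ≤ n → N ≤ m → R ≤ gromov (wordDist S) 1 (u n) (u m) := by
  have h := hu.eventually (eventually_ge_atTop R)
  rw [eventually_atTop] at h
  obtain ⟨⟨a, b⟩, hab⟩ := h
  refine ⟨max a b, fun n m hn hm => hab (n, m) ⟨?_, ?_⟩⟩
  · exact (le_max_left _ _).trans hn
  · exact (le_max_right _ _).trans hm

section
variable {S : Finset G} {δ : ℝ}

/-- sequences close to `u` converge along the filter of `u` -/
theorem tendsto_FF (hδ : IsHyperbolicWith (wordDist S) δ) (hS : Generates S) {u v : ℕ → G}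
    (hu : TendstoInfinity (wordDist S) u)
    (hv : Tendsto (fun n => gromov (wordDist S) 1 (u n) (v n)) atTop atTop) :
    Tendsto v atTop (FF S u) := by
  intro s hs
  obtain ⟨R, hR⟩ := (FF_mem S u s).1 hs
  obtain ⟨N, hN⟩ := tinf_iff hu (R + δ)
  have h1 := hv.eventually (eventually_ge_atTop ((R : ℝ) + δ))
  show ∀ᶠ m in atTop, v m ∈ s
  filter_upwards [h1, eventually_ge_atTop N] with m hm hmN
  apply hR
  show ∀ᶠ n in atTop, (R : ℝ) ≤ gromov (wordDist S) 1 (u n) (v m)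
  filter_upwards [eventually_ge_atTop N] with n hn
  have h2 := hδ 1 (u m) (u n) (v m)
  have h3 : (R : ℝ) + δ ≤ min (gromov (wordDist S) 1 (u m) (u n)) (gromov (wordDist S) 1 (u m) (v m)) :=
    le_min (hN m n hmN hn) hm
  linarith

theorem tinf_diag {u : ℕ → G} (hu : TendstoInfinity (wordDist S) u) :
    Tendsto (fun n => gromov (wordDist S) 1 (u n) (u n)) atTop atTop := by
  rw [Filter.tendsto_atTop]
  intro R
  obtain ⟨N, hN⟩ := tinf_iff hu R
  filter_upwards [eventually_ge_atTop N] with n hn using hN n n hn hn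

theorem tendsto_FF_self (hδ : IsHyperbolicWith (wordDist S) δ) (hS : Generates S) {u : ℕ → G}
    (hu : TendstoInfinity (wordDist S) u) : Tendsto u atTop (FF S u) :=
  tendsto_FF hδ hS hu (tinf_diag hu)

theorem FF_neBot (hδ : IsHyperbolicWith (wordDist S) δ) (hS : Generates S) {u : ℕ → G}
    (hu : TendstoInfinity (wordDist S) u) : (FF S u).NeBot :=
  (tendsto_FF_self hδ hS hu).neBot

theorem FF_ne (hS : Generates S) (u : ℕ → G) (x : G) : ∀ᶠ y in FF S u, y ≠ x := by
  filter_upwards [US_mem S u (wordLength S x + 1)] with y hy hyx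
  subst hyx
  have hy' : ∀ᶠ n in atTop, ((wordLength S y + 1 : ℕ) : ℝ) ≤ gromov (wordDist S) 1 (u n) y := hy
  obtain ⟨n, hn⟩ := hy'.exists
  have := gr_le hS 1 y (u n)
  rw [gr_symm hS, wd_one' hS] at this
  push_cast at hn
  linarith

theorem toward (hδ0 : 0 ≤ δ) (hδ : IsHyperbolicWith (wordDist S) δ) (hS : Generates S) {u : ℕ → G}
    (hu : TendstoInfinity (wordDist S) u) (k : ℕ) :
    ∃ w, wordLength S w = k ∧ ∀ᶠ y in FF S u, (k : ℝ) - 2 * δ ≤ gromov (wordDist S) 1 w y := by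
  obtain ⟨N, hN⟩ := tinf_iff hu k
  have hlen : k ≤ wordLength S (u N) := by
    have h1 := hN N N le_rfl le_rfl
    have h2 := gr_le hS 1 (u N) (u N)
    rw [wd_one' hS] at h2
    exact_mod_cast h1.trans h2
  obtain ⟨w, hw, hw2⟩ := prefix_exists hS (u N) k hlen
  have h3 := prefix_gr hS hw2
  refine ⟨w, hw, ?_⟩
  filter_upwards [US_mem S u k] with y hy
  have hy' : ∀ᶠ n in atTop, (k : ℝ) ≤ gromov (wordDist S) 1 (u n) y := hy
  obtain ⟨n, hn, hnN⟩ := (hy'.and (eventually_ge_atTop N)).exists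
  have a1 := hδ 1 (u n) (u N) y
  have a2 : (k : ℝ) ≤ min (gromov (wordDist S) 1 (u n) (u N)) (gromov (wordDist S) 1 (u n) y) :=
    le_min (hN n N hnN le_rfl) hn
  have a3 := hδ 1 (u N) w y
  rw [gr_symm hS 1 (u N) w, h3, hw] at a3
  have a4 : (k : ℝ) - δ ≤ min (k : ℝ) (gromov (wordDist S) 1 (u N) y) :=
    le_min (by linarith) (by linarith)
  linarith

theorem toward_x (hδ : IsHyperbolicWith (wordDist S) δ) (hS : Generates S)
    {w x y : G} (hw : (wordLength S w : ℝ) - 2 * δ ≤ gromov (wordDist S) 1 w y)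
    (hx : wordLength S x + 3 * δ < wordLength S w) :
    gromov (wordDist S) w 1 y ≤ 2 * δ ∧ gromov (wordDist S) w x y ≤ 3 * δ := by
  have h1 := gr_add hS 1 w y
  rw [wd_one' hS] at h1
  have h2 : gromov (wordDist S) w 1 y ≤ 2 * δ := by linarith
  refine ⟨h2, ?_⟩
  have h3 := hδ w x 1 y
  have h4 : (wordLength S w : ℝ) - wordLength S x ≤ gromov (wordDist S) w x 1 := by
    unfold gromov
    have := wd_tri hS w x 1
    rw [wd_one' hS, wd_one' hS, wd_symm hS w x] at this
    rw [wd_one, wd_one' hS]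
    linarith
  by_contra! hc
  have h5 : 3 * δ < min (gromov (wordDist S) w x 1) (gromov (wordDist S) w x y) :=
    lt_min (by linarith) hc
  linarith

variable {μ : G → ℝ} {T : Finset G} {lam : ℝ}

theorem ancona_w (Y : Sys μ T lam) (hS : Generates S) (hδ0 : 0 ≤ δ)
    (hδ : IsHyperbolicWith (wordDist S) δ) (c : ℝ) :
    ∃ C : ℝ, 0 < C ∧ ∀ w x y, gromov (wordDist S) w x y ≤ c →
      gG μ (x⁻¹ * y) ≤ C * (gG μ (w⁻¹ * x) * gG μ (w⁻¹ * y)) := by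
  obtain ⟨C, hC, h⟩ := ancona Y hS hδ0 hδ c
  refine ⟨C, hC, fun w x y hc => ?_⟩
  have := h (w⁻¹ * x) (w⁻¹ * y) (by
    rw [← gr_left S w⁻¹] at hc; simpa using hc)
  refine le_trans (le_of_eq ?_) this
  congr 1; group

theorem mm_def (μ : G → ℝ) (y x : G) : martinMap μ y x = gG μ (x⁻¹ * y) / gG μ y := by
  simp [martinMap, martinKernel, greenFn_eq]

theorem Sys.mm_nonneg (Y : Sys μ T lam) (y x : G) : 0 ≤ martinMap μ y x := by
  rw [mm_def]; exact (div_pos (Y.pos _) (Y.pos _)).le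

theorem Sys.mm_one (Y : Sys μ T lam) (y : G) : martinMap μ y 1 = 1 := by
  rw [mm_def, inv_one, one_mul, div_self (Y.pos y).ne']

theorem Sys.mm_pop (Y : Sys μ T lam) {y x : G} (h : y ≠ x) :
    Pop T μ (martinMap μ y) x = martinMap μ y x := by
  unfold Pop
  simp_rw [mm_def, ← mul_div_assoc]
  rw [← Finset.sum_div, Y.comm x y, Y.g_ne (h := y⁻¹ * x) (fun e => h (inv_mul_eq_one.1 e))]
  congr 1
  refine Finset.sum_congr rfl (fun s _ => ?_)
  rw [Y.comm (x * s) y, mul_assoc]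

theorem Sys.mm_pop_self (Y : Sys μ T lam) (y : G) :
    Pop T μ (martinMap μ y) y ≠ martinMap μ y y := by
  unfold Pop
  simp_rw [mm_def, ← mul_div_assoc]
  rw [← Finset.sum_div]
  have h1 := Y.g_eq 1
  have h2 : ∑ s ∈ T, μ s * gG μ ((y * s)⁻¹ * y) = ∑ s ∈ T, μ s * gG μ (1 * s) := by
    refine Finset.sum_congr rfl (fun s _ => ?_)
    rw [Y.comm (y * s) y]; simp
  have h3 : convPow μ 0 (1 : G) = 1 := by simp [convPow]
  rw [h2, inv_mul_cancel]
  intro h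
  have := (div_left_inj' (Y.pos y).ne').1 h
  rw [h3] at h1
  linarith

/-- data satisfied by the limit kernels -/
structure Adm (S : Finset G) (μ : G → ℝ) (T : Finset G) (C : ℝ) (w : ℕ → G) (h : G → ℝ) : Prop where
  nonneg : ∀ x, 0 ≤ h x
  one : h 1 = 1
  harm : ∀ x, Pop T μ h x = h x
  up : ∀ k, gG μ (w k) * h (w k) ≤ gG μ 1
  low : ∀ᶠ k in atTop, 1 ≤ C * (gG μ (w k) * h (w k))
  anc : ∀ x, ∀ᶠ k in atTop, h x ≤ C * (gG μ ((w k)⁻¹ * x) * h (w k))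

theorem Adm.pos (Y : Sys μ T lam) {C : ℝ} {w : ℕ → G} {h : G → ℝ} (a : Adm S μ T C w h) (x : G) :
    0 < h x := by
  have := Y.dom a.nonneg (fun x => (a.harm x).le) x 1
  rw [a.one] at this
  have p := Y.pos ((1:G)⁻¹ * x)
  have p1 := Y.pos (1 : G)
  by_contra! hc
  nlinarith

theorem Adm.comp (Y : Sys μ T lam) {C : ℝ} (hC : 0 < C) {w : ℕ → G} {h h' : G → ℝ}
    (a : Adm S μ T C w h) (a' : Adm S μ T C w h') (x : G) :
    h x ≤ C ^ 2 * gG μ 1 ^ 2 * h' x := by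
  obtain ⟨k, h1, h2⟩ := ((a.anc x).and a'.low).exists
  have h3 := a.up k
  have h4 := Y.dom a'.nonneg (fun x => (a'.harm x).le) x (w k)
  have g1 := Y.pos (1 : G)
  have gw := Y.pos (w k)
  have gx := Y.pos ((w k)⁻¹ * x)
  have h5 : h (w k) ≤ gG μ 1 * (C * h' (w k)) := by
    have : gG μ (w k) * h (w k) ≤ gG μ (w k) * (gG μ 1 * (C * h' (w k))) := by
      calc _ ≤ gG μ 1 * 1 := by linarith
        _ ≤ gG μ 1 * (C * (gG μ (w k) * h' (w k))) := by gcongr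
        _ = _ := by ring
    exact le_of_mul_le_mul_left this gw
  calc h x ≤ C * (gG μ ((w k)⁻¹ * x) * h (w k)) := h1
    _ ≤ C * (gG μ ((w k)⁻¹ * x) * (gG μ 1 * (C * h' (w k)))) := by gcongr
    _ = C ^ 2 * gG μ 1 * (gG μ ((w k)⁻¹ * x) * h' (w k)) := by ring
    _ ≤ C ^ 2 * gG μ 1 * (gG μ 1 * h' x) := by gcongr
    _ = _ := by ring

/-- boost: a nonnegative harmonic function frequently bounded below along `w` -/
theorem Adm.boost (Y : Sys μ T lam) {C : ℝ} (hC : 0 < C) {w : ℕ → G} {h' u : G → ℝ}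
    (a' : Adm S μ T C w h') (u0 : ∀ x, 0 ≤ u x) (uh : ∀ x, Pop T μ u x = u x) {t : ℝ} (ht : 0 ≤ t)
    (hf : ∃ᶠ k in atTop, t * h' (w k) ≤ u (w k)) (x : G) :
    t / (gG μ 1 * C) * h' x ≤ u x := by
  obtain ⟨k, h1, h2⟩ := (hf.and_eventually (a'.anc x)).exists
  have h4 := Y.dom u0 (fun x => (uh x).le) x (w k)
  have g1 := Y.pos (1 : G)
  have gx := Y.pos ((w k)⁻¹ * x)
  rw [div_mul_eq_mul_div, div_le_iff₀ (by positivity)]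
  calc t * h' x ≤ t * (C * (gG μ ((w k)⁻¹ * x) * h' (w k))) := by gcongr
    _ = C * (gG μ ((w k)⁻¹ * x) * (t * h' (w k))) := by ring
    _ ≤ C * (gG μ ((w k)⁻¹ * x) * u (w k)) := by gcongr
    _ ≤ C * (gG μ 1 * u x) := by gcongr
    _ = _ := by ring

theorem Adm.unique (Y : Sys μ T lam) {C : ℝ} (hC : 0 < C) {w : ℕ → G} {h h' : G → ℝ}
    (a : Adm S μ T C w h) (a' : Adm S μ T C w h') : h = h' := by
  have g1 := Y.pos (1 : G)
  have hp' := a'.pos Y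
  set X : Set ℝ := {t | ∀ x, t * h' x ≤ h x} with hX
  set Z : Set ℝ := {t | ∀ x, h x ≤ t * h' x} with hZ
  have X0 : (0 : ℝ) ∈ X := fun x => by rw [zero_mul]; exact a.nonneg x
  have Xb : ∀ t ∈ X, t ≤ 1 := fun t ht => by
    have := ht 1; rw [a.one, a'.one] at this; linarith
  have Zne : C ^ 2 * gG μ 1 ^ 2 ∈ Z := fun x => a.comp Y hC a' x
  have Zb : ∀ t ∈ Z, 1 ≤ t := fun t ht => by
    have := ht 1; rw [a.one, a'.one] at this; linarith
  set m := sSup X with hm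
  set M := sInf Z with hM
  have m1 : m ≤ 1 := csSup_le ⟨0, X0⟩ Xb
  have M1 : 1 ≤ M := le_csInf ⟨_, Zne⟩ Zb
  have hmh : ∀ x, m * h' x ≤ h x := fun x => by
    rw [← le_div_iff₀ (hp' x)]
    exact csSup_le ⟨0, X0⟩ (fun t ht => (le_div_iff₀ (hp' x)).2 (ht x))
  have hMh : ∀ x, h x ≤ M * h' x := fun x => by
    rw [← div_le_iff₀ (hp' x)]
    exact le_csInf ⟨_, Zne⟩ (fun t ht => (div_le_iff₀ (hp' x)).2 (ht x))
  have hpop : ∀ (α β : ℝ) x, Pop T μ (fun x => α * h x + β * h' x) x = α * h x + β * h' x := by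
    intro α β x
    rw [← a.harm x, ← a'.harm x]
    unfold Pop
    rw [Finset.mul_sum, Finset.mul_sum, ← Finset.sum_add_distrib]
    refine Finset.sum_congr rfl (fun s _ => by ring)
  have hMm : M ≤ m := by
    by_contra! hlt
    set t := (M - m) / 2 with ht
    have ht0 : 0 < t := by rw [ht]; linarith
    set e := t / (gG μ 1 * C) with he
    have he0 : 0 < e := by positivity
    by_cases hf : ∃ᶠ k in atTop, t * h' (w k) ≤ 1 * h (w k) + (-m) * h' (w k)
    · have hb := a'.boost Y hC (u := fun x => 1 * h x + (-m) * h' x)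
        (fun x => by linarith [hmh x]) (hpop 1 (-m)) ht0.le hf
      have : m + e ∈ X := fun x => by
        have := hb x; linarith
      have := le_csSup ⟨1, Xb⟩ this
      linarith
    · have hb := a'.boost Y hC (u := fun x => (-1) * h x + M * h' x)
        (fun x => by linarith [hMh x]) (hpop (-1) M) ht0.le (by
          rw [not_frequently] at hf
          refine Eventually.frequently (hf.mono (fun k hk => ?_))
          have e2 : M = m + 2 * t := by rw [ht]; ring
          rw [e2]; linarith)
      have : M - e ∈ Z := fun x => by
        have := hb x; linarith
      have := csInf_le ⟨1, Zb⟩ this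
      linarith
  have em : m = 1 := by linarith
  have eM : M = 1 := by linarith
  ext x
  have h1 := hmh x
  have h2 := hMh x
  rw [em] at h1; rw [eM] at h2
  linarith

theorem Sys.ultra_lim (Y : Sys μ T lam) (hS : Generates S) (U : Ultrafilter G) :
    ∃ h, Tendsto (martinMap μ) U (𝓝 h) := by
  obtain ⟨Λ, hΛ1, hΛl, -⟩ := Y.harnack hS
  have hcpt : IsCompact (Set.pi Set.univ (fun x : G => Set.Icc (0 : ℝ) (Λ ^ wordLength S x))) :=
    isCompact_univ_pi (fun x => isCompact_Icc)
  obtain ⟨h, -, hh⟩ := hcpt.ultrafilter_le_nhds (U.map (martinMap μ)) (by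
    rw [le_principal_iff, Ultrafilter.coe_map, Filter.mem_map]
    refine mem_of_superset univ_mem (fun y _ x _ => ⟨Y.mm_nonneg y x, ?_⟩)
    rw [mm_def, div_le_iff₀ (Y.pos y)]
    have := hΛl x⁻¹ y
    rwa [wl_inv hS] at this)
  exact ⟨h, hh⟩

theorem kernel_lim (Y : Sys μ T lam) (hS : Generates S) (hδ0 : 0 ≤ δ)
    (hδ : IsHyperbolicWith (wordDist S) δ) :
    ∃ C : ℝ, 0 < C ∧ ∀ u : ℕ → G, TendstoInfinity (wordDist S) u →
      ∃ h : G → ℝ, Tendsto (martinMap μ) (FF S u) (𝓝 h) ∧ (∀ x, Pop T μ h x = h x) ∧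
      ∃ w : ℕ → G, (∀ k, wordLength S (w k) = k ∧
        ∀ᶠ y in FF S u, (k : ℝ) - 2 * δ ≤ gromov (wordDist S) 1 (w k) y) ∧
        ∀ᶠ k in atTop, 1 ≤ C * (gG μ (w k) * h (w k)) := by
  obtain ⟨C, hC, hanc⟩ := ancona_w Y hS hδ0 hδ (3 * δ)
  refine ⟨C, hC, fun u hu => ?_⟩
  choose w hw hwF using toward hδ0 hδ hS hu
  have hne := FF_neBot hδ hS hu
  have adm : ∀ (U : Ultrafilter G) (h : G → ℝ), (U : Filter G) ≤ FF S u →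
      Tendsto (martinMap μ) U (𝓝 h) → Adm S μ T C w h := by
    intro U h hU hh
    have hx : ∀ x, Tendsto (fun y => martinMap μ y x) U (𝓝 (h x)) := fun x =>
      (tendsto_pi_nhds.1 hh) x
    have anc : ∀ x, ∀ᶠ k in atTop, h x ≤ C * (gG μ ((w k)⁻¹ * x) * h (w k)) := by
      intro x
      obtain ⟨K, hK⟩ := exists_nat_gt ((wordLength S x : ℝ) + 3 * δ)
      filter_upwards [eventually_ge_atTop K] with k hk
      have hk' : (wordLength S x : ℝ) + 3 * δ < wordLength S (w k) := by
        rw [hw]; exact hK.trans_le (by exact_mod_cast hk)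
      refine le_of_tendsto_of_tendsto (hx x) (((hx (w k)).const_mul _).const_mul _) ?_
      filter_upwards [hU (hwF k)] with y hy
      have hy' : (k : ℝ) - 2 * δ ≤ gromov (wordDist S) 1 (w k) y := hy
      rw [← hw k] at hy'
      rw [hw k] at hy'
      have h1 := hanc (w k) x y (toward_x hδ hS (by rw [hw k]; exact hy') hk').2
      rw [mm_def, mm_def, ← mul_div_assoc, ← mul_div_assoc]
      exact div_le_div_of_nonneg_right h1 (Y.pos y).le
    have one : h 1 = 1 := by
      refine tendsto_nhds_unique (hx 1) ?_
      simp_rw [Y.mm_one]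
      exact tendsto_const_nhds
    refine ⟨fun x => ge_of_tendsto' (hx x) (fun y => Y.mm_nonneg y x), one, ?_, ?_, ?_, anc⟩
    · intro x
      have h1 : Tendsto (fun y => Pop T μ (martinMap μ y) x) U (𝓝 (Pop T μ h x)) :=
        tendsto_finsetSum _ (fun s _ => (hx (x * s)).const_mul _)
      refine tendsto_nhds_unique (h1.congr' ?_) (hx x)
      filter_upwards [hU (FF_ne hS u x)] with y hy
      exact Y.mm_pop hy
    · intro k
      refine le_of_tendsto' ((hx (w k)).const_mul _) (fun y => ?_)
      rw [mm_def, ← mul_div_assoc, div_le_iff₀ (Y.pos y)]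
      have := Y.g3 y (w k) 1
      simp only [inv_one, one_mul] at this
      linarith
    · filter_upwards [anc 1] with k hk
      rw [one, mul_one, Y.inv] at hk
      exact hk
  obtain ⟨h, hh⟩ := Y.ultra_lim hS (Ultrafilter.of (FF S u))
  have ah := adm _ h (Ultrafilter.of_le _) hh
  refine ⟨h, ?_, ah.harm, w, fun k => ⟨hw k, hwF k⟩, ah.low⟩
  rw [tendsto_iff_ultrafilter]
  intro U hU
  obtain ⟨h', hh'⟩ := Y.ultra_lim hS U
  have := (adm U h' hU hh').unique Y hC ah
  rwa [this] at hh'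
end


section
variable {S : Finset G} {δ : ℝ}

theorem seq_freq {u v : ℕ → G} {R : ℝ} (h : seqGromov (wordDist S) u v ≤ R)
    (hn : ¬ Tendsto (fun n => gromov (wordDist S) 1 (u n) (v n)) atTop atTop) :
    ∃ᶠ n in atTop, gromov (wordDist S) 1 (u n) (v n) < R + 1 := by
  by_contra hc
  rw [not_frequently] at hc
  unfold seqGromov at h
  rw [liminf_eq] at h
  by_cases hb : BddAbove {a : ℝ | ∀ᶠ n in atTop, a ≤ gromov (wordDist S) 1 (u n) (v n)}
  · have : R + 1 ∈ {a : ℝ | ∀ᶠ n in atTop, a ≤ gromov (wordDist S) 1 (u n) (v n)} :=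
      hc.mono (fun n h => not_lt.1 h)
    have := le_csSup hb this
    linarith
  · apply hn
    rw [Filter.tendsto_atTop]
    intro a
    rw [not_bddAbove_iff] at hb
    obtain ⟨a', h1, h2⟩ := hb a
    have h1' : ∀ᶠ n in atTop, a' ≤ gromov (wordDist S) 1 (u n) (v n) := h1
    exact h1'.mono (fun n h => h2.le.trans h)

theorem seq_event (hS : Generates S) {u v : ℕ → G} {R : ℝ} (h : R < seqGromov (wordDist S) u v) :
    ∀ᶠ n in atTop, R ≤ gromov (wordDist S) 1 (u n) (v n) := by
  unfold seqGromov at h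
  rw [liminf_eq] at h
  have hz : (0 : ℝ) ∈ {a : ℝ | ∀ᶠ n in atTop, a ≤ gromov (wordDist S) 1 (u n) (v n)} :=
    Eventually.of_forall (fun n => gr_nonneg hS 1 (u n) (v n))
  obtain ⟨a, ha, hR⟩ := exists_lt_of_lt_csSup ⟨_, hz⟩ h
  have ha' : ∀ᶠ n in atTop, a ≤ gromov (wordDist S) 1 (u n) (v n) := ha
  exact ha'.mono (fun n h => hR.le.trans h)

/-- the direction of a non-principal ultrafilter -/
theorem ultra_dir (hδ : IsHyperbolicWith (wordDist S) δ) (hδ0 : 0 ≤ δ) (hS : Generates S)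
    (U : Ultrafilter G) (hU : (U : Filter G) ≤ cofinite) :
    ∃ w : ℕ → G, TendstoInfinity (wordDist S) w ∧ (U : Filter G) ≤ FF S w := by
  have hlen : ∀ k : ℕ, ∀ᶠ y in U, k ≤ wordLength S y := by
    intro k
    obtain ⟨β, -, hβ⟩ := ball_exists hS
    obtain ⟨F, hF, -⟩ := hβ k
    have : ∀ᶠ y in (U : Filter G), y ∉ (F : Set G) :=
      hU ((F.finite_toSet).compl_mem_cofinite)
    filter_upwards [this] with y hy
    by_contra! hc
    exact hy ((hF y).2 hc.le)
  have hw : ∀ k : ℕ, ∃ w, ∀ᶠ y in U, gromov (wordDist S) 1 w y = k := by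
    intro k
    obtain ⟨β, -, hβ⟩ := ball_exists hS
    obtain ⟨F, hF, -⟩ := hβ k
    have hp : ∀ y : G, ∃ h, k ≤ wordLength S y →
        wordLength S h = k ∧ gromov (wordDist S) 1 h y = k := by
      intro y
      by_cases hy : k ≤ wordLength S y
      · obtain ⟨h, h1, h2⟩ := prefix_exists hS y k hy
        exact ⟨h, fun _ => ⟨h1, by rw [prefix_gr hS h2, h1]⟩⟩
      · exact ⟨1, fun h => absurd h hy⟩
    choose p hp using hp
    obtain ⟨w, -, hw⟩ := ultra_const U p F (by
      filter_upwards [hlen k] with y hy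
      exact (hF _).2 (hp y hy).1.le)
    refine ⟨w, ?_⟩
    filter_upwards [hw, hlen k] with y h1 h2
    rw [← h1]; exact (hp y h2).2
  choose w hw using hw
  refine ⟨w, ?_, ?_⟩
  · unfold TendstoInfinity
    rw [Filter.tendsto_atTop]
    intro R
    obtain ⟨N, hN⟩ := exists_nat_ge (R + δ)
    rw [eventually_atTop]
    refine ⟨(N, N), fun p hp => ?_⟩
    obtain ⟨h1, h2⟩ := hp
    simp only at h1 h2
    obtain ⟨y, hy1, hy2⟩ := ((hw p.1).and (hw p.2)).exists
    have h3 := hδ 1 y (w p.1) (w p.2)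
    rw [gr_symm hS 1 y, gr_symm hS 1 y, hy1, hy2] at h3
    have h4 : (N : ℝ) ≤ min (p.1 : ℝ) (p.2 : ℝ) :=
      le_min (by exact_mod_cast h1) (by exact_mod_cast h2)
    linarith
  · intro s hs
    obtain ⟨R, hR⟩ := (FF_mem S w s).1 hs
    obtain ⟨j, hj⟩ := exists_nat_ge ((R : ℝ) + 2 * δ)
    refine mem_of_superset (hw j) (fun y hy => hR ?_)
    have hy' : gromov (wordDist S) 1 (w j) y = j := hy
    show ∀ᶠ n in atTop, (R : ℝ) ≤ gromov (wordDist S) 1 (w n) y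
    filter_upwards [eventually_ge_atTop j] with n hn
    obtain ⟨z, hz1, hz2⟩ := ((hw j).and (hw n)).exists
    have h3 := hδ 1 z (w j) (w n)
    rw [gr_symm hS 1 z, gr_symm hS 1 z, hz1, hz2] at h3
    rw [min_eq_left (by exact_mod_cast hn)] at h3
    have h4 := hδ 1 (w j) (w n) y
    have h5 : (j : ℝ) - δ ≤ min (gromov (wordDist S) 1 (w j) (w n))
        (gromov (wordDist S) 1 (w j) y) := le_min h3 (by rw [hy']; linarith)
    linarith

variable {μ : G → ℝ} {T : Finset G} {lam : ℝ}

theorem main_homeo (Y : Sys μ T lam) (hS : Generates S) (hδ0 : 0 ≤ δ)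
    (hδ : IsHyperbolicWith (wordDist S) δ) {B : Type*} [MetricSpace B]
    (bd : BoundaryData G (wordDist S) B) (ε Cv : ℝ) (hv : IsVisualMetric (wordDist S) bd ε Cv) :
    Nonempty (↥(martinBoundary μ) ≃ₜ B) := by
  obtain ⟨hε, hCv, hvis⟩ := hv
  obtain ⟨C, hC, hker⟩ := kernel_lim Y hS hδ0 hδ
  choose u hu using bd.conv_surj
  have hui : ∀ b, TendstoInfinity (wordDist S) (u b) := fun b => bd.conv_tendstoInfinity _ _ (hu b)
  choose Φ hΦ hharm w hw hlow using fun b => hker (u b) (hui b)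
  have hseq : ∀ b v, bd.conv v b → Tendsto (fun n => martinMap μ (v n)) atTop (𝓝 (Φ b)) :=
    fun b v h => (hΦ b).comp (tendsto_FF hδ hS (hui b) ((bd.conv_iff _ _ _ (hu b)).1 h))
  have hmem : ∀ b, Φ b ∈ martinBoundary μ := by
    intro b
    refine ⟨mem_closure_of_tendsto (hseq b _ (hu b)) (Eventually.of_forall fun n => ⟨_, rfl⟩), ?_⟩
    rintro ⟨y, hy⟩
    apply Y.mm_pop_self y
    have := hharm b y
    rwa [← hy] at this
  have hsurj : ∀ k ∈ martinBoundary μ, ∃ b, Φ b = k := by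
    rintro k ⟨hk, hk2⟩
    have hne : (comap (martinMap μ) (𝓝 k)).NeBot := by
      rw [comap_neBot_iff]
      intro t ht
      obtain ⟨_, h1, a, rfl⟩ := mem_closure_iff_nhds.1 hk t ht
      exact ⟨a, h1⟩
    set U := Ultrafilter.of (comap (martinMap μ) (𝓝 k)) with hUdef
    have hUk : Tendsto (martinMap μ) U (𝓝 k) :=
      tendsto_iff_comap.2 (Ultrafilter.of_le _)
    rcases U.le_cofinite_or_eq_pure with hco | ⟨a, ha⟩
    · obtain ⟨v, hv, hUv⟩ := ultra_dir hδ hδ0 hS U hco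
      obtain ⟨b, hb⟩ := bd.exists_conv v hv
      obtain ⟨h, hh, -⟩ := hker v hv
      refine ⟨b, ?_⟩
      have e1 : k = h := tendsto_nhds_unique hUk (hh.mono_left hUv)
      have e2 : Φ b = h := tendsto_nhds_unique (hseq b v hb)
        (hh.comp (tendsto_FF_self hδ hS hv))
      rw [e1, e2]
    · exfalso
      apply hk2
      refine ⟨a, ?_⟩
      rw [ha] at hUk
      exact tendsto_nhds_unique (tendsto_pure_nhds _ _) hUk
  have hsep : ∀ b (η : ℝ), 0 < η → ∃ x thr, thr < Φ b x ∧ ∀ b', η ≤ dist b b' → Φ b' x ≤ thr := by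
    intro b η hη
    set R : ℝ := - Real.log (η / Cv) / ε with hR
    obtain ⟨CR, hCR, hanc⟩ := ancona Y hS hδ0 hδ (R + 1 + 2 * δ)
    have hq : 0 < 1 / (C * CR + 1) := by positivity
    obtain ⟨N, hN⟩ := Y.decay hS (lt_min hq one_pos)
    obtain ⟨K, hK⟩ := exists_nat_ge (R + 1 + 4 * δ)
    obtain ⟨k, ⟨hk1, hk2⟩, hk3⟩ := (((hlow b).and (eventually_ge_atTop N)).and
      (eventually_ge_atTop K)).exists
    obtain ⟨hwl, hwF⟩ := hw b k
    set x := w b k with hx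
    have hg := hN x (by rw [hwl]; exact hk2)
    have hgp := Y.pos x
    refine ⟨x, CR * gG μ x, ?_, fun b' hb' => ?_⟩
    · have g1 : gG μ x ≤ 1 / (C * CR + 1) := hg.trans (min_le_left _ _)
      have g2 : gG μ x ≤ 1 := hg.trans (min_le_right _ _)
      rw [le_div_iff₀ (by positivity)] at g1
      by_contra! hc
      have h1 : C * (gG μ x * Φ b x) ≤ C * (gG μ x * (CR * gG μ x)) := by gcongr
      have h2 : gG μ x * (C * CR * gG μ x) ≤ 1 * (C * CR * gG μ x) := by gcongr
      nlinarith
    · have hbb : b ≠ b' := by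
        rintro rfl
        rw [dist_self] at hb'; linarith
      have hd := (hvis _ _ _ _ (hu b) (hu b') hbb).1
      have hsg : seqGromov (wordDist S) (u b) (u b') ≤ R := by
        have h1 : η / Cv ≤ Real.exp (-ε * seqGromov (wordDist S) (u b) (u b')) := by
          rw [div_le_iff₀ hCv]; linarith
        have h2 := Real.log_le_log (by positivity) h1
        rw [Real.log_exp] at h2
        rw [hR, le_div_iff₀ hε]
        linarith
      have hfr := seq_freq hsg (fun ht => hbb
        (bd.conv_unique _ _ _ ((bd.conv_iff _ _ _ (hu b)).2 ht) (hu b')))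
      have hUb := (tendsto_FF_self hδ hS (hui b)).eventually hwF
      obtain ⟨R2, hR2⟩ := exists_nat_ge (R + 1 + 4 * δ)
      have hlim : Tendsto (fun y => martinMap μ y x) (FF S (u b')) (𝓝 (Φ b' x)) :=
        tendsto_pi_nhds.1 (hΦ b') x
      have hne := FF_neBot hδ hS (hui b')
      refine le_of_tendsto hlim ?_
      filter_upwards [US_mem S (u b') R2] with y hy
      have hy' : ∀ᶠ n in atTop, (R2 : ℝ) ≤ gromov (wordDist S) 1 (u b' n) y := hy
      obtain ⟨n, hn1, hn2, hn3⟩ := (hfr.and_eventually (hUb.and hy')).exists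
      have hxy : gromov (wordDist S) 1 x y ≤ R + 1 + 2 * δ := by
        by_contra! hc
        have a1 := hδ 1 x (u b n) y
        have a2 : R + 1 + 2 * δ ≤ min (gromov (wordDist S) 1 x (u b n))
            (gromov (wordDist S) 1 x y) := by
          refine le_min ?_ hc.le
          have : (K : ℝ) ≤ k := by exact_mod_cast hk3
          linarith
        have a3 := hδ 1 y (u b n) (u b' n)
        rw [gr_symm hS 1 y, gr_symm hS 1 y] at a3
        have a4 : R + 1 + δ ≤ min (gromov (wordDist S) 1 (u b n) y)
            (gromov (wordDist S) 1 (u b' n) y) := le_min (by linarith) (by linarith)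
        linarith
      rw [mm_def, div_le_iff₀ (Y.pos y)]
      have := hanc x y hxy
      linarith
  have hinj : Function.Injective Φ := by
    intro b b' h
    by_contra hne
    obtain ⟨x, t, h1, h2⟩ := hsep b (dist b b') (dist_pos.2 hne)
    have := h2 b' le_rfl
    rw [← h] at this
    linarith
  have hcont : Continuous Φ := by
    rw [continuous_iff_continuousAt]
    intro b
    rw [ContinuousAt, (closed_nhds_basis (Φ b)).tendsto_right_iff]
    rintro V ⟨hV, hVc⟩
    obtain ⟨R, hR⟩ := (FF_mem S (u b) _).1 (hΦ b hV)
    set r : ℝ := R + δ + 1 with hr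
    have hηp : 0 < Real.exp (-ε * r) / Cv := by positivity
    filter_upwards [Metric.ball_mem_nhds b hηp] with b' hb'
    by_cases hbb : b = b'
    · subst hbb; exact mem_of_mem_nhds hV
    have hd := (hvis _ _ _ _ (hu b) (hu b') hbb).2
    rw [Metric.mem_ball, dist_comm, lt_div_iff₀ hCv] at hb'
    have h1 : Real.exp (-ε * seqGromov (wordDist S) (u b) (u b')) < Real.exp (-ε * r) := by
      linarith
    rw [Real.exp_lt_exp] at h1
    have h2 : r < seqGromov (wordDist S) (u b) (u b') := by nlinarith
    have h3 := seq_event hS h2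
    obtain ⟨N, hN⟩ := tinf_iff (hui b) r
    refine hVc.mem_of_tendsto (hseq b' _ (hu b')) ?_
    filter_upwards [h3, eventually_ge_atTop N] with m hm hmN
    apply hR
    show ∀ᶠ n in atTop, (R : ℝ) ≤ gromov (wordDist S) 1 (u b n) (u b' m)
    filter_upwards [eventually_ge_atTop N] with n hn
    have h4 := hδ 1 (u b m) (u b n) (u b' m)
    have h5 : r ≤ min (gromov (wordDist S) 1 (u b m) (u b n))
      (gromov (wordDist S) 1 (u b m) (u b' m)) := le_min (hN m n hmN hn) hm
    linarith
  have hbij : Function.Bijective (fun b => (⟨Φ b, hmem b⟩ : martinBoundary μ)) := by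
    refine ⟨fun b b' h => hinj (congrArg Subtype.val h), fun k => ?_⟩
    obtain ⟨b, hb⟩ := hsurj k.1 k.2
    exact ⟨b, Subtype.ext hb⟩
  let E := Equiv.ofBijective _ hbij
  have hE : ∀ b, (E b : G → ℝ) = Φ b := fun b => rfl
  have hE' : ∀ k, Φ (E.symm k) = k := fun k => by rw [← hE, Equiv.apply_symm_apply]
  have c1 : Continuous E := Continuous.subtype_mk hcont _
  have c2 : Continuous E.symm := by
    rw [continuous_iff_continuousAt]
    intro k
    rw [ContinuousAt, Metric.tendsto_nhds]
    intro η hη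
    obtain ⟨x, t, h1, h2⟩ := hsep (E.symm k) η hη
    rw [hE'] at h1
    have hc : Continuous (fun k : martinBoundary μ => (k : G → ℝ) x) :=
      (continuous_apply x).comp continuous_subtype_val
    filter_upwards [hc.continuousAt.eventually (lt_mem_nhds h1)] with k' hk'
    by_contra! hcn
    rw [dist_comm] at hcn
    have := h2 _ hcn
    rw [hE'] at this
    linarith
  exact ⟨(Homeomorph.mk E c1 c2).symm⟩
end

theorem main_thm
    {G : Type*} [Group G] (hG : NonElemHyperbolic G)
    (μ : G → ℝ) (hprob : IsProbDensity μ) (hsymm : IsSymmetric μ)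
    (hfin : {g : G | μ g ≠ 0}.Finite) (hgen : GeneratesSupp μ)
    (S : Finset G) (hS : Generates S)
      (B : Type) [MetricSpace B]
        (bd : BoundaryData G (wordDist S) B) (ε C : ℝ)
          (hv : IsVisualMetric (wordDist S) bd ε C) :
          Nonempty (↥(martinBoundary μ) ≃ₜ B) := by
  obtain ⟨hinf, -, hall⟩ := hG
  have hT : Generates hfin.toFinset := by
    unfold Generates
    rw [Set.Finite.coe_toFinset]
    exact hgen
  have hmem : ∀ g, g ∈ hfin.toFinset ↔ μ g ≠ 0 := fun g => by simp
  have W : Walk μ hfin.toFinset := by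
    refine ⟨hprob.1, ?_, hsymm, hmem⟩
    refine (hasSum_sum_of_ne_finset_zero (fun g hg => ?_)).unique hprob.2
    by_contra hc
    exact hg ((hmem g).2 hc)
  obtain ⟨⟨δ', hδ'0, hδ'⟩, hZ⟩ := hall _ hT
  obtain ⟨⟨δ, hδ0, hδ⟩, -⟩ := hall _ hS
  obtain ⟨lam, l0, l1, hgap⟩ := gap_form W hT hZ hδ'0 hδ'
  have Y : Sys μ hfin.toFinset lam := ⟨W, l0, l1, conv_le W l0 hgap, hT⟩
  exact main_homeo Y hS hδ0 hδ bd ε C hv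

/-- **Corollary 1.8 (Ancona).**  For a finitely supported symmetric probability measure
whose support generates a non-elementary hyperbolic group, the Martin boundary is
homeomorphic to the hyperbolic (Gromov) boundary of the group. -/
theorem ancona_martin_boundary
    {G : Type*} [Group G] (hG : NonElemHyperbolic G)
    (μ : G → ℝ) (hprob : IsProbDensity μ) (hsymm : IsSymmetric μ)
    (hfin : {g : G | μ g ≠ 0}.Finite) (hgen : GeneratesSupp μ) :
    ∀ (S : Finset G), Generates S →
      ∀ (B : Type) [MetricSpace B],
        ∀ (bd : BoundaryData G (wordDist S) B) (ε C : ℝ),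
          IsVisualMetric (wordDist S) bd ε C →
          Nonempty (↥(martinBoundary μ) ≃ₜ B) := by
  intro S hS B _ bd ε C hv
  exact main_thm hG μ hprob hsymm hfin hgen S hS B bd ε C hv

end GHM
end
end

section
/- Let X be a geodesic Gromov hyperbolic metric space and φ: X → Y a quasi-isometry onto a metric space Y. Then Y is Gromov hyperbolic if and only if Y is quasiruled. -/
open Filter MeasureTheory Topology Metric Set
open scoped ENNReal

noncomputable section

namespace GHM

variable {G : Type*} [Group G]

/-! ### Auxiliary lemmas -/

/-- Four point condition. -/
def FourPt (Y : Type*) [MetricSpace Y] (δ : ℝ) : Prop :=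
  ∀ p q r s : Y, dist p q + dist r s ≤
    max (dist p r + dist q s) (dist p s + dist q r) + 2 * δ

lemma fourPt_of_hyp {Y : Type*} [MetricSpace Y] {δ : ℝ}
    (h : IsHyperbolicWith (fun x y : Y => dist x y) δ) : FourPt Y δ := by
  intro p q r s
  have := h s r p q
  simp only [gromov] at this
  rw [dist_comm r p, dist_comm r q] at this
  rcases le_total ((dist r s + dist p s - dist p r) / 2) ((dist r s + dist q s - dist q r) / 2)
    with h1 | h1
  · rw [min_eq_left h1] at this
    have := le_max_left (dist p r + dist q s) (dist p s + dist q r)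
    linarith
  · rw [min_eq_right h1] at this
    have := le_max_right (dist p r + dist q s) (dist p s + dist q r)
    linarith

/-- Virtual distance from `p` to the point at distance `r` from `x` on `[x,y]`. -/
def vd {Y : Type*} [MetricSpace Y] (x y : Y) (r : ℝ) (p : Y) : ℝ :=
  max (dist x p - r) (dist y p - (dist x y - r))

lemma vd_four {Y : Type*} [MetricSpace Y] {δ : ℝ} (h : FourPt Y δ) (x y : Y) (r : ℝ)
    (p q s : Y) :
    min (vd x y r p + vd x y r q - dist p q) (vd x y r q + vd x y r s - dist q s) - 2 * δ
      ≤ vd x y r p + vd x y r s - dist p s := by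
  have key : ∀ (z : Y) (e : ℝ), (∀ u, dist z u - e ≤ vd x y r u) →
      dist p s + (dist z q - e) ≤
        max (dist p q + vd x y r s) (dist q s + vd x y r p) + 2 * δ := by
    intro z e hz
    have h1 := h p s z q
    have h2 := hz p
    have h3 := hz s
    have h4 := le_max_left (dist p q + vd x y r s) (dist q s + vd x y r p)
    have h5 := le_max_right (dist p q + vd x y r s) (dist q s + vd x y r p)
    rw [dist_comm p z, dist_comm s q, dist_comm s z] at h1
    rcases max_cases (dist z p + dist q s) (dist p q + dist z s) with h6 | h6 <;>
      rw [h6.1] at h1 <;> linarith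
  have k1 := key x r (fun u => le_max_left _ _)
  have k2 := key y (dist x y - r) (fun u => le_max_right _ _)
  have hq : dist p s + vd x y r q ≤
      max (dist p q + vd x y r s) (dist q s + vd x y r p) + 2 * δ := by
    rcases max_cases (dist x q - r) (dist y q - (dist x y - r)) with h6 | h6
    · have : vd x y r q = _ := h6.1
      rw [this]; exact k1
    · have : vd x y r q = _ := h6.1
      rw [this]; exact k2
  have h4 := min_le_left (vd x y r p + vd x y r q - dist p q) (vd x y r q + vd x y r s - dist q s)
  have h5 := min_le_right (vd x y r p + vd x y r q - dist p q) (vd x y r q + vd x y r s - dist q s)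
  rcases max_cases (dist p q + vd x y r s) (dist q s + vd x y r p) with h6 | h6 <;>
      rw [h6.1] at hq <;> linarith

lemma vd_tri {Y : Type*} [MetricSpace Y] {δ : ℝ} (h : FourPt Y δ) (x y : Y) (r : ℝ) (p q : Y) :
    dist p q ≤ vd x y r p + vd x y r q + 2 * δ := by
  have h1 := h p q x y
  have a1 : dist x p - r ≤ vd x y r p := le_max_left _ _
  have a2 : dist x q - r ≤ vd x y r q := le_max_left _ _
  have a3 : dist y p - (dist x y - r) ≤ vd x y r p := le_max_right _ _
  have a4 : dist y q - (dist x y - r) ≤ vd x y r q := le_max_right _ _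
  rw [dist_comm p x, dist_comm q y, dist_comm p y, dist_comm q x] at h1
  rcases max_cases (dist x p + dist y q) (dist y p + dist x q) with h6 | h6 <;>
      rw [h6.1] at h1 <;> linarith

lemma vd_lip {Y : Type*} [MetricSpace Y] (x y : Y) (r r' : ℝ) (p : Y) :
    vd x y r p ≤ vd x y r' p + |r - r'| := by
  have a1 : dist x p - r' ≤ vd x y r' p := le_max_left _ _
  have a3 : dist y p - (dist x y - r') ≤ vd x y r' p := le_max_right _ _
  have := le_abs_self (r - r')
  have := neg_abs_le (r - r')
  apply max_le <;> linarith

lemma vd_chain {Y : Type*} [MetricSpace Y] {δ : ℝ} (h : FourPt Y δ) (x y : Y) (r : ℝ)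
    (f : ℝ → Y) (a b m : ℝ)
    (hb : ∀ s ∈ Icc a b, ∀ u ∈ Icc a b, |s - u| ≤ 1 →
      m ≤ vd x y r (f s) + vd x y r (f u) - dist (f s) (f u)) (k : ℕ) :
    ∀ s ∈ Icc a b, ∀ u ∈ Icc a b, |s - u| ≤ 2 ^ k →
      m - 2 * δ * k ≤ vd x y r (f s) + vd x y r (f u) - dist (f s) (f u) := by
  induction k with
  | zero => intro s hs u hu hsu; simpa using hb s hs u hu (by simpa using hsu)
  | succ k ih =>
    intro s hs u hu hsu
    have hm : (s + u) / 2 ∈ Icc a b := ⟨by linarith [hs.1, hu.1], by linarith [hs.2, hu.2]⟩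
    have e1 : |s - (s + u) / 2| ≤ 2 ^ k := by
      rw [show s - (s + u) / 2 = (s - u) / 2 by ring, abs_div, abs_two]
      rw [pow_succ] at hsu; linarith
    have e2 : |(s + u) / 2 - u| ≤ 2 ^ k := by
      rw [show (s + u) / 2 - u = (s - u) / 2 by ring, abs_div, abs_two]
      rw [pow_succ] at hsu; linarith
    have i1 := ih s hs _ hm e1
    have i2 := ih _ hm u hu e2
    have h4 := vd_four h x y r (f s) (f ((s + u) / 2)) (f u)
    have := le_min i1 i2
    push_cast
    linarith

lemma numeric (K A B δ : ℝ) (hA : 0 ≤ A) (hδ : 0 ≤ δ) :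
    ∃ M : ℝ, 0 ≤ M ∧ ∀ E, M ≤ E → ∃ k : ℕ, A * E + B ≤ 2 ^ k ∧ K + δ * k < E := by
  have ev : ∀ᶠ k : ℕ in atTop, A * (δ + 1) * (k:ℝ) + (A * (K + 1 + (δ + 1)) + B) ≤ 2 ^ k := by
    have t1 := tendsto_pow_const_div_const_pow_of_one_lt 1 (r := (2:ℝ)) (by norm_num)
    have t0 := tendsto_pow_const_div_const_pow_of_one_lt 0 (r := (2:ℝ)) (by norm_num)
    have t := (t1.const_mul (A * (δ + 1))).add (t0.const_mul (A * (K + 1 + (δ + 1)) + B))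
    simp only [mul_zero, add_zero, pow_one, pow_zero] at t
    filter_upwards [t.eventually (gt_mem_nhds zero_lt_one)] with k hk
    have hp : (0:ℝ) < 2 ^ k := by positivity
    have : A * (δ + 1) * ((k:ℝ) / 2 ^ k) + (A * (K + 1 + (δ + 1)) + B) * (1 / 2 ^ k)
        = (A * (δ + 1) * (k:ℝ) + (A * (K + 1 + (δ + 1)) + B)) / 2 ^ k := by field_simp
    rw [this, div_lt_one hp] at hk
    exact hk.le
  obtain ⟨k0, hk0⟩ := eventually_atTop.1 ev
  refine ⟨max 0 (K + 1 + (δ + 1) * k0), le_max_left _ _, fun E hE => ?_⟩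
  have hE' := (le_max_right _ _).trans hE
  have hd : 0 < δ + 1 := by linarith
  have hq : (k0:ℝ) ≤ (E - K - 1) / (δ + 1) := by
    rw [le_div_iff₀ hd]; linarith
  refine ⟨⌊(E - K - 1) / (δ + 1)⌋₊, ?_, ?_⟩
  · have := hk0 ⌊(E - K - 1) / (δ + 1)⌋₊ (Nat.le_floor hq)
    refine le_trans ?_ this
    have h2 := (Nat.lt_floor_add_one ((E - K - 1) / (δ + 1))).le
    rw [div_le_iff₀ hd] at h2
    have h3 := mul_le_mul_of_nonneg_left h2 hA
    linarith
  · have h2 := Nat.floor_le (le_trans (Nat.cast_nonneg k0) hq)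
    rw [le_div_iff₀ hd] at h2
    have : (0:ℝ) ≤ (⌊(E - K - 1) / (δ + 1)⌋₊ : ℝ) := Nat.cast_nonneg _
    linarith

/-- Every virtual point of `[f a, f b]` is close to the quasigeodesic. -/
lemma morse1 (δ Λ c : ℝ) (hδ : 0 ≤ δ) (hΛ : 1 ≤ Λ) (hc : 0 ≤ c) :
    ∃ M : ℝ, 0 ≤ M ∧ ∀ (Y : Type*) [MetricSpace Y], FourPt Y δ →
      ∀ (f : ℝ → Y) (a b : ℝ), a ≤ b → IsQuasigeodesicOn f a b Λ c →
      ∀ r ∈ Icc 0 (dist (f a) (f b)), ∃ t ∈ Icc a b, vd (f a) (f b) r (f t) ≤ M := by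
  obtain ⟨M, hM0, hM⟩ := numeric (1 + (Λ + c) / 2 + 2 * δ) (Λ * 6) (Λ * (2 + 2 * δ + c)) δ
    (by positivity) hδ
  refine ⟨M, hM0, ?_⟩
  intro Y _ h4 f a b hab hf r₀ hr₀
  by_contra! hcon
  set x := f a with hx
  set y := f b with hy
  have ha : a ∈ Icc a b := ⟨le_rfl, hab⟩
  have hb : b ∈ Icc a b := ⟨hab, le_rfl⟩
  set S : Set ℝ := {e | ∃ r ∈ Icc 0 (dist x y), ∀ t ∈ Icc a b, e ≤ vd x y r (f t)} with hS
  have vx : ∀ r ∈ Icc 0 (dist x y), vd x y r x = r := by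
    intro r hr
    unfold vd
    rw [dist_self, dist_comm y x]
    rw [max_eq_right] <;> linarith [hr.1]
  have vy : ∀ r ∈ Icc 0 (dist x y), vd x y r y = dist x y - r := by
    intro r hr
    unfold vd
    rw [dist_self]
    rw [max_eq_left] ; linarith [hr.2]
  have hMS : M ∈ S := ⟨r₀, hr₀, fun t ht => (hcon t ht).le⟩
  have hbd : BddAbove S := by
    refine ⟨dist x y, ?_⟩
    rintro e ⟨r, hr, he⟩
    have := he a ha
    rw [← hx, vx r hr] at this
    exact this.trans hr.2
  set E := sSup S with hE
  have hME : M ≤ E := le_csSup hbd hMS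
  obtain ⟨e, ⟨r, hr, he⟩, heE⟩ := exists_lt_of_lt_csSup ⟨M, hMS⟩ (show E - 1 < sSup S by linarith)
  have hall : ∀ r' ∈ Icc 0 (dist x y), ∃ t ∈ Icc a b, vd x y r' (f t) < E + 1 := by
    intro r' hr'
    by_contra! hc'
    have : E + 1 ≤ E := le_csSup hbd ⟨r', hr', hc'⟩
    linarith
  have hE0 : 0 ≤ E := hM0.trans hME
  obtain ⟨t1, ht1, g1, d1⟩ : ∃ t1 ∈ Icc a b,
      2 * E - 2 ≤ vd x y r x + vd x y r (f t1) - dist x (f t1) ∧ vd x y r (f t1) ≤ 3 * E + 1 := by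
    rcases le_total 0 (r - 2 * E) with h0 | h0
    · obtain ⟨t, ht, hv⟩ := hall (r - 2 * E) ⟨h0, by linarith [hr.2]⟩
      have a1 : dist x (f t) - (r - 2 * E) ≤ vd x y (r - 2 * E) (f t) := le_max_left _ _
      have := vd_lip x y r (r - 2 * E) (f t)
      rw [show r - (r - 2 * E) = 2 * E by ring, abs_of_nonneg (by linarith)] at this
      have := he t ht
      refine ⟨t, ht, ?_, by linarith⟩
      rw [vx r hr]; linarith
    · have := he a ha
      refine ⟨a, ha, ?_, ?_⟩
      · rw [← hx, dist_self]; rw [← hx] at this; linarith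
      · rw [← hx, vx r hr]; linarith
  obtain ⟨t2, ht2, g2, d2⟩ : ∃ t2 ∈ Icc a b,
      2 * E - 2 ≤ vd x y r (f t2) + vd x y r y - dist (f t2) y ∧ vd x y r (f t2) ≤ 3 * E + 1 := by
    rcases le_total (r + 2 * E) (dist x y) with h0 | h0
    · obtain ⟨t, ht, hv⟩ := hall (r + 2 * E) ⟨by linarith [hr.1], h0⟩
      have a1 : dist y (f t) - (dist x y - (r + 2 * E)) ≤ vd x y (r + 2 * E) (f t) :=
        le_max_right _ _
      have := vd_lip x y r (r + 2 * E) (f t)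
      rw [show r - (r + 2 * E) = - (2 * E) by ring, abs_neg, abs_of_nonneg (by linarith)] at this
      have := he t ht
      refine ⟨t, ht, ?_, by linarith⟩
      rw [vy r hr, dist_comm (f t) y]; linarith
    · have := he b hb
      refine ⟨b, hb, ?_, ?_⟩
      · rw [← hy, dist_self]; rw [← hy] at this; linarith
      · rw [← hy, vy r hr]; linarith
  obtain ⟨k, hk1, hk2⟩ := hM E hME
  have hd := vd_tri h4 x y r (f t1) (f t2)
  have hl := (hf t1 ht1 t2 ht2).1
  have hΛ0 : 0 < Λ := by linarith
  have hT : |t1 - t2| ≤ 2 ^ k := by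
    have : |t1 - t2| / Λ ≤ 6 * E + (2 + 2 * δ + c) := by linarith
    rw [div_le_iff₀ hΛ0] at this
    linarith
  have hch := vd_chain h4 x y r f a b (2 * (E - 1) - (Λ + c)) (by
    intro s hs u hu hsu
    have := he s hs
    have := he u hu
    have := (hf s hs u hu).2
    have := mul_le_mul_of_nonneg_left hsu hΛ0.le
    linarith) k t1 ht1 t2 ht2 hT
  have q1 := vd_four h4 x y r x (f t1) y
  have q2 := vd_four h4 x y r (f t1) (f t2) y
  rw [vx r hr, vy r hr] at q1
  rw [vx r hr] at g1
  rw [vy r hr] at g2 q2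
  have hkδ : 0 ≤ δ * k := by positivity
  have l2 : 2 * (E - 1) - (Λ + c) - 2 * δ * k ≤
    min (vd x y r (f t1) + vd x y r (f t2) - dist (f t1) (f t2))
      (vd x y r (f t2) + (dist x y - r) - dist (f t2) y) := le_min hch (by linarith)
  have l1 : 2 * (E - 1) - (Λ + c) - 2 * δ * k - 2 * δ ≤
    min (r + vd x y r (f t1) - dist x (f t1))
      (vd x y r (f t1) + (dist x y - r) - dist (f t1) y) := le_min (by linarith) (by linarith)
  linarith

lemma jump (P Q : ℝ → Prop) (a b : ℝ) (hab : a ≤ b) (hPQ : ∀ r ∈ Icc a b, P r ∨ Q r)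
    (ha : P a) (hb : Q b) :
    ∃ r ∈ Icc a b, ∃ r' ∈ Icc a b, |r - r'| ≤ 1 ∧ P r ∧ Q r' := by
  set A : Set ℝ := {r | r ∈ Icc a b ∧ P r} with hA
  have haA : a ∈ A := ⟨⟨le_rfl, hab⟩, ha⟩
  have hbd : BddAbove A := ⟨b, fun r hr => hr.1.2⟩
  obtain ⟨r, hr, hrs⟩ := exists_lt_of_lt_csSup ⟨a, haA⟩ (show sSup A - 1 / 2 < sSup A by linarith)
  have hle : r ≤ sSup A := le_csSup hbd hr
  have hale : a ≤ sSup A := le_csSup hbd haA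
  rcases le_total b (sSup A + 1 / 2) with h | h
  · refine ⟨r, hr.1, b, ⟨hab, le_rfl⟩, ?_, hr.2, hb⟩
    rw [abs_le]; constructor <;> linarith [hr.1.2]
  · have hm : sSup A + 1 / 2 ∈ Icc a b := ⟨by linarith, h⟩
    refine ⟨r, hr.1, sSup A + 1 / 2, hm, ?_, hr.2, ?_⟩
    · rw [abs_le]; constructor <;> linarith
    · rcases hPQ _ hm with hp | hq
      · have : sSup A + 1 / 2 ≤ sSup A := le_csSup hbd ⟨hm, hp⟩
        linarith
      · exact hq

/-- Stability of quasigeodesics: they are quasirulers. -/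
lemma morse2 (δ Λ c : ℝ) (hδ : 0 ≤ δ) (hΛ : 1 ≤ Λ) (hc : 0 ≤ c) :
    ∃ τ : ℝ, 0 ≤ τ ∧ ∀ (Y : Type*) [MetricSpace Y], FourPt Y δ →
      ∀ (f : ℝ → Y) (a b : ℝ), IsQuasigeodesicOn f a b Λ c → IsQuasirulerOn f a b τ := by
  obtain ⟨M, hM0, hM⟩ := morse1 δ Λ c hδ hΛ hc
  set R := Λ * (2 * M + 1 + 2 * δ + c) with hR
  refine ⟨M + Λ * R + c, by positivity, ?_⟩
  intro Y _ h4 f a b hf s t u hs ht hu hst htu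
  have hsub : Icc s u ⊆ Icc a b := Icc_subset_Icc hs.1 hu.2
  have hf' : IsQuasigeodesicOn f s u Λ c := fun s' hs' t' ht' => hf s' (hsub hs') t' (hsub ht')
  have h1 := hM Y h4 f s u (hst.trans htu) hf'
  obtain ⟨r, hr, r', hr', hrr, ⟨v, hv, hvr⟩, ⟨v', hv', hvr'⟩⟩ := jump
    (fun r => ∃ v ∈ Icc s t, vd (f s) (f u) r (f v) ≤ M)
    (fun r => ∃ v ∈ Icc t u, vd (f s) (f u) r (f v) ≤ M) 0 (dist (f s) (f u)) dist_nonneg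
    (by
      intro r hr
      obtain ⟨v, hv, hvr⟩ := h1 r hr
      rcases le_total v t with h | h
      · exact Or.inl ⟨v, ⟨hv.1, h⟩, hvr⟩
      · exact Or.inr ⟨v, ⟨h, hv.2⟩, hvr⟩)
    ⟨s, ⟨le_rfl, hst⟩, by
      unfold vd
      rw [dist_self, dist_comm (f u)]
      apply max_le <;> linarith⟩
    ⟨u, ⟨htu, le_rfl⟩, by
      unfold vd
      rw [dist_self]
      apply max_le <;> linarith⟩
  have hv1 : v ∈ Icc s u := ⟨hv.1, hv.2.trans htu⟩
  have hv1' : v' ∈ Icc s u := ⟨hst.trans hv'.1, hv'.2⟩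
  have ht1 : t ∈ Icc s u := ⟨hst, htu⟩
  have d1 := vd_tri h4 (f s) (f u) r (f v) (f v')
  have d2 := vd_lip (f s) (f u) r r' (f v')
  have hΛ0 : 0 < Λ := by linarith
  have hvv : |v - v'| ≤ R := by
    have := (hf' v hv1 v' hv1').1
    have : |v - v'| / Λ ≤ 2 * M + 1 + 2 * δ + c := by linarith
    rw [div_le_iff₀ hΛ0] at this
    linarith
  have hvt : |v - t| ≤ R := by
    refine le_trans ?_ hvv
    rw [abs_sub_comm v, abs_sub_comm v, abs_of_nonneg (by linarith [hv.2]),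
      abs_of_nonneg (by linarith [hv.2, hv'.1])]
    linarith [hv'.1]
  have d3 := (hf' v hv1 t ht1).2
  have d4 := mul_le_mul_of_nonneg_left hvt hΛ0.le
  have a1 : dist (f s) (f v) - r ≤ vd (f s) (f u) r (f v) := le_max_left _ _
  have a2 : dist (f u) (f v) - (dist (f s) (f u) - r) ≤ vd (f s) (f u) r (f v) := le_max_right _ _
  have b1 := dist_triangle (f s) (f v) (f t)
  have b2 := dist_triangle (f u) (f v) (f t)
  rw [dist_comm (f t) (f u)]
  linarith

lemma near {Y : Type*} [MetricSpace Y] {δ M κ : ℝ} (h4 : FourPt Y δ) (f : ℝ → Y) (a b : ℝ)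
    (hf : ∀ r ∈ Icc 0 (dist (f a) (f b)), ∃ t ∈ Icc a b, vd (f a) (f b) r (f t) ≤ M)
    (p : Y) (hp : dist (f a) p + dist (f b) p ≤ dist (f a) (f b) + 2 * κ) :
    ∃ t ∈ Icc a b, dist p (f t) ≤ κ + M + 2 * δ := by
  have t1 := dist_triangle (f a) (f b) p
  have t2 := dist_triangle (f b) (f a) p
  rw [dist_comm (f b) (f a)] at t2
  obtain ⟨t, ht, hv⟩ := hf ((dist (f a) p + dist (f a) (f b) - dist (f b) p) / 2)
    ⟨by linarith, by linarith⟩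
  refine ⟨t, ht, ?_⟩
  have h1 := vd_tri h4 (f a) (f b) ((dist (f a) p + dist (f a) (f b) - dist (f b) p) / 2) p (f t)
  have : vd (f a) (f b) ((dist (f a) p + dist (f a) (f b) - dist (f b) p) / 2) p ≤ κ := by
    apply max_le <;> linarith
  linarith

/-- Quasigeodesic triangles are thin. -/
lemma thin (δ Λ c : ℝ) (hδ : 0 ≤ δ) (hΛ : 1 ≤ Λ) (hc : 0 ≤ c) :
    ∃ H : ℝ, 0 ≤ H ∧ ∀ (Y : Type*) [MetricSpace Y], FourPt Y δ →
      ∀ (f g h : ℝ → Y) (a b a' b' a'' b'' : ℝ), a ≤ b → a' ≤ b' → a'' ≤ b'' →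
      IsQuasigeodesicOn f a b Λ c → IsQuasigeodesicOn g a' b' Λ c →
      IsQuasigeodesicOn h a'' b'' Λ c →
      f a = g a' → g b' = h a'' → f b = h b'' →
      ∀ t ∈ Icc a b, (∃ s ∈ Icc a' b', dist (f t) (g s) ≤ H) ∨
        (∃ s ∈ Icc a'' b'', dist (f t) (h s) ≤ H) := by
  obtain ⟨M, hM0, hM⟩ := morse1 δ Λ c hδ hΛ hc
  obtain ⟨τ, hτ0, hτ⟩ := morse2 δ Λ c hδ hΛ hc
  refine ⟨τ + δ + M + 2 * δ, by positivity, ?_⟩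
  intro Y _ h4 f g h a b a' b' a'' b'' hab hab' hab'' hf hg hh e1 e2 e3 t ht
  have r1 := hτ Y h4 f a b hf a t b ⟨le_rfl, hab⟩ ht ⟨hab, le_rfl⟩ ht.1 ht.2
  have q := h4 (f a) (f b) (g b') (f t)
  rw [dist_comm (f t) (f b)] at r1
  rcases le_total (dist (f a) (g b') + dist (f b) (f t)) (dist (f a) (f t) + dist (f b) (g b'))
    with hle | hle
  · rw [max_eq_right hle] at q
    right
    refine near h4 h a'' b'' (hM Y h4 h a'' b'' hab'' hh) (f t) ?_
    rw [← e2, ← e3, dist_comm (g b') (f b)]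
    linarith
  · rw [max_eq_left hle] at q
    left
    refine near h4 g a' b' (hM Y h4 g a' b' hab' hg) (f t) ?_
    rw [← e1]
    linarith

lemma quasi_inverse {X Y : Type*} [MetricSpace X] [MetricSpace Y] {φ : X → Y} {Λ c C : ℝ}
    (hΛ : 1 ≤ Λ)
    (hq : QIEmbed (fun a b : X => dist a b) (fun a b : Y => dist a b) φ Λ c)
    {ψ : Y → X} (hψ : ∀ y, dist (φ (ψ y)) y ≤ C) (y y' : Y) :
    dist (ψ y) (ψ y') ≤ Λ * (dist y y' + c + 2 * C) ∧
    dist y y' ≤ Λ * dist (ψ y) (ψ y') + c + 2 * C := by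
  obtain ⟨q1, q2⟩ := hq (ψ y) (ψ y')
  simp only at q1 q2
  have h1 := hψ y
  have h2 := hψ y'
  have t1 := dist_triangle4 (φ (ψ y)) y y' (φ (ψ y'))
  have t2 := dist_triangle4 y (φ (ψ y)) (φ (ψ y')) y'
  rw [dist_comm y' _] at t1
  rw [dist_comm y (φ (ψ y))] at t2
  constructor
  · have : dist (ψ y) (ψ y') / Λ ≤ dist y y' + c + 2 * C := by linarith
    rw [div_le_iff₀ (by linarith)] at this
    linarith
  · linarith

lemma exists_qg {X Y : Type*} [MetricSpace X] [MetricSpace Y] (hgeo : IsGeodesicSpace X)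
    {φ : X → Y} {Λ c C : ℝ}
    (hΛ : 1 ≤ Λ) (hC : 0 ≤ C)
    (hq : QIEmbed (fun a b : X => dist a b) (fun a b : Y => dist a b) φ Λ c)
    {ψ : Y → X} (hψ : ∀ y, dist (φ (ψ y)) y ≤ C) (y y' : Y) :
    ∃ (a b : ℝ) (f : ℝ → Y), a ≤ b ∧ f a = y ∧ f b = y' ∧
      IsQuasigeodesicOn f a b Λ (c + 2 * C + 1) := by
  classical
  obtain ⟨g, g0, g1, hg⟩ := hgeo (ψ y) (ψ y')
  set L := dist (ψ y) (ψ y') with hL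
  have hL0 : 0 ≤ L := dist_nonneg
  set F : ℝ → Y := fun t => if t ≤ 0 then y else if L + 1 ≤ t then y' else φ (g (min t L)) with hF
  have hFd : ∀ t ∈ Icc 0 (L + 1), dist (F t) (φ (g (min t L))) ≤ C := by
    intro t ht
    simp only [hF]
    split_ifs with h1 h2
    · have : t = 0 := le_antisymm h1 ht.1
      rw [this, min_eq_left hL0, g0, dist_comm]; exact hψ y
    · rw [min_eq_right (by linarith), g1, dist_comm]; exact hψ y'
    · rw [dist_self]; exact hC
  refine ⟨0, L + 1, F, by linarith, by simp [hF], ?_, ?_⟩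
  · simp only [hF]
    rw [if_neg (by linarith), if_pos le_rfl]
  intro s hs t ht
  have ms : min s L ∈ Icc 0 L := ⟨le_min hs.1 hL0, min_le_right _ _⟩
  have mt : min t L ∈ Icc 0 L := ⟨le_min ht.1 hL0, min_le_right _ _⟩
  obtain ⟨q1, q2⟩ := hq (g (min s L)) (g (min t L))
  simp only [hg _ ms _ mt] at q1 q2
  have h1 := hFd s hs
  have h2 := hFd t ht
  have t1 := dist_triangle4 (F s) (φ (g (min s L))) (φ (g (min t L))) (F t)
  have t2 := dist_triangle4 (φ (g (min s L))) (F s) (F t) (φ (g (min t L)))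
  rw [dist_comm (φ (g (min t L))) (F t)] at t1
  rw [dist_comm (φ (g (min s L))) (F s)] at t2
  have m1 : |min s L - min t L| ≤ |s - t| := by
    rcases min_cases s L with ⟨e1, _⟩ | ⟨e1, _⟩ <;> rcases min_cases t L with ⟨e2, _⟩ | ⟨e2, _⟩ <;>
      rw [e1, e2] <;> apply abs_le.2 <;> constructor <;>
      linarith [le_abs_self (s - t), neg_abs_le (s - t)]
  have m2 : |s - t| ≤ |min s L - min t L| + 1 := by
    have u1 := hs.2
    have u2 := ht.2
    have u3 := le_abs_self (min s L - min t L)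
    have u4 := neg_abs_le (min s L - min t L)
    apply abs_le.2
    rcases min_cases s L with ⟨e1, _⟩ | ⟨e1, _⟩ <;> rcases min_cases t L with ⟨e2, _⟩ | ⟨e2, _⟩ <;>
      rw [e1, e2] at u3 u4 ⊢ <;> constructor <;> linarith
  have hΛ0 : 0 < Λ := by linarith
  have m3 := mul_le_mul_of_nonneg_left m1 hΛ0.le
  have m4 : |s - t| / Λ ≤ |min s L - min t L| / Λ + 1 := by
    rw [div_le_iff₀ hΛ0, add_mul, div_mul_cancel₀ _ hΛ0.ne']
    linarith
  constructor <;> linarith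

lemma qg_pull {X Y : Type*} [MetricSpace X] [MetricSpace Y] {φ : X → Y} {Λ c C : ℝ}
    (hΛ : 1 ≤ Λ) (hc : 0 ≤ c) (hC : 0 ≤ C)
    (hq : QIEmbed (fun a b : X => dist a b) (fun a b : Y => dist a b) φ Λ c)
    {ψ : Y → X} (hψ : ∀ y, dist (φ (ψ y)) y ≤ C) {Λ' c' : ℝ} (hΛ' : 1 ≤ Λ') (hc' : 0 ≤ c')
    {f : ℝ → Y} {a b : ℝ} (hf : IsQuasigeodesicOn f a b Λ' c') :
    IsQuasigeodesicOn (fun t => ψ (f t)) a b (Λ * Λ') (Λ * (c' + c + 2 * C)) := by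
  intro s hs t ht
  obtain ⟨f1, f2⟩ := hf s hs t ht
  obtain ⟨h1, h2⟩ := quasi_inverse hΛ hq hψ (f s) (f t)
  have hΛ0 : 0 < Λ := by linarith
  have hΛ0' : 0 < Λ' := by linarith
  simp only
  constructor
  · have h3 : |s - t| / Λ' ≤ Λ * dist (ψ (f s)) (ψ (f t)) + (c' + c + 2 * C) := by linarith
    have h4 : |s - t| / (Λ * Λ') ≤ dist (ψ (f s)) (ψ (f t)) + (c' + c + 2 * C) / Λ := by
      rw [mul_comm, ← div_div, div_le_iff₀ hΛ0, add_mul, div_mul_cancel₀ _ hΛ0.ne']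
      linarith
    have h5 : (c' + c + 2 * C) / Λ ≤ Λ * (c' + c + 2 * C) := by
      have h0 : 0 ≤ c' + c + 2 * C := by positivity
      have := div_le_self h0 hΛ
      have := le_mul_of_one_le_left h0 hΛ
      linarith
    linarith
  · have := mul_le_mul_of_nonneg_left f2 hΛ0.le
    linarith

lemma hyp_of_thin {Y : Type*} [MetricSpace Y] {Λ c τ H : ℝ} (hΛ : 1 ≤ Λ) (hc : 0 ≤ c)
    (hτ : 0 ≤ τ) (hH : 0 ≤ H)
    (hex : ∀ x y : Y, ∃ (a b : ℝ) (f : ℝ → Y), a ≤ b ∧ f a = x ∧ f b = y ∧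
      IsQuasigeodesicOn f a b Λ c)
    (hrul : ∀ (f : ℝ → Y) (a b : ℝ), IsQuasigeodesicOn f a b Λ c → IsQuasirulerOn f a b τ)
    (hthin : ∀ (f g h : ℝ → Y) (a b a' b' a'' b'' : ℝ), a ≤ b → a' ≤ b' → a'' ≤ b'' →
      IsQuasigeodesicOn f a b Λ c → IsQuasigeodesicOn g a' b' Λ c →
      IsQuasigeodesicOn h a'' b'' Λ c →
      f a = g a' → g b' = h a'' → f b = h b'' →
      ∀ t ∈ Icc a b, (∃ s ∈ Icc a' b', dist (f t) (g s) ≤ H) ∨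
        (∃ s ∈ Icc a'' b'', dist (f t) (h s) ≤ H)) : HypSpace Y := by
  have rul : ∀ (f : ℝ → Y) (a b : ℝ), a ≤ b → IsQuasigeodesicOn f a b Λ c → ∀ t ∈ Icc a b,
      dist (f a) (f t) + dist (f b) (f t) ≤ dist (f a) (f b) + 2 * τ := by
    intro f a b hab hf t ht
    have := hrul f a b hf a t b ⟨le_rfl, hab⟩ ht ⟨hab, le_rfl⟩ ht.1 ht.2
    rwa [dist_comm (f t)] at this
  -- lower bound for the distance to a point of the side
  have low : ∀ (w : Y) (f : ℝ → Y) (a b : ℝ), a ≤ b → IsQuasigeodesicOn f a b Λ c →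
      ∀ t ∈ Icc a b,
      (dist (f a) w + dist (f b) w - dist (f a) (f b)) / 2 ≤ dist (f t) w + τ := by
    intro w f a b hab hf t ht
    have := rul f a b hab hf t ht
    have := dist_triangle (f a) (f t) w
    have := dist_triangle (f b) (f t) w
    linarith
  -- a point of the side realizing the Gromov product
  have up : ∀ (w : Y) (f : ℝ → Y) (a b : ℝ), a ≤ b → IsQuasigeodesicOn f a b Λ c →
      ∃ t ∈ Icc a b, dist (f t) w ≤
        (dist (f a) w + dist (f b) w - dist (f a) (f b)) / 2 + (2 * τ + 2 * H + Λ + c) := by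
    intro w f a b hab hf
    obtain ⟨a', b', g, hab', ga, gb, hg⟩ := hex (f a) w
    obtain ⟨a'', b'', h, hab'', ha, hb, hh⟩ := hex w (f b)
    have th := hthin f g h a b a' b' a'' b'' hab hab' hab'' hf hg hh ga.symm
      (gb.trans ha.symm) hb.symm
    obtain ⟨r, hr, r', hr', hrr, ⟨v, hv, hvr⟩, ⟨v', hv', hvr'⟩⟩ := jump
      (fun t => ∃ s ∈ Icc a' b', dist (f t) (g s) ≤ H)
      (fun t => ∃ s ∈ Icc a'' b'', dist (f t) (h s) ≤ H) a b hab th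
      ⟨a', ⟨le_rfl, hab'⟩, by rw [ga, dist_self]; exact hH⟩
      ⟨b'', ⟨hab'', le_rfl⟩, by rw [hb, dist_self]; exact hH⟩
    refine ⟨r, hr, ?_⟩
    have k1 := rul g a' b' hab' hg v hv
    have k2 := rul h a'' b'' hab'' hh v' hv'
    rw [ga, gb] at k1
    rw [ha, hb] at k2
    have d := (hf r hr r' hr').2
    have d' := mul_le_mul_of_nonneg_left hrr (show 0 ≤ Λ by linarith)
    have t1 := dist_triangle (f a) (g v) (f r)
    have t2 := dist_triangle w (g v) (f r)
    have t3 := dist_triangle4 w (h v') (f r') (f r)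
    have t4 := dist_triangle4 (f b) (h v') (f r') (f r)
    have t5 := dist_triangle (f a) (f r) (f b)
    rw [dist_comm (g v) (f r)] at t1 t2
    rw [dist_comm (h v') (f r'), dist_comm (f r') (f r)] at t3 t4
    rw [dist_comm (f r) (f b)] at t5
    rw [dist_comm w (f b)] at k2
    rw [dist_comm (f r) w]
    linarith
  refine ⟨(2 * τ + 2 * H + Λ + c) + H + τ, by positivity, ?_⟩
  intro w x y z
  simp only [gromov]
  obtain ⟨a, b, f, hab, fa, fb, hf⟩ := hex y z
  obtain ⟨a', b', g, hab', ga, gb, hg⟩ := hex y x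
  obtain ⟨a'', b'', h, hab'', ha, hb, hh⟩ := hex x z
  obtain ⟨t, ht, hup⟩ := up w f a b hab hf
  rw [fa, fb] at hup
  have m1 := min_le_left ((dist x w + dist y w - dist x y) / 2) ((dist x w + dist z w - dist x z) / 2)
  have m2 := min_le_right ((dist x w + dist y w - dist x y) / 2) ((dist x w + dist z w - dist x z) / 2)
  rcases hthin f g h a b a' b' a'' b'' hab hab' hab'' hf hg hh (fa.trans ga.symm)
      (gb.trans ha.symm) (fb.trans hb.symm) t ht with ⟨s, hs, hd⟩ | ⟨s, hs, hd⟩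
  · have l := low w g a' b' hab' hg s hs
    rw [ga, gb, dist_comm y x] at l
    have := dist_triangle (g s) (f t) w
    rw [dist_comm (g s) (f t)] at this
    linarith
  · have l := low w h a'' b'' hab'' hh s hs
    rw [ha, hb] at l
    have := dist_triangle (h s) (f t) w
    rw [dist_comm (h s) (f t)] at this
    linarith

/-- **Theorem 1.11.**  Let `X` be a geodesic Gromov hyperbolic metric space and
`φ : X → Y` a quasi-isometry onto a metric space `Y`.  Then `Y` is Gromov hyperbolic if
and only if `Y` is quasiruled. -/
theorem hyperbolic_iff_quasiruled
    {X Y : Type*} [MetricSpace X] [MetricSpace Y]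
    (hgeo : IsGeodesicSpace X) (hhyp : HypSpace X)
    (φ : X → Y) (hφ : MetricQI φ) :
    HypSpace Y ↔ Quasiruled Y := by
  obtain ⟨Λ, c, C, hΛ, hc, hC, hq, hsurj⟩ := hφ
  choose ψ hψ using hsurj
  constructor
  · rintro ⟨δ, hδ, h⟩
    obtain ⟨τ, hτ0, hτ⟩ := morse2 δ Λ (c + 2 * C + 1) hδ hΛ (by positivity)
    exact ⟨Λ, c + 2 * C + 1, τ, hΛ, by positivity, hτ0, exists_qg hgeo hΛ hC hq hψ,
      hτ Y (fourPt_of_hyp h)⟩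
  · rintro ⟨Λ', c', τ, hΛ', hc', hτ, hex, hrul⟩
    obtain ⟨δ, hδ, h⟩ := hhyp
    obtain ⟨H, hH0, hH⟩ := thin δ (Λ * Λ') (Λ * (c' + c + 2 * C)) hδ
      (one_le_mul_of_one_le_of_one_le hΛ hΛ') (by positivity)
    refine hyp_of_thin (H := Λ * H + c + 2 * C) hΛ' hc' hτ (by positivity) hex hrul ?_
    intro f g k a b a' b' a'' b'' hab hab' hab'' hf hg hk e1 e2 e3 t ht
    have pull : ∀ y y' : Y, dist (ψ y) (ψ y') ≤ H → dist y y' ≤ Λ * H + c + 2 * C := by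
      intro y y' hy
      have h1 := (quasi_inverse hΛ hq hψ y y').2
      have h2 := mul_le_mul_of_nonneg_left hy (show 0 ≤ Λ by linarith)
      linarith
    rcases hH X (fourPt_of_hyp h) (fun t => ψ (f t)) (fun t => ψ (g t)) (fun t => ψ (k t))
      a b a' b' a'' b'' hab hab' hab'' (qg_pull hΛ hc hC hq hψ hΛ' hc' hf)
      (qg_pull hΛ hc hC hq hψ hΛ' hc' hg) (qg_pull hΛ hc hC hq hψ hΛ' hc' hk)
      (congrArg ψ e1) (congrArg ψ e2) (congrArg ψ e3) t ht with ⟨s, hs, hd⟩ | ⟨s, hs, hd⟩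
    · exact Or.inl ⟨s, hs, pull _ _ hd⟩
    · exact Or.inr ⟨s, hs, pull _ _ hd⟩

end GHM
end
end
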